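/- arXiv:1910.04552 — 5 statements merged into one kernel-verified Lean document; each statement's English description precedes it below -/
import Mathlib

section
/- Let G be a non-trivial connected finite simple graph (i.e., of order at least two), and let G' be obtained from G by adding an edge between two nonadjacent vertices that lie in the same block of G. Then c(G') = c(G), i.e., G' has the same number of cut vertices as G. -/
/-!
In a finite connected graph, `v` is a cut vertex exactly when deleting it destroys
preconnectedness (`isCutVertex_iff`). Two vertices `x`, `y` of a block `B` stay connected in
`G - v` for every other vertex `v` (`reachable_of_isBlock`): if `v ∉ B` because `G[B]` is connected,
and if `v ∈ B` because `v` is not a cut vertex of `G[B]`. So the edge `xy` never joins two different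
components of `G - v`, and adding it leaves the set of cut vertices unchanged.
-/

/-- A vertex `v` of a graph `G` is a cut vertex if deleting it increases the number of
connected components. -/
def IsCutVertex {V : Type*} (G : SimpleGraph V) (v : V) : Prop :=
  Nat.card G.ConnectedComponent < Nat.card ((G.induce {u | u ≠ v}).ConnectedComponent)

/-- The number of cut vertices of `G`. -/
noncomputable def numCutVertices {V : Type*} (G : SimpleGraph V) : ℕ :=
  Nat.card {v : V | IsCutVertex G v}

/-- A block of `G` is a maximal connected induced subgraph having no cut vertex of its own,
identified with its vertex set. -/
def IsBlock {V : Type*} (G : SimpleGraph V) (B : Set V) : Prop :=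
  (G.induce B).Connected ∧ (∀ v, ¬ IsCutVertex (G.induce B) v) ∧
    ∀ B' : Set V, B ⊆ B' → (G.induce B').Connected →
      (∀ v, ¬ IsCutVertex (G.induce B') v) → B' = B

/-- A connected graph has one component, so having more of them after deleting `v` means not being
preconnected. The empty graph left by a single vertex is preconnected, and has no components. -/
lemma isCutVertex_iff {V : Type*} [Finite V] {G : SimpleGraph V} (hG : G.Connected) (v : V) :
    IsCutVertex G v ↔ ¬ (G.induce {u | u ≠ v}).Preconnected := by
  have h1 : Nat.card G.ConnectedComponent = 1 := by
    have := hG.preconnected.subsingleton_connectedComponent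
    have : Nonempty G.ConnectedComponent := ⟨G.connectedComponentMk v⟩
    exact Nat.card_of_subsingleton (G.connectedComponentMk v)
  have : Finite (G.induce {u | u ≠ v}).ConnectedComponent := Quot.finite _
  rw [IsCutVertex, h1, ← not_le, not_iff_not, Finite.card_le_one_iff_subsingleton]
  constructor
  · intro h a b
    exact SimpleGraph.ConnectedComponent.exact (Subsingleton.elim _ _)
  · exact fun h => h.subsingleton_connectedComponent

lemma reachable_of_isBlock {V : Type*} [Finite V] {G : SimpleGraph V} {B : Set V}
    (hB : IsBlock G B) {x y v : V} (hx : x ∈ B) (hy : y ∈ B) (hxv : x ≠ v) (hyv : y ≠ v) :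
    (G.induce {u | u ≠ v}).Reachable ⟨x, hxv⟩ ⟨y, hyv⟩ := by
  obtain ⟨hconn, hcut, -⟩ := hB
  by_cases hv : v ∈ B
  · have hpre : ((G.induce B).induce {u | u ≠ ⟨v, hv⟩}).Preconnected :=
      not_not.mp fun h => hcut ⟨v, hv⟩ ((isCutVertex_iff hconn _).mpr h)
    let f : (G.induce B).induce {u | u ≠ ⟨v, hv⟩} →g G.induce {u | u ≠ v} :=
      ⟨fun u => ⟨u.1.1, fun h => u.2 (Subtype.ext h)⟩, fun h => h⟩
    exact (hpre ⟨⟨x, hx⟩, fun h => hxv (congrArg Subtype.val h)⟩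
      ⟨⟨y, hy⟩, fun h => hyv (congrArg Subtype.val h)⟩).map f
  · let f : G.induce B →g G.induce {u | u ≠ v} :=
      ⟨fun u => ⟨u.1, fun h => hv (h ▸ u.2)⟩, fun h => h⟩
    exact (hconn.preconnected ⟨x, hx⟩ ⟨y, hy⟩).map f

/-- Adding an edge between two nonadjacent vertices lying in a common block of a
non-trivial connected graph does not change the number of cut vertices. -/
theorem stmt_0 {V : Type*} [Fintype V] (G : SimpleGraph V) (hG : G.Connected)
    (hn : 2 ≤ Fintype.card V) (x y : V) (hxy : x ≠ y) (hadj : ¬ G.Adj x y)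
    (B : Set V) (hB : IsBlock G B) (hx : x ∈ B) (hy : y ∈ B) :
    numCutVertices (G ⊔ SimpleGraph.fromEdgeSet {s(x, y)}) = numCutVertices G := by
  have hle : G ≤ G ⊔ SimpleGraph.fromEdgeSet {s(x, y)} := le_sup_left
  have key : ∀ v, IsCutVertex (G ⊔ SimpleGraph.fromEdgeSet {s(x, y)}) v ↔ IsCutVertex G v := by
    intro v
    rw [isCutVertex_iff (hG.mono hle), isCutVertex_iff hG, not_iff_not]
    constructor
    · intro h a b
      have hab := h a b
      rw [SimpleGraph.reachable_iff_reflTransGen] at hab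
      induction hab with
      | refl => exact .rfl
      | @tail c d _ hcd ih =>
        refine ih.trans ?_
        obtain ⟨c, hc⟩ := c
        obtain ⟨d, hd⟩ := d
        simp only [SimpleGraph.comap_adj, SimpleGraph.sup_adj, SimpleGraph.fromEdgeSet_adj,
          Function.Embedding.subtype_apply, Set.mem_singleton_iff, Sym2.eq_iff] at hcd
        rcases hcd with hcd | ⟨⟨rfl, rfl⟩ | ⟨rfl, rfl⟩, -⟩
        · exact SimpleGraph.Adj.reachable (by simpa using hcd)
        · exact reachable_of_isBlock hB hx hy hc hd
        · exact reachable_of_isBlock hB hy hx hc hd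
    · exact fun h => h.mono fun a b hab => hle hab
  simp only [numCutVertices, key]
end

section
/- Let H be a connected graph of order greater than two and let u, v be two distinct vertices of H such that N(H)_{u,v} > 1 and N(H−u)_v ≤ N(H−v)_u. For positive integers n1, n2 with 1 ≤ n1 ≤ n2 − 1, let H(n1; n2) denote the graph obtained from H by identifying u with a leaf of a path P_{n1} and v with a leaf of a path P_{n2}, where the two paths are vertex disjoint from each other and from H. Then N(H(n1; n2)) ≤ N(H(n1+1; n2−1)), and the inequality is strict if and only if N(H−u)_v < N(H−v)_u or n1 < n2 − 1. -/
/-!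
Write `A_uv`, `A_u`, `A_v` for the numbers of connected vertex sets of `H` containing both `u` and
`v`, only `u`, only `v`.  The graph `H(n1 + 1; n2)` is `H(n1; n2)` with one pendant vertex added at
the free end of the first path, and similarly on the other side.  When a pendant vertex `z` is hung
at a vertex `w` of a graph `G`, the connected sets of the new graph are the connected sets of `G`,
the singleton `{z}`, and the sets `insert z S` with `S` connected and `w ∈ S`
(`connected_image_iff`, `connected_insert_iff`).  This gives one-step recurrences for the number of
connected sets (`numCIS_pendant`) and for those through the ends of the two paths
(`numCISat_pendant_new`, `numCISat_pendant_old`, `numCISat2_pendant`).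

Let `L` and `R` be the numbers of connected sets of `H(n1; n2 - 1)` through the free end of
the first and of the second path.  Both graphs to be compared are obtained from `H(n1; n2 - 1)` by
hanging one pendant vertex, so their counts differ by `L - R`.  The recurrences give
`L = (A_u + A_uv) + (n1 - 1) + (n2 - 2) A_uv` and `R = (A_v + A_uv) + (n2 - 2) + (n1 - 1) A_uv`, so
`L - R = (A_u - A_v) + (A_uv - 1) (n2 - 1 - n1)`, a sum of two nonnegative terms, and the second
one vanishes exactly when `n1 = n2 - 1` because `A_uv > 1`.
-/

/-- The number of connected induced subgraphs of `G`: the number of nonempty vertex subsets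
inducing a connected subgraph. -/
noncomputable def numCIS {V : Type*} (G : SimpleGraph V) : ℕ :=
  Nat.card {S : Set V | S.Nonempty ∧ (G.induce S).Connected}

/-- The number of connected induced subgraphs of `G` containing the vertex `u`. -/
noncomputable def numCISat {V : Type*} (G : SimpleGraph V) (u : V) : ℕ :=
  Nat.card {S : Set V | u ∈ S ∧ (G.induce S).Connected}

/-- The number of connected induced subgraphs of `G` containing both vertices `u` and `v`. -/
noncomputable def numCISat2 {V : Type*} (G : SimpleGraph V) (u v : V) : ℕ :=
  Nat.card {S : Set V | u ∈ S ∧ v ∈ S ∧ (G.induce S).Connected}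

/-- `attach2 H u v n1 n2` is the graph `H(n1; n2)` obtained from `H` by identifying `u` with a
leaf of a path `P_{n1}` and `v` with a leaf of a path `P_{n2}` (the paths contributing `n1 - 1`,
resp. `n2 - 1`, new vertices). -/
def attach2 {V : Type*} (H : SimpleGraph V) (u v : V) (n1 n2 : ℕ) :
    SimpleGraph (V ⊕ (Fin (n1 - 1) ⊕ Fin (n2 - 1))) :=
  SimpleGraph.fromRel (fun a b =>
    match a, b with
    | Sum.inl a, Sum.inl b => H.Adj a b
    | Sum.inl a, Sum.inr (Sum.inl i) => a = u ∧ i.val = 0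
    | Sum.inr (Sum.inl i), Sum.inr (Sum.inl j) => j.val = i.val + 1
    | Sum.inl a, Sum.inr (Sum.inr i) => a = v ∧ i.val = 0
    | Sum.inr (Sum.inr i), Sum.inr (Sum.inr j) => j.val = i.val + 1
    | _, _ => False)

/-! ### Connected vertex sets -/

/-- A vertex set induces a connected subgraph iff it is nonempty and no nonempty proper part of it
is closed under adjacency within the set. -/
lemma induce_connected_iff {V : Type*} (G : SimpleGraph V) (S : Set V) :
    (G.induce S).Connected ↔ S.Nonempty ∧ ∀ A ⊆ S, A.Nonempty →
      (∀ x ∈ A, ∀ y ∈ S, G.Adj x y → y ∈ A) → S ⊆ A := by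
  constructor
  · intro h
    refine ⟨Set.nonempty_coe_sort.1 h.nonempty, ?_⟩
    rintro A hA ⟨a, ha⟩ hcl y hy
    obtain ⟨p⟩ := h.preconnected ⟨a, hA ha⟩ ⟨y, hy⟩
    have key : ∀ (s t : S), (G.induce S).Walk s t → s.1 ∈ A → t.1 ∈ A := by
      intro s t p
      induction p with
      | nil => exact id
      | cons hadj _ ih => exact fun hs => ih (hcl _ hs _ (Subtype.coe_prop _) hadj)
    exact key _ _ p ha
  · rintro ⟨hne, h⟩
    have : Nonempty S := hne.to_subtype
    refine ⟨fun x y => ?_⟩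
    -- The closed part used is the component of `x`.
    have hS := h {t | ∃ ht : t ∈ S, (G.induce S).Reachable x ⟨t, ht⟩} (fun t ht => ht.1)
      ⟨x.1, x.2, SimpleGraph.Reachable.refl _⟩ (by
        rintro s ⟨hs, hr⟩ t ht hadj
        refine ⟨ht, hr.trans (SimpleGraph.Adj.reachable ?_)⟩
        exact hadj)
    exact (hS y.2).2

lemma connected_image_iff {V W : Type*} {G : SimpleGraph V} {G' : SimpleGraph W} (φ : G ↪g G')
    (S : Set V) : (G'.induce (φ '' S)).Connected ↔ (G.induce S).Connected := by
  simp only [induce_connected_iff]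
  constructor
  · rintro ⟨hne, h⟩
    refine ⟨hne.of_image, fun A hA hAne hcl => ?_⟩
    have := h (φ '' A) (Set.image_mono hA) (hAne.image _) (by
      rintro _ ⟨x, hx, rfl⟩ _ ⟨y, hy, rfl⟩ hadj
      exact ⟨y, hcl x hx y hy (φ.map_adj_iff.1 hadj), rfl⟩)
    exact (Set.image_subset_image_iff φ.injective).1 this
  · rintro ⟨hne, h⟩
    refine ⟨hne.image _, fun A hA hAne hcl => ?_⟩
    obtain ⟨a, ha⟩ := hAne
    obtain ⟨a', ha', rfl⟩ := hA ha
    have := h (φ ⁻¹' A) (fun x hx => by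
        obtain ⟨y, hy, hxy⟩ := hA hx
        exact φ.injective hxy ▸ hy) ⟨a', ha⟩
      (fun x hx y hy hadj => hcl _ hx _ ⟨y, hy, rfl⟩ (φ.map_adj_iff.2 hadj))
    rintro _ ⟨x, hx, rfl⟩
    exact this hx

/-- `G'` arises, along the embedding `φ`, from `G` by adding one new vertex `z` whose only
neighbour is (the image of) `w`. -/
structure IsPendant {V W : Type*} {G : SimpleGraph V} {G' : SimpleGraph W} (φ : G ↪g G')
    (z : W) (w : V) : Prop where
  cover : ∀ x, x = z ∨ ∃ y, φ y = x
  ne : ∀ y, φ y ≠ z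
  adj : ∀ y, G'.Adj z (φ y) ↔ y = w

namespace IsPendant

variable {V W : Type*} {G : SimpleGraph V} {G' : SimpleGraph W} {φ : G ↪g G'} {z : W} {w : V}

lemma notMem_image (h : IsPendant φ z w) (S : Set V) : z ∉ φ '' S := by
  rintro ⟨y, -, hy⟩
  exact h.ne y hy

lemma connected_insert_iff (h : IsPendant φ z w) (S : Set V) :
    (G'.induce (insert z (φ '' S))).Connected ↔ S = ∅ ∨ w ∈ S ∧ (G.induce S).Connected := by
  simp only [induce_connected_iff]
  constructor
  · rintro ⟨-, hc⟩
    rcases S.eq_empty_or_nonempty with hS | hS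
    · exact Or.inl hS
    refine Or.inr ⟨?_, hS, fun A hA hAne hcl => ?_⟩
    · -- Otherwise `{z}` is closed under adjacency.
      by_contra hw
      obtain ⟨s, hs⟩ := hS
      have := hc {z} (by simp) (by simp) (by
        rintro _ rfl y (rfl | ⟨y, hy, rfl⟩) hadj
        · rfl
        · exact absurd ((h.adj y).1 hadj ▸ hy) hw)
      exact h.ne s (this (Or.inr ⟨s, hs, rfl⟩))
    · -- A closed part of `S` is extended by `z` exactly when it contains `w`.
      have := hc (φ '' A ∪ {t | t = z ∧ w ∈ A})
        (by
          rintro _ (⟨x, hx, rfl⟩ | ⟨rfl, -⟩)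
          · exact Or.inr ⟨x, hA hx, rfl⟩
          · exact Or.inl rfl)
        ((hAne.image φ).mono Set.subset_union_left) (by
          rintro _ (⟨x, hx, rfl⟩ | ⟨rfl, hw⟩) y (rfl | ⟨y, hy, rfl⟩) hadj
          · exact Or.inr ⟨rfl, (h.adj x).1 hadj.symm ▸ hx⟩
          · exact Or.inl ⟨y, hcl x hx y hy (φ.map_adj_iff.1 hadj), rfl⟩
          · exact Or.inr ⟨rfl, hw⟩
          · exact Or.inl ⟨y, (h.adj y).1 hadj ▸ hw, rfl⟩)
      intro s hs
      rcases this (Or.inr ⟨s, hs, rfl⟩) with ⟨x, hx, hxs⟩ | ⟨hz, -⟩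
      · exact φ.injective hxs ▸ hx
      · exact absurd hz (h.ne s)
  · rintro (rfl | ⟨hw, -, hc⟩)
    · refine ⟨by simp, fun A hA hAne _ => ?_⟩
      obtain ⟨a, ha⟩ := hAne
      have haz : a = z := by simpa using hA ha
      simpa using haz ▸ ha
    · refine ⟨by simp, fun A hA hAne hcl => ?_⟩
      have hsub : S ⊆ φ ⁻¹' A := by
        refine hc (φ ⁻¹' A) (fun x hx => ?_) ?_
          (fun x hx y hy hadj => hcl _ hx _ (Or.inr ⟨y, hy, rfl⟩) (φ.map_adj_iff.2 hadj))
        · rcases hA hx with hz | ⟨y, hy, hxy⟩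
          · exact absurd hz (h.ne x)
          · exact φ.injective hxy ▸ hy
        · obtain ⟨a, ha⟩ := hAne
          rcases hA ha with rfl | ⟨y, hy, rfl⟩
          · exact ⟨w, hcl _ ha _ (Or.inr ⟨w, hw, rfl⟩) ((h.adj w).2 rfl)⟩
          · exact ⟨y, ha⟩
      rintro _ (rfl | ⟨s, hs, rfl⟩)
      · exact hcl _ (hsub hw) _ (Or.inl rfl) ((h.adj w).2 rfl).symm
      · exact hsub hs

/-! ### Counting connected sets after adding a pendant vertex -/

/-- Any family of vertex sets of `G'` splits according to whether its members contain `z`. -/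
lemma ncard_split [Finite V] [Finite W] (h : IsPendant φ z w) (Q : Set W → Prop) :
    {S | Q S}.ncard = {S | Q (φ '' S)}.ncard + {S | Q (insert z (φ '' S))}.ncard := by
  have hinj : Function.Injective (fun S : Set V => φ '' S) := φ.injective.image_injective
  have hinj' : Function.Injective (fun S : Set V => insert z (φ '' S)) := by
    intro S T hST
    apply hinj
    have := congrArg (fun X => X \ {z}) hST
    simpa [Set.insert_sdiff_of_mem, h.notMem_image] using this
  rw [← Set.ncard_image_of_injective {S | Q (φ '' S)} hinj,
    ← Set.ncard_image_of_injective {S | Q (insert z (φ '' S))} hinj',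
    ← Set.ncard_union_eq _ (Set.toFinite _) (Set.toFinite _)]
  · congr 1
    ext S
    constructor
    · intro hS
      by_cases hz : z ∈ S
      · have hST : insert z (φ '' (φ ⁻¹' S)) = S := by
          ext x
          rcases h.cover x with rfl | ⟨y, rfl⟩ <;> simp [hz, h.ne]
        exact Or.inr ⟨φ ⁻¹' S, by simpa [hST] using hS, hST⟩
      · have hST : φ '' (φ ⁻¹' S) = S := by
          ext x
          rcases h.cover x with rfl | ⟨y, rfl⟩ <;> simp [hz, h.ne]
        exact Or.inl ⟨φ ⁻¹' S, by simpa [hST] using hS, hST⟩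
    · rintro (⟨T, hT, rfl⟩ | ⟨T, hT, rfl⟩) <;> exact hT
  · rw [Set.disjoint_left]
    rintro _ ⟨T, -, rfl⟩ ⟨T', -, hTT⟩
    have hTT' : insert z (φ '' T') = φ '' T := hTT
    exact h.notMem_image T (hTT' ▸ Set.mem_insert z _)

end IsPendant

lemma numCIS_eq {V : Type*} (G : SimpleGraph V) :
    numCIS G = {S : Set V | (G.induce S).Connected}.ncard := by
  rw [numCIS, Nat.card_coe_set_eq]
  congr 1
  ext S
  exact ⟨fun h => h.2, fun h => ⟨Set.nonempty_coe_sort.1 h.nonempty, h⟩⟩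

lemma numCISat_eq {V : Type*} (G : SimpleGraph V) (x : V) :
    numCISat G x = {S : Set V | x ∈ S ∧ (G.induce S).Connected}.ncard := rfl

lemma numCISat2_eq {V : Type*} (G : SimpleGraph V) (x y : V) :
    numCISat2 G x y = {S : Set V | x ∈ S ∧ y ∈ S ∧ (G.induce S).Connected}.ncard := rfl

lemma numCISat2_comm {V : Type*} (G : SimpleGraph V) (x y : V) :
    numCISat2 G x y = numCISat2 G y x := by
  simp only [numCISat2_eq, and_left_comm]

namespace IsPendant

variable {V W : Type*} [Finite V] [Finite W] {G : SimpleGraph V} {G' : SimpleGraph W}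
  {φ : G ↪g G'} {z : W} {w : V}

lemma ncard_new (G : SimpleGraph V) (w : V) :
    {S : Set V | S = ∅ ∨ w ∈ S ∧ (G.induce S).Connected}.ncard = numCISat G w + 1 := by
  rw [numCISat_eq, ← Set.ncard_insert_of_notMem (a := (∅ : Set V)) (by simp) (Set.toFinite _)]
  rfl

lemma numCIS_pendant (h : IsPendant φ z w) : numCIS G' = numCIS G + numCISat G w + 1 := by
  rw [numCIS_eq, h.ncard_split]
  simp only [connected_image_iff, h.connected_insert_iff, ncard_new, ← numCIS_eq]
  ring

lemma numCISat_pendant_new (h : IsPendant φ z w) : numCISat G' z = numCISat G w + 1 := by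
  rw [numCISat_eq, h.ncard_split]
  simp [h.notMem_image, h.connected_insert_iff, ncard_new, - Set.mem_image]

lemma numCISat_pendant_old (h : IsPendant φ z w) (x : V) :
    numCISat G' (φ x) = numCISat G x + numCISat2 G w x := by
  rw [numCISat_eq, h.ncard_split]
  simp only [connected_image_iff, h.connected_insert_iff, Set.mem_insert_iff, h.ne, false_or,
    φ.injective.mem_set_image, numCISat_eq, numCISat2_eq]
  congr 2
  ext S
  constructor
  · rintro ⟨hx, rfl | ⟨hw, hc⟩⟩
    · exact absurd hx (Set.notMem_empty x)
    · exact ⟨hw, hx, hc⟩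
  · rintro ⟨hw, hx, hc⟩
    exact ⟨hx, Or.inr ⟨hw, hc⟩⟩

lemma numCISat2_pendant (h : IsPendant φ z w) (x : V) :
    numCISat2 G' z (φ x) = numCISat2 G w x := by
  rw [numCISat2_eq, h.ncard_split]
  simp only [h.notMem_image, false_and, Set.ofPred_false, Set.ncard_empty, zero_add,
    h.connected_insert_iff, Set.mem_insert_iff, h.ne, false_or, true_or, true_and,
    φ.injective.mem_set_image, numCISat2_eq]
  congr 1
  ext S
  constructor
  · rintro ⟨hx, rfl | ⟨hw, hc⟩⟩
    · exact absurd hx (Set.notMem_empty x)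
    · exact ⟨hw, hx, hc⟩
  · rintro ⟨hw, hx, hc⟩
    exact ⟨hx, Or.inr ⟨hw, hc⟩⟩

end IsPendant

/-! ### Restriction to an induced subgraph, and isomorphism invariance -/

lemma ncard_subset_range {V W : Type*} (φ : V → W) (hφ : Function.Injective φ)
    (Q : Set W → Prop) :
    {S | S ⊆ Set.range φ ∧ Q S}.ncard = {S | Q (φ '' S)}.ncard := by
  rw [← Set.ncard_image_of_injective {S | Q (φ '' S)} hφ.image_injective]
  congr 1
  ext S
  constructor
  · rintro ⟨hS, hQ⟩
    obtain ⟨T, rfl⟩ := Set.subset_range_iff_exists_image_eq.1 hS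
    exact ⟨T, hQ, rfl⟩
  · rintro ⟨T, hT, rfl⟩
    exact ⟨Set.image_subset_range _ _, hT⟩

/-- Connected sets through `x` split according to whether they contain `y`. -/
lemma numCISat_split {V : Type*} [Finite V] (G : SimpleGraph V) (x y : V) (hxy : x ≠ y) :
    numCISat G x = numCISat (G.induce {t | t ≠ y}) ⟨x, hxy⟩ + numCISat2 G x y := by
  let φ : G.induce {t | t ≠ y} ↪g G := SimpleGraph.Embedding.induce _
  have hx : x = φ ⟨x, hxy⟩ := rfl
  have hrange : ∀ S : Set V, S ⊆ Set.range φ ↔ y ∉ S := by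
    intro S
    constructor
    · intro hS hy
      obtain ⟨t, ht⟩ := hS hy
      exact t.2 ht
    · intro hy t ht
      exact ⟨⟨t, fun h => hy (h ▸ ht)⟩, rfl⟩
  have key := ncard_subset_range φ φ.injective (fun S => x ∈ S ∧ (G.induce S).Connected)
  simp only [connected_image_iff, hrange] at key
  rw [hx] at key
  simp only [φ.injective.mem_set_image] at key
  rw [numCISat_eq (G.induce _), ← key, numCISat_eq, numCISat2_eq,
    ← Set.ncard_union_eq _ (Set.toFinite _) (Set.toFinite _)]
  · congr 1
    ext S
    by_cases hy : y ∈ S <;> simp [hy, ← hx]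
  · rw [Set.disjoint_left]
    exact fun S hS hS' => hS.1 hS'.2.1

lemma numCISat_of_surjective {V W : Type*} {G : SimpleGraph V} {G' : SimpleGraph W}
    (φ : G ↪g G') (hφ : Function.Surjective φ) (x : V) :
    numCISat G' (φ x) = numCISat G x := by
  have key := ncard_subset_range φ φ.injective (fun S => φ x ∈ S ∧ (G'.induce S).Connected)
  simpa [connected_image_iff, hφ.range_eq, φ.injective.mem_set_image, - Set.mem_image,
    numCISat_eq, numCISat2_eq] using key

lemma numCISat2_of_surjective {V W : Type*} {G : SimpleGraph V} {G' : SimpleGraph W}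
    (φ : G ↪g G') (hφ : Function.Surjective φ) (x y : V) :
    numCISat2 G' (φ x) (φ y) = numCISat2 G x y := by
  have key := ncard_subset_range φ φ.injective
    (fun S => φ x ∈ S ∧ φ y ∈ S ∧ (G'.induce S).Connected)
  simpa [connected_image_iff, hφ.range_eq, φ.injective.mem_set_image, - Set.mem_image,
    numCISat_eq, numCISat2_eq] using key

/-! ### The graph with two pendant paths -/

namespace TwoPath

variable {V : Type*} (H : SimpleGraph V) (u v : V)

/-- The graph `H(p + 1; q + 1)`, in which the two paths contribute `p` and `q` new vertices. -/
def graph (p q : ℕ) : SimpleGraph (V ⊕ (Fin p ⊕ Fin q)) := attach2 H u v (p + 1) (q + 1)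

section Adj

variable {H u v} {p q : ℕ} (a b : V) (i i' : Fin p) (j j' : Fin q)

lemma adj_core : (graph H u v p q).Adj (.inl a) (.inl b) ↔ H.Adj a b := by
  simpa [graph, attach2, H.adj_comm b a] using fun h => H.ne_of_adj h

lemma adj_core_left :
    (graph H u v p q).Adj (.inl a) (.inr (.inl i)) ↔ a = u ∧ i.val = 0 := by
  simp [graph, attach2]

lemma adj_core_right :
    (graph H u v p q).Adj (.inl a) (.inr (.inr j)) ↔ a = v ∧ j.val = 0 := by
  simp [graph, attach2]

lemma adj_left_core :
    (graph H u v p q).Adj (.inr (.inl i)) (.inl a) ↔ a = u ∧ i.val = 0 := by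
  simp [graph, attach2]

lemma adj_right_core :
    (graph H u v p q).Adj (.inr (.inr j)) (.inl a) ↔ a = v ∧ j.val = 0 := by
  simp [graph, attach2]

lemma adj_left : (graph H u v p q).Adj (.inr (.inl i)) (.inr (.inl i')) ↔
    i'.val = i.val + 1 ∨ i.val = i'.val + 1 := by
  simp only [graph, attach2, SimpleGraph.fromRel_adj, and_iff_right_iff_imp]
  rintro h heq
  obtain rfl : i = i' := Sum.inl_injective (Sum.inr_injective heq)
  omega

lemma adj_right : (graph H u v p q).Adj (.inr (.inr j)) (.inr (.inr j')) ↔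
    j'.val = j.val + 1 ∨ j.val = j'.val + 1 := by
  simp only [graph, attach2, SimpleGraph.fromRel_adj, and_iff_right_iff_imp]
  rintro h heq
  obtain rfl : j = j' := Sum.inr_injective (Sum.inr_injective heq)
  omega

lemma adj_left_right :
    ¬ (graph H u v p q).Adj (.inr (.inl i)) (.inr (.inr j)) := by
  simp [graph, attach2]

lemma adj_right_left :
    ¬ (graph H u v p q).Adj (.inr (.inr j)) (.inr (.inl i)) := by
  simp [graph, attach2]

end Adj

/-- The free end of the first path; it is `u` when that path has no new vertex. -/
def endL (q : ℕ) : (p : ℕ) → V ⊕ (Fin p ⊕ Fin q)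
  | 0 => Sum.inl u
  | p + 1 => Sum.inr (Sum.inl (Fin.last p))

/-- The free end of the second path; it is `v` when that path has no new vertex. -/
def endR (p : ℕ) : (q : ℕ) → V ⊕ (Fin p ⊕ Fin q)
  | 0 => Sum.inl v
  | q + 1 => Sum.inr (Sum.inr (Fin.last q))

/-- `H(p + 1; q + 1)` inside the graph whose first path is one vertex longer. -/
def growL (p q : ℕ) : graph H u v p q ↪g graph H u v (p + 1) q where
  toFun := Sum.map id (Sum.map Fin.castSucc id)
  inj' := Function.injective_id.sumMap ((Fin.castSucc_injective p).sumMap Function.injective_id)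
  map_rel_iff' := by
    rintro (a | a | a) (b | b | b) <;> simp [adj_core, adj_core_left, adj_core_right, adj_left_core,
        adj_right_core, adj_left, adj_right, adj_left_right, adj_right_left]

/-- `H(p + 1; q + 1)` inside the graph whose second path is one vertex longer. -/
def growR (p q : ℕ) : graph H u v p q ↪g graph H u v p (q + 1) where
  toFun := Sum.map id (Sum.map id Fin.castSucc)
  inj' := Function.injective_id.sumMap (Function.injective_id.sumMap (Fin.castSucc_injective q))
  map_rel_iff' := by
    rintro (a | a | a) (b | b | b) <;> simp [adj_core, adj_core_left, adj_core_right, adj_left_core,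
        adj_right_core, adj_left, adj_right, adj_left_right, adj_right_left]

/-- `H` inside `H(1; 1)`, which has no further vertices. -/
def base : H ↪g graph H u v 0 0 where
  toFun := Sum.inl
  inj' := Sum.inl_injective
  map_rel_iff' := by
    intro a b
    exact adj_core a b

lemma base_surjective : Function.Surjective (base H u v) := by
  rintro (a | a | a)
  · exact ⟨a, rfl⟩
  · exact a.elim0
  · exact a.elim0

lemma growL_isPendant (p q : ℕ) :
    IsPendant (growL H u v p q) (endL u q (p + 1)) (endL u q p) where
  cover := by
    rintro (a | a | a)
    · exact Or.inr ⟨Sum.inl a, rfl⟩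
    · induction a using Fin.lastCases with
      | last => exact Or.inl rfl
      | cast i => exact Or.inr ⟨Sum.inr (Sum.inl i), rfl⟩
    · exact Or.inr ⟨Sum.inr (Sum.inr a), rfl⟩
  ne := by
    rintro (a | a | a) <;> simp [growL, endL]
  adj := by
    cases p <;> rintro (a | a | a) <;>
      simp [growL, endL, adj_left_core, adj_left, adj_left_right, Fin.ext_iff]
    omega

lemma growR_isPendant (p q : ℕ) :
    IsPendant (growR H u v p q) (endR v p (q + 1)) (endR v p q) where
  cover := by
    rintro (a | a | a)
    · exact Or.inr ⟨Sum.inl a, rfl⟩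
    · exact Or.inr ⟨Sum.inr (Sum.inl a), rfl⟩
    · induction a using Fin.lastCases with
      | last => exact Or.inl rfl
      | cast i => exact Or.inr ⟨Sum.inr (Sum.inr i), rfl⟩
  ne := by
    rintro (a | a | a) <;> simp [growR, endR]
  adj := by
    cases q <;> rintro (a | a | a) <;>
      simp [growR, endR, adj_right_core, adj_right, adj_right_left, Fin.ext_iff]
    omega

lemma growL_endR (p q : ℕ) : growL H u v p q (endR v p q) = endR v (p + 1) q := by
  cases q <;> rfl

lemma growR_endL (p q : ℕ) : growR H u v p q (endL u q p) = endL u (q + 1) p := by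
  cases p <;> rfl

variable [Finite V]

/-- The number of connected sets through both free ends does not depend on the path lengths, as
such a set contains both paths. -/
lemma numCISat2_ends (p q : ℕ) :
    numCISat2 (graph H u v p q) (endL u q p) (endR v p q) = numCISat2 H u v := by
  induction p with
  | zero =>
    induction q with
    | zero => exact numCISat2_of_surjective (base H u v) (base_surjective H u v) u v
    | succ q ih =>
      rw [numCISat2_comm, ← growR_endL H u v 0 q, (growR_isPendant H u v 0 q).numCISat2_pendant,
        numCISat2_comm, ih]
  | succ p ih =>
    rw [← growL_endR H u v p q, (growL_isPendant H u v p q).numCISat2_pendant, ih]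

lemma numCISat_endL (p q : ℕ) :
    numCISat (graph H u v p q) (endL u q p) = numCISat H u + p + q * numCISat2 H u v := by
  induction p with
  | zero =>
    induction q with
    | zero =>
      have h := numCISat_of_surjective (base H u v) (base_surjective H u v) u
      simpa using! h
    | succ q ih =>
      rw [← growR_endL H u v 0 q, (growR_isPendant H u v 0 q).numCISat_pendant_old,
        numCISat2_comm, numCISat2_ends, ih]
      ring
  | succ p ih =>
    rw [(growL_isPendant H u v p q).numCISat_pendant_new, ih]
    ring

lemma numCISat_endR (p q : ℕ) :
    numCISat (graph H u v p q) (endR v p q) = numCISat H v + q + p * numCISat2 H u v := by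
  induction p with
  | zero =>
    induction q with
    | zero =>
      have h := numCISat_of_surjective (base H u v) (base_surjective H u v) v
      simpa using! h
    | succ q ih =>
      rw [(growR_isPendant H u v 0 q).numCISat_pendant_new, ih]
      ring
  | succ p ih =>
    rw [← growL_endR H u v p q, (growL_isPendant H u v p q).numCISat_pendant_old,
      numCISat2_ends, ih]
    ring

end TwoPath

theorem stmt_2 {V : Type*} [Fintype V] (H : SimpleGraph V) (hcard : 2 < Fintype.card V)
    (hconn : H.Connected) (u v : V) (huv : u ≠ v)
    (h1 : 1 < numCISat2 H u v)
    (h2 : numCISat (H.induce {x | x ≠ u}) ⟨v, huv.symm⟩ ≤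
          numCISat (H.induce {x | x ≠ v}) ⟨u, huv⟩)
    (n1 n2 : ℕ) (hn1 : 1 ≤ n1) (hn12 : n1 ≤ n2 - 1) :
    numCIS (attach2 H u v n1 n2) ≤ numCIS (attach2 H u v (n1 + 1) (n2 - 1)) ∧
    (numCIS (attach2 H u v n1 n2) < numCIS (attach2 H u v (n1 + 1) (n2 - 1)) ↔
      (numCISat (H.induce {x | x ≠ u}) ⟨v, huv.symm⟩ <
          numCISat (H.induce {x | x ≠ v}) ⟨u, huv⟩ ∨ n1 < n2 - 1)) := by
  -- With `n1 = p + 1` and `n2 = p + d + 2`, both graphs extend `H(p + 1; p + d + 1)`.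
  obtain ⟨p, rfl⟩ : ∃ p, n1 = p + 1 := ⟨n1 - 1, by omega⟩
  obtain ⟨d, rfl⟩ : ∃ d, n2 = p + d + 2 := ⟨n2 - 2 - p, by omega⟩
  have hL : numCIS (attach2 H u v (p + 1 + 1) (p + d + 2 - 1)) = _ :=
    (TwoPath.growL_isPendant H u v p (p + d)).numCIS_pendant
  have hR : numCIS (attach2 H u v (p + 1) (p + d + 2)) = _ :=
    (TwoPath.growR_isPendant H u v p (p + d)).numCIS_pendant
  rw [TwoPath.numCISat_endL, numCISat_split H u v huv] at hL
  rw [TwoPath.numCISat_endR, numCISat_split H v u huv.symm, numCISat2_comm H v u] at hR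
  rw [hL, hR]
  obtain ⟨b, hb⟩ : ∃ b, numCISat2 H u v = b + 2 := ⟨numCISat2 H u v - 2, by omega⟩
  have hd : p + 1 < p + d + 2 - 1 ↔ 0 < d := by omega
  rw [hb, hd]
  have h3 : (p + d) * (b + 2) = p * (b + 2) + d * b + 2 * d := by ring
  have h4 := Nat.zero_le (d * b)
  rw [h3]
  rcases Nat.eq_zero_or_pos d with rfl | hd0
  · simp only [Nat.zero_mul, Nat.mul_zero, Nat.add_zero]
    omega
  · omega
end

section
/- For integers n ≥ 3 and 2 ≤ l ≤ (n+1)/2, let H(n; l) be the graph obtained from two vertex disjoint complete graphs K_l and K_{n+1−l} by identifying a vertex u of K_l with a vertex v of K_{n+1−l} (so H(n; l) has n vertices). Then N(H(n; 2)) > N(H(n; 3)) > ⋯ > N(H(n; ⌊(n+1)/2⌋)); equivalently, N(H(n; l)) = 2^{n−1} + 2^{l−1} + 2^{n−l} − 2 and N(H(n; l)) > N(H(n; l+1)) for all 2 ≤ l ≤ (n−1)/2. -/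
/-- `glueClique n l` is the graph `H(n; l)` of order `n` obtained from two vertex disjoint
complete graphs `K_l` (on the vertices `0, …, l-1`) and `K_{n+1-l}` (on the vertices
`l-1, …, n-1`) by identifying a vertex of the first with a vertex of the second
(namely the vertex `l-1`). -/
def glueClique (n l : ℕ) : SimpleGraph (Fin n) :=
  SimpleGraph.fromRel (fun a b =>
    (a.val < l ∧ b.val < l) ∨ (l - 1 ≤ a.val ∧ l - 1 ≤ b.val))

lemma glueClique_adj {n l : ℕ} {a b : Fin n} :
    (glueClique n l).Adj a b ↔ a ≠ b ∧
      ((a.val < l ∧ b.val < l) ∨ (l - 1 ≤ a.val ∧ l - 1 ≤ b.val)) := by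
  simp only [glueClique, SimpleGraph.fromRel_adj]
  tauto

/-- A vertex set induces a connected subgraph of `glueClique n l` iff it contains the shared
vertex `l - 1`, or is nonempty and lies strictly on one side of it. -/
lemma connected_iff {n l : ℕ} (c : Fin n) (hc : c.val + 1 = l) (S : Set (Fin n)) :
    (S.Nonempty ∧ ((glueClique n l).induce S).Connected) ↔
      c ∈ S ∨ (S.Nonempty ∧ S ⊆ Set.Iio c) ∨ (S.Nonempty ∧ S ⊆ Set.Ioi c) := by
  constructor
  · rintro ⟨hS, hconn⟩
    by_cases hcS : c ∈ S
    · exact Or.inl hcS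
    refine Or.inr ?_
    -- Adjacency within `S` never crosses `c`, hence neither does reachability.
    have step : ∀ x y : S, ((glueClique n l).induce S).Reachable x y →
        (x.1 < c ↔ y.1 < c) := by
      rintro x y ⟨w⟩
      induction w with
      | nil => rfl
      | @cons u v w h _ ih =>
        rw [← ih]
        have h' := (glueClique_adj.1 (SimpleGraph.induce_adj.1 h)).2
        have hu : u.1 ≠ c := fun e => hcS (e ▸ u.2)
        have hv : v.1 ≠ c := fun e => hcS (e ▸ v.2)
        rw [Ne, Fin.ext_iff] at hu hv
        rw [Fin.lt_def, Fin.lt_def]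
        omega
    obtain ⟨s, hs⟩ := hS
    by_cases hsc : s < c
    · exact Or.inl ⟨⟨s, hs⟩, fun t ht =>
        (step ⟨s, hs⟩ ⟨t, ht⟩ (hconn.preconnected _ _)).1 hsc⟩
    · refine Or.inr ⟨⟨s, hs⟩, fun t ht => ?_⟩
      have h1 : ¬ t < c := fun h => hsc
        ((step ⟨s, hs⟩ ⟨t, ht⟩ (hconn.preconnected _ _)).2 h)
      exact lt_of_le_of_ne (not_lt.1 h1) (fun e => hcS (e ▸ ht))
  -- A set lying in a single clique is connected because distinct vertices are adjacent.
  · have clique : ∀ T : Set (Fin n), T.Nonempty →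
        (∀ x ∈ T, ∀ y ∈ T, (x.val < l ∧ y.val < l) ∨ (l - 1 ≤ x.val ∧ l - 1 ≤ y.val)) →
        (T.Nonempty ∧ ((glueClique n l).induce T).Connected) := by
      intro T hT h
      have := hT.to_subtype
      refine ⟨hT, ⟨fun x y => ?_⟩⟩
      by_cases hxy : x = y
      · rw [hxy]
      · exact SimpleGraph.Adj.reachable (SimpleGraph.induce_adj.2 (glueClique_adj.2
          ⟨fun e => hxy (Subtype.ext e), h x x.2 y y.2⟩))
    rintro (hcS | ⟨hS, hA⟩ | ⟨hS, hB⟩)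
    · have key : ∀ x : S, ((glueClique n l).induce S).Reachable ⟨c, hcS⟩ x := by
        intro x
        by_cases hx : c = x.1
        · have : (⟨c, hcS⟩ : S) = x := Subtype.ext hx
          rw [this]
        · refine SimpleGraph.Adj.reachable (SimpleGraph.induce_adj.2
            (glueClique_adj.2 ⟨hx, ?_⟩))
          dsimp only
          omega
      have : Nonempty S := ⟨⟨c, hcS⟩⟩
      exact ⟨⟨c, hcS⟩, ⟨fun x y => (key x).symm.trans (key y)⟩⟩
    · refine clique S hS fun x hx y hy => ?_
      have h1 := Fin.lt_def.1 (hA hx)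
      have h2 := Fin.lt_def.1 (hA hy)
      omega
    · refine clique S hS fun x hx y hy => ?_
      have h1 := Fin.lt_def.1 (hB hx)
      have h2 := Fin.lt_def.1 (hB hy)
      omega

lemma ncard_nonempty_subsets {n : ℕ} (A : Set (Fin n)) :
    {S : Set (Fin n) | S.Nonempty ∧ S ⊆ A}.ncard = 2 ^ A.ncard - 1 := by
  have h : {S : Set (Fin n) | S.Nonempty ∧ S ⊆ A} = 𝒫 A \ {∅} := by
    ext S
    simp [Set.nonempty_iff_ne_empty, and_comm]
  rw [h, Set.ncard_sdiff_singleton_of_mem (Set.empty_subset A), Set.ncard_powerset]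

lemma ncard_sets_mem {n : ℕ} (c : Fin n) :
    {S : Set (Fin n) | c ∈ S}.ncard = 2 ^ (n - 1) := by
  have h : {S : Set (Fin n) | c ∈ S} = (𝒫 ({c}ᶜ))ᶜ := by
    ext S
    simp
  have hn : 0 < n := c.pos
  rw [h, Set.ncard_compl, Set.ncard_powerset, Set.ncard_compl, Set.ncard_singleton]
  obtain ⟨m, rfl⟩ : ∃ m, n = m + 1 := ⟨n - 1, by omega⟩
  simp [pow_succ]
  omega

lemma numCIS_glueClique {n l : ℕ} (hl : 1 ≤ l) (hln : l ≤ n) :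
    numCIS (glueClique n l) = 2 ^ (n - 1) + (2 ^ (l - 1) - 1) + (2 ^ (n - l) - 1) := by
  let c : Fin n := ⟨l - 1, by omega⟩
  have hc : c.val + 1 = l := by simp only [c]; omega
  have hset : {S : Set (Fin n) | S.Nonempty ∧ ((glueClique n l).induce S).Connected} =
      ({S | c ∈ S} ∪ {S | S.Nonempty ∧ S ⊆ Set.Iio c}) ∪ {S | S.Nonempty ∧ S ⊆ Set.Ioi c} := by
    ext S
    simp only [Set.mem_ofPred_eq, Set.mem_union, connected_iff c hc, or_assoc]
  have hA : (Set.Iio c).ncard = l - 1 := by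
    rw [← Finset.coe_Iio, Set.ncard_coe_finset, Fin.card_Iio]
  have hB : (Set.Ioi c).ncard = n - l := by
    rw [← Finset.coe_Ioi, Set.ncard_coe_finset, Fin.card_Ioi]
    omega
  unfold numCIS
  rw [Nat.card_coe_set_eq, hset, Set.ncard_union_eq, Set.ncard_union_eq,
    ncard_sets_mem, ncard_nonempty_subsets, ncard_nonempty_subsets, hA, hB]
  · rw [Set.disjoint_left]
    rintro S hcS ⟨-, hS⟩
    exact lt_irrefl c (hS hcS)
  · rw [Set.disjoint_left]
    rintro S (hcS | ⟨⟨s, hs⟩, hS⟩) ⟨-, hS'⟩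
    · exact lt_irrefl c (hS' hcS)
    · exact lt_asymm (Set.mem_Iio.1 (hS hs)) (Set.mem_Ioi.1 (hS' hs))

theorem stmt_3 (n l : ℕ) (hn : 3 ≤ n) (hl : 2 ≤ l) (hl2 : 2 * l ≤ n + 1) :
    numCIS (glueClique n l) = 2 ^ (n - 1) + 2 ^ (l - 1) + 2 ^ (n - l) - 2 ∧
    (2 * l ≤ n - 1 → numCIS (glueClique n (l + 1)) < numCIS (glueClique n l)) := by
  have p1 : 0 < (2 : ℕ) ^ (l - 1) := by positivity
  have p2 : 0 < (2 : ℕ) ^ (n - l) := by positivity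
  refine ⟨?_, fun h => ?_⟩
  · rw [numCIS_glueClique (by omega) (by omega)]
    generalize 2 ^ (l - 1) = a at *
    generalize 2 ^ (n - l) = b at *
    generalize 2 ^ (n - 1) = d
    omega
  · rw [numCIS_glueClique (by omega) (by omega), numCIS_glueClique (by omega) (by omega)]
    have e1 : 2 ^ (l + 1 - 1) = 2 * 2 ^ (l - 1) := by
      rw [← pow_succ']; congr 1; omega
    have e2 : 2 ^ (n - l) = 2 * 2 ^ (n - (l + 1)) := by
      rw [← pow_succ']; congr 1; omega
    have e3 : 2 ^ (l - 1) < 2 ^ (n - (l + 1)) :=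
      Nat.pow_lt_pow_right (by norm_num) (by omega)
    omega
end

section
/- Let l ≥ 3 and r ≥ 2 be integers, and let K_l and K_r be vertex disjoint complete graphs with V(K_r) = {w1, …, wr}. Let R2, …, Rr be pairwise vertex disjoint connected graphs (also disjoint from K_l and K_r) with v_j ∈ V(R_j) for each j ∈ {2, …, r} and |V(R2)| > 1. Let G1 be obtained by identifying w1 with a fixed vertex u of K_l and identifying w_j with v_j for all j ≥ 2. Fix a vertex v ≠ u of K_l, let G2 be obtained from G1 by deleting every edge joining v to a neighbour of v in K_l other than u, and let G3 be obtained from G2 by making the subgraph induced by V(K_l − u − v) ∪ V(K_r − w1) a complete graph. Then N(G3) > N(G1) and c(G1) = c(G3). -/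
/-- The graph `G1`: a complete graph `K_l` (with vertex set `Fin l' ⊕ {u}`, `l = l' + 1`,
`u = Sum.inr (Sum.inl ())`), where `u` is identified with the vertex `w1` of a complete graph
`K_r` (`r = r' + 1`) whose remaining vertices `w_2, …, w_r` are identified with the roots
`z j` of the pairwise disjoint connected graphs `R j`. -/
def stmt4G1 {r' : ℕ} {W : Fin r' → Type*} (l' : ℕ)
    (R : ∀ j, SimpleGraph (W j)) (z : ∀ j, W j) :
    SimpleGraph (Fin l' ⊕ (Unit ⊕ (Σ j, W j))) :=
  SimpleGraph.fromRel (fun a b =>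
    match a, b with
    | Sum.inl _, Sum.inl _ => True
    | Sum.inl _, Sum.inr (Sum.inl _) => True
    | Sum.inr (Sum.inl _), Sum.inr (Sum.inr ⟨j, p⟩) => p = z j
    | Sum.inr (Sum.inr ⟨j, p⟩), Sum.inr (Sum.inr ⟨j', p'⟩) =>
        (∃ h : j' = j, (R j).Adj p (cast (congrArg W h) p')) ∨
          (j ≠ j' ∧ p = z j ∧ p' = z j')
    | _, _ => False)

/-- The graph `G3`: obtained from `G1` by first deleting all edges joining the fixed vertex
`v = Sum.inl 0` of `K_l` to its neighbours in `K_l` other than `u`, and then making the set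
`V(K_l - u - v) ∪ V(K_r - w1)` into a clique. -/
def stmt4G3 {r' : ℕ} {W : Fin r' → Type*} (l' : ℕ)
    (R : ∀ j, SimpleGraph (W j)) (z : ∀ j, W j) :
    SimpleGraph (Fin l' ⊕ (Unit ⊕ (Σ j, W j))) :=
  SimpleGraph.fromRel (fun a b =>
    match a, b with
    | Sum.inl a, Sum.inl b => a.val ≠ 0 ∧ b.val ≠ 0
    | Sum.inl _, Sum.inr (Sum.inl _) => True
    | Sum.inl a, Sum.inr (Sum.inr ⟨j, p⟩) => a.val ≠ 0 ∧ p = z j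
    | Sum.inr (Sum.inl _), Sum.inr (Sum.inr ⟨j, p⟩) => p = z j
    | Sum.inr (Sum.inr ⟨j, p⟩), Sum.inr (Sum.inr ⟨j', p'⟩) =>
        (∃ h : j' = j, (R j).Adj p (cast (congrArg W h) p')) ∨
          (j ≠ j' ∧ p = z j ∧ p' = z j')
    | _, _ => False)

namespace Stmt4

open SimpleGraph

/-! ### Reachability and components -/

/-- If the ends of every edge of `G` are joined by a walk in `H`, then `G`-reachability implies
`H`-reachability. -/
lemma reachable_transfer {V : Type*} {G H : SimpleGraph V}
    (h : ∀ a b, G.Adj a b → H.Reachable a b) {a b : V} (hab : G.Reachable a b) :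
    H.Reachable a b := by
  obtain ⟨p⟩ := hab
  induction p with
  | nil => exact Reachable.refl _
  | cons e _ ih => exact (h _ _ e).trans ih

/-- A vertex property preserved along edges is preserved along walks. -/
lemma reachable_invariant {V : Type*} {G : SimpleGraph V} (P : V → Prop)
    (h : ∀ a b, G.Adj a b → P a → P b) {a b : V} (hab : G.Reachable a b) (ha : P a) : P b := by
  obtain ⟨p⟩ := hab
  induction p with
  | nil => exact ha
  | cons e _ ih => exact ih (h _ _ e ha)

/-- The number of components depends only on the reachability relation. -/
lemma card_components_congr {V : Type*} {G H : SimpleGraph V}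
    (h : ∀ a b, G.Reachable a b ↔ H.Reachable a b) :
    Nat.card G.ConnectedComponent = Nat.card H.ConnectedComponent :=
  Nat.card_congr (Quot.congr (Equiv.refl V) h)

/-- In a finite graph, a vertex `u` is a cut vertex as soon as every vertex is reachable from `u`
and some property `P` preserved along the edges avoiding `u` separates two vertices. -/
lemma isCutVertex_of_invariant {V : Type*} [Finite V] {G : SimpleGraph V} {u : V}
    (hG : ∀ a, G.Reachable u a) (P : V → Prop)
    (h : ∀ a b, a ≠ u → b ≠ u → G.Adj a b → P a → P b)
    {x y : V} (hx : x ≠ u) (hy : y ≠ u) (hPx : P x) (hPy : ¬ P y) : IsCutVertex G u := by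
  have h1 : Nat.card G.ConnectedComponent = 1 := by
    have : G.Preconnected := fun a b => (hG a).symm.trans (hG b)
    have := this.subsingleton_connectedComponent
    have : Nonempty G.ConnectedComponent := ⟨G.connectedComponentMk u⟩
    exact Nat.card_unique
  unfold IsCutVertex
  rw [h1, Finite.one_lt_card_iff_nontrivial]
  refine ⟨(G.induce {w | w ≠ u}).connectedComponentMk ⟨x, hx⟩,
    (G.induce {w | w ≠ u}).connectedComponentMk ⟨y, hy⟩, fun hxy => hPy ?_⟩
  exact reachable_invariant (fun w : {w | w ≠ u} => P w)
    (fun a b hab => h a b a.2 b.2 hab) (ConnectedComponent.exact hxy) hPx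

/-! ### Adjacency in the two graphs -/

variable {r' : ℕ} {W : Fin r' → Type*} {l' : ℕ} {R : ∀ j, SimpleGraph (W j)} {z : ∀ j, W j}

/-- The vertex `u = w_1` shared by the cliques `K_l` and `K_r`. -/
abbrev ctr : Fin l' ⊕ (Unit ⊕ (Σ j, W j)) := Sum.inr (Sum.inl ())

/-- The vertex `p` of the graph `R j`. -/
abbrev pt (j : Fin r') (p : W j) : Fin l' ⊕ (Unit ⊕ (Σ j, W j)) := Sum.inr (Sum.inr ⟨j, p⟩)

@[simp] lemma adj1_ll (a b : Fin l') : (stmt4G1 l' R z).Adj (Sum.inl a) (Sum.inl b) ↔ a ≠ b := by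
  simp [stmt4G1]

@[simp] lemma adj1_lu (a : Fin l') : (stmt4G1 l' R z).Adj (Sum.inl a) ctr := by
  simp [stmt4G1]

@[simp] lemma adj1_ul (a : Fin l') : (stmt4G1 l' R z).Adj ctr (Sum.inl a) := by
  simp [stmt4G1]

@[simp] lemma adj1_lw (a : Fin l') (j : Fin r') (p : W j) :
    ¬ (stmt4G1 l' R z).Adj (Sum.inl a) (pt j p) := by
  simp [stmt4G1]

@[simp] lemma adj1_wl (a : Fin l') (j : Fin r') (p : W j) :
    ¬ (stmt4G1 l' R z).Adj (pt j p) (Sum.inl a) := by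
  simp [stmt4G1]

@[simp] lemma adj1_uw (j : Fin r') (p : W j) :
    (stmt4G1 l' R z).Adj ctr (pt j p) ↔ p = z j := by
  simp [stmt4G1]

@[simp] lemma adj1_wu (j : Fin r') (p : W j) :
    (stmt4G1 l' R z).Adj (pt j p) ctr ↔ p = z j := by
  simp [stmt4G1]

@[simp] lemma adj3_ll (a b : Fin l') : (stmt4G3 l' R z).Adj (Sum.inl a) (Sum.inl b) ↔
    a ≠ b ∧ a.val ≠ 0 ∧ b.val ≠ 0 := by
  simp [stmt4G3]; tauto

@[simp] lemma adj3_lu (a : Fin l') : (stmt4G3 l' R z).Adj (Sum.inl a) ctr := by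
  simp [stmt4G3]

@[simp] lemma adj3_ul (a : Fin l') : (stmt4G3 l' R z).Adj ctr (Sum.inl a) := by
  simp [stmt4G3]

@[simp] lemma adj3_lw (a : Fin l') (j : Fin r') (p : W j) :
    (stmt4G3 l' R z).Adj (Sum.inl a) (pt j p) ↔ a.val ≠ 0 ∧ p = z j := by
  simp [stmt4G3]

@[simp] lemma adj3_wl (a : Fin l') (j : Fin r') (p : W j) :
    (stmt4G3 l' R z).Adj (pt j p) (Sum.inl a) ↔ a.val ≠ 0 ∧ p = z j := by
  simp [stmt4G3]

@[simp] lemma adj3_uw (j : Fin r') (p : W j) :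
    (stmt4G3 l' R z).Adj ctr (pt j p) ↔ p = z j := by
  simp [stmt4G3]

@[simp] lemma adj3_wu (j : Fin r') (p : W j) :
    (stmt4G3 l' R z).Adj (pt j p) ctr ↔ p = z j := by
  simp [stmt4G3]

lemma adj3_ww (x y : Σ j, W j) :
    (stmt4G3 l' R z).Adj (Sum.inr (Sum.inr x)) (Sum.inr (Sum.inr y)) ↔
      (stmt4G1 l' R z).Adj (Sum.inr (Sum.inr x)) (Sum.inr (Sum.inr y)) := by
  simp [stmt4G1, stmt4G3]

lemma adj1_of_adj {j : Fin r'} {p q : W j} (h : (R j).Adj p q) :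
    (stmt4G1 l' R z).Adj (pt j p) (pt j q) := by
  have := h.ne
  simp [stmt4G1, h, this]

lemma adj3_of_adj {j : Fin r'} {p q : W j} (h : (R j).Adj p q) :
    (stmt4G3 l' R z).Adj (pt j p) (pt j q) :=
  (adj3_ww _ _).2 (adj1_of_adj h)

/-- An edge of `G1` missing from `G3` joins `v` to `K_l - u - v`, so its ends are adjacent to `u`. -/
lemma adj_three_of_one {a b : Fin l' ⊕ (Unit ⊕ (Σ j, W j))} (h : (stmt4G1 l' R z).Adj a b) :
    (stmt4G3 l' R z).Adj a b ∨ ((stmt4G3 l' R z).Adj a ctr ∧ (stmt4G3 l' R z).Adj ctr b) := by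
  rcases a with a | ⟨⟨⟩⟩ | ⟨j, p⟩ <;> rcases b with b | ⟨⟨⟩⟩ | ⟨k, q⟩
  all_goals first
    | exact Or.inl ((adj3_ww _ _).2 h)
    | exact absurd h (SimpleGraph.irrefl _)
    | simp_all

/-- An edge of `G3` missing from `G1` joins `K_l - u - v` to a root `z j`, so its ends are adjacent
to `u`. -/
lemma adj_one_of_three {a b : Fin l' ⊕ (Unit ⊕ (Σ j, W j))} (h : (stmt4G3 l' R z).Adj a b) :
    (stmt4G1 l' R z).Adj a b ∨ ((stmt4G1 l' R z).Adj a ctr ∧ (stmt4G1 l' R z).Adj ctr b) := by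
  rcases a with a | ⟨⟨⟩⟩ | ⟨j, p⟩ <;> rcases b with b | ⟨⟨⟩⟩ | ⟨k, q⟩
  all_goals first
    | exact Or.inl ((adj3_ww _ _).1 h)
    | exact absurd h (SimpleGraph.irrefl _)
    | simp_all

/-- On a vertex set containing `u`, the two graphs induce the same reachability relation: an edge
of one graph missing from the other is replaced by a path through `u`. -/
lemma reachable_iff {S : Set (Fin l' ⊕ (Unit ⊕ (Σ j, W j)))} (hS : ctr ∈ S) (a b : S) :
    ((stmt4G1 l' R z).induce S).Reachable a b ↔ ((stmt4G3 l' R z).induce S).Reachable a b := by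
  constructor <;> refine reachable_transfer fun a b h => ?_
  · rcases adj_three_of_one (induce_adj.1 h) with h | ⟨h, h'⟩
    · exact Adj.reachable (induce_adj.2 h)
    · exact (Adj.reachable (v := ⟨ctr, hS⟩) (induce_adj.2 h)).trans
        (Adj.reachable (induce_adj.2 h'))
  · rcases adj_one_of_three (induce_adj.1 h) with h | ⟨h, h'⟩
    · exact Adj.reachable (induce_adj.2 h)
    · exact (Adj.reachable (v := ⟨ctr, hS⟩) (induce_adj.2 h)).trans
        (Adj.reachable (induce_adj.2 h'))

/-! ### Cut vertices -/

lemma reachable_ctr1 (hconn : ∀ j, (R j).Connected) (a : Fin l' ⊕ (Unit ⊕ (Σ j, W j))) :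
    (stmt4G1 l' R z).Reachable ctr a := by
  rcases a with a | ⟨⟨⟩⟩ | ⟨j, p⟩
  · exact Adj.reachable (by simp)
  · exact Reachable.refl _
  · refine (Adj.reachable ((adj1_uw j (z j)).2 rfl)).trans ?_
    let f : R j →g stmt4G1 l' R z := ⟨fun p => pt j p, adj1_of_adj⟩
    exact ((hconn j).preconnected (z j) p).map f

lemma reachable_ctr3 (hconn : ∀ j, (R j).Connected) (a : Fin l' ⊕ (Unit ⊕ (Σ j, W j))) :
    (stmt4G3 l' R z).Reachable ctr a := by
  refine reachable_transfer (fun a b h => ?_) (reachable_ctr1 (z := z) hconn a)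
  rcases adj_three_of_one h with h | ⟨h, h'⟩
  · exact h.reachable
  · exact h.reachable.trans h'.reachable

lemma isCutVertex_iff [∀ j, Fintype (W j)] (hl : 2 ≤ l') (hr : 0 < r')
    (hconn : ∀ j, (R j).Connected) (x : Fin l' ⊕ (Unit ⊕ (Σ j, W j))) :
    IsCutVertex (stmt4G1 l' R z) x ↔ IsCutVertex (stmt4G3 l' R z) x := by
  by_cases hx : x = ctr
  · subst hx
    have h1 : IsCutVertex (stmt4G1 l' R z) ctr := by
      refine isCutVertex_of_invariant (reachable_ctr1 hconn) (fun a => a.isLeft = true) ?_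
        (x := Sum.inl ⟨0, by omega⟩) (y := pt ⟨0, hr⟩ (z _)) (by simp) (by simp) (by simp) (by simp)
      rintro (a | ⟨⟨⟩⟩ | ⟨j, p⟩) (b | ⟨⟨⟩⟩ | ⟨k, q⟩) <;> simp
    have h3 : IsCutVertex (stmt4G3 l' R z) ctr := by
      refine isCutVertex_of_invariant (reachable_ctr3 hconn)
        (fun a => a = Sum.inl ⟨0, by omega⟩) ?_
        (x := Sum.inl ⟨0, by omega⟩) (y := pt ⟨0, hr⟩ (z _)) (by simp) (by simp) (by simp) (by simp)
      rintro (a | ⟨⟨⟩⟩ | ⟨j, p⟩) (b | ⟨⟨⟩⟩ | ⟨k, q⟩) <;> simp +contextual [Fin.ext_iff]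
    exact iff_of_true h1 h3
  -- For `x ≠ u`, both the whole graphs and the graphs without `x` have equally many components.
  · have hu : ctr ∈ {w : Fin l' ⊕ (Unit ⊕ (Σ j, W j)) | w ≠ x} := fun h => hx h.symm
    unfold IsCutVertex
    rw [card_components_congr (reachable_iff (R := R) (z := z) hu)]
    rw [card_components_congr (G := stmt4G1 l' R z) (H := stmt4G3 l' R z) fun a b =>
      iff_of_true ((reachable_ctr1 hconn a).symm.trans (reachable_ctr1 hconn b))
        ((reachable_ctr3 hconn a).symm.trans (reachable_ctr3 hconn b))]

/-! ### Connected sets -/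

/-- In `G1 - u` no edge joins `K_l - u` to the graphs `R j`, so a connected set avoiding `u` and
meeting `K_l - u` lies in `K_l - u`. -/
lemma sides {S : Set (Fin l' ⊕ (Unit ⊕ (Σ j, W j)))} (hS : ((stmt4G1 l' R z).induce S).Connected)
    (hu : ctr ∉ S) {i : Fin l'} (hi : Sum.inl i ∈ S) {x : Fin l' ⊕ (Unit ⊕ (Σ j, W j))}
    (hx : x ∈ S) : x.isLeft = true := by
  refine reachable_invariant (fun a : S => a.1.isLeft = true) ?_
    (hS.preconnected ⟨Sum.inl i, hi⟩ ⟨x, hx⟩) rfl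
  rintro ⟨a | ⟨⟨⟩⟩ | ⟨j, p⟩, ha⟩ ⟨b | ⟨⟨⟩⟩ | ⟨k, q⟩, hb⟩ <;> simp_all

/-- `S` avoids `u`, contains `v = inl 0`, and meets `K_l - u - v`: the connected sets of `G1` with
this property are those that are not connected in `G3`. -/
def Exceptional (S : Set (Fin l' ⊕ (Unit ⊕ (Σ j, W j)))) : Prop :=
  ctr ∉ S ∧ (∃ i : Fin l', i.val = 0 ∧ Sum.inl i ∈ S) ∧ ∃ i : Fin l', i.val ≠ 0 ∧ Sum.inl i ∈ S

open Classical in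
/-- Replace `v = inl 0` by the root of `R 0` in the exceptional sets; fix all other sets. -/
noncomputable def shift (hr : 0 < r') (z : ∀ j, W j) (S : Set (Fin l' ⊕ (Unit ⊕ (Σ j, W j)))) :
    Set (Fin l' ⊕ (Unit ⊕ (Σ j, W j))) :=
  if Exceptional S then
    {x | (x ∈ S ∧ ∀ i : Fin l', x = Sum.inl i → i.val ≠ 0) ∨ x = pt ⟨0, hr⟩ (z _)}
  else S

lemma shift_connected (hr : 0 < r') {S : Set (Fin l' ⊕ (Unit ⊕ (Σ j, W j)))}
    (hS : ((stmt4G1 l' R z).induce S).Connected) :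
    ((stmt4G3 l' R z).induce (shift hr z S)).Connected := by
  by_cases hE : Exceptional S
  · rw [shift, if_pos hE]
    obtain ⟨hu, ⟨i, hi, hiS⟩, -⟩ := hE
    -- Every vertex of the shifted set is equal or adjacent to the root of `R 0`.
    refine (connected_iff_exists_forall_reachable _).2 ⟨⟨pt ⟨0, hr⟩ (z _), Or.inr rfl⟩, ?_⟩
    rintro ⟨x, ⟨hx, hx0⟩ | rfl⟩
    · have := sides hS hu hiS hx
      rcases x with a | x
      · exact Adj.reachable (induce_adj.2 ((adj3_wl _ _ _).2 ⟨hx0 a rfl, rfl⟩))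
      · simp at this
    · exact Reachable.refl _
  · rw [shift, if_neg hE]
    have := hS.nonempty
    by_cases hu : ctr ∈ S
    · exact ⟨fun a b => (reachable_iff hu a b).1 (hS.preconnected a b)⟩
    · refine hS.mono ?_
      rintro ⟨a, ha⟩ ⟨b, hb⟩ h
      rw [induce_adj] at h ⊢
      dsimp only at h ⊢
      rcases a with a | ⟨⟨⟩⟩ | ⟨j, p⟩
      · rcases b with b | ⟨⟨⟩⟩ | ⟨k, q⟩
        -- An edge of `K_l - u` at `v` would make `S` exceptional.
        · rw [adj1_ll] at h
          rw [adj3_ll]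
          refine ⟨h, fun h0 => hE ⟨hu, ⟨a, h0, ha⟩, b, ?_, hb⟩,
            fun h0 => hE ⟨hu, ⟨b, h0, hb⟩, a, ?_, ha⟩⟩
          · exact fun h1 => h (Fin.ext (h0.trans h1.symm))
          · exact fun h1 => h (Fin.ext (h1.trans h0.symm))
        · exact absurd hb hu
        · exact absurd h (adj1_lw _ _ _)
      · exact absurd ha hu
      · rcases b with b | ⟨⟨⟩⟩ | ⟨k, q⟩
        · exact absurd h (adj1_wl _ _ _)
        · exact absurd hb hu
        · exact (adj3_ww _ _).2 h

/-- No connected set of `G1` avoiding `u` meets both `K_l - u` and some `R j`. -/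
lemma not_connected_of_mixed {S : Set (Fin l' ⊕ (Unit ⊕ (Σ j, W j)))}
    (hS : ((stmt4G1 l' R z).induce S).Connected) (hu : ctr ∉ S) {i : Fin l'} (hi : Sum.inl i ∈ S)
    {j : Fin r'} {p : W j} (hp : pt j p ∈ S) : False := by
  simpa using sides hS hu hi hp

lemma shift_mixed (hr : 0 < r') {S : Set (Fin l' ⊕ (Unit ⊕ (Σ j, W j)))} (hE : Exceptional S) :
    ctr ∉ shift hr z S ∧ (∃ i : Fin l', Sum.inl i ∈ shift hr z S) ∧
      pt ⟨0, hr⟩ (z _) ∈ shift hr z S := by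
  rw [shift, if_pos hE]
  obtain ⟨hu, -, i, hi, hiS⟩ := hE
  exact ⟨by simp [hu], ⟨i, Or.inl ⟨hiS, by simp only [Sum.inl.injEq]; rintro _ rfl; exact hi⟩⟩,
    Or.inr rfl⟩

lemma subset_of_shift_eq (hr : 0 < r') {S T : Set (Fin l' ⊕ (Unit ⊕ (Σ j, W j)))}
    (hS : ((stmt4G1 l' R z).induce S).Connected)
    (hES : Exceptional S) (hET : Exceptional T) (h : shift hr z S = shift hr z T) : S ⊆ T := by
  intro x hx
  rw [shift, if_pos hES, shift, if_pos hET] at h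
  obtain ⟨hu, ⟨i, -, hi⟩, -⟩ := hES
  have hl := sides hS hu hi hx
  rcases x with a | x
  · by_cases ha : a.val = 0
    · obtain ⟨-, ⟨k, hk, hkT⟩, -⟩ := hET
      have : a = k := Fin.ext (ha.trans hk.symm)
      exact this ▸ hkT
    · have : Sum.inl a ∈ {x : Fin l' ⊕ (Unit ⊕ (Σ j, W j)) |
          (x ∈ S ∧ ∀ i : Fin l', x = Sum.inl i → i.val ≠ 0) ∨ x = pt ⟨0, hr⟩ (z _)} :=
        Or.inl ⟨hx, by simp only [Sum.inl.injEq]; rintro _ rfl; exact ha⟩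
      rw [h] at this
      rcases this with h | h
      · exact h.1
      · simp at h
  · simp at hl

lemma shift_injective (hr : 0 < r') {S T : Set (Fin l' ⊕ (Unit ⊕ (Σ j, W j)))}
    (hS : ((stmt4G1 l' R z).induce S).Connected) (hT : ((stmt4G1 l' R z).induce T).Connected)
    (h : shift hr z S = shift hr z T) : S = T := by
  by_cases hES : Exceptional S <;> by_cases hET : Exceptional T
  · exact (subset_of_shift_eq hr hS hES hET h).antisymm (subset_of_shift_eq hr hT hET hES h.symm)
  · obtain ⟨h1, ⟨i, h2⟩, h3⟩ := shift_mixed (z := z) hr hES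
    rw [h, shift, if_neg hET] at h1 h2 h3
    exact (not_connected_of_mixed hT h1 h2 h3).elim
  · obtain ⟨h1, ⟨i, h2⟩, h3⟩ := shift_mixed (z := z) hr hET
    rw [← h, shift, if_neg hES] at h1 h2 h3
    exact (not_connected_of_mixed hS h1 h2 h3).elim
  · rwa [shift, shift, if_neg hES, if_neg hET] at h

/-- The set `V(R 0) ∪ {a}`, connected in `G3` when `a ≠ v`. -/
def extra (hr : 0 < r') (a : Fin l') : Set (Fin l' ⊕ (Unit ⊕ (Σ j, W j))) :=
  {x | x = Sum.inl a ∨ ∃ p : W ⟨0, hr⟩, x = pt ⟨0, hr⟩ p}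

lemma extra_connected (hr : 0 < r') (hconn : ∀ j, (R j).Connected) {a : Fin l'} (ha : a.val ≠ 0) :
    ((stmt4G3 l' R z).induce (extra hr a)).Connected := by
  refine (connected_iff_exists_forall_reachable _).2 ⟨⟨pt ⟨0, hr⟩ (z _), Or.inr ⟨_, rfl⟩⟩, ?_⟩
  rintro ⟨x, rfl | ⟨p, rfl⟩⟩
  · exact Adj.reachable (induce_adj.2 ((adj3_wl _ _ _).2 ⟨ha, rfl⟩))
  · let f : R ⟨0, hr⟩ →g (stmt4G3 l' R z).induce (extra hr a) :=
      ⟨fun p => ⟨pt ⟨0, hr⟩ p, Or.inr ⟨p, rfl⟩⟩, fun h => induce_adj.2 (adj3_of_adj h)⟩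
    exact ((hconn ⟨0, hr⟩).preconnected (z _) p).map f

/-- A set `S` shifted to `extra` would have to be fixed, since a shifted exceptional set contains only
the root of `R 0`; but `extra` is disconnected in `G1`. -/
lemma shift_ne_extra (hr : 0 < r') {q : W ⟨0, hr⟩} (hq : q ≠ z _)
    {S : Set (Fin l' ⊕ (Unit ⊕ (Σ j, W j)))}
    (hS : ((stmt4G1 l' R z).induce S).Connected) (a : Fin l') :
    shift hr z S ≠ extra hr a := by
  intro h
  have h1 : ctr ∉ extra (W := W) hr a := by simp [extra]
  have h2 : Sum.inl a ∈ extra (W := W) hr a := Or.inl rfl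
  have h3 : pt ⟨0, hr⟩ q ∈ extra (W := W) hr a := Or.inr ⟨q, rfl⟩
  rw [← h] at h1 h2 h3
  by_cases hE : Exceptional S
  · rw [shift, if_pos hE] at h3
    obtain ⟨hu, ⟨i, -, hi⟩, -⟩ := hE
    rcases h3 with h3 | h3
    · exact not_connected_of_mixed hS hu hi h3.1
    · simp [hq] at h3
  · rw [shift, if_neg hE] at h1 h2 h3
    exact not_connected_of_mixed hS h1 h2 h3

lemma numCIS_lt [∀ j, Fintype (W j)] (hl : 2 ≤ l') (hr : 0 < r')
    (hconn : ∀ j, (R j).Connected) (hR2 : 1 < Fintype.card (W ⟨0, hr⟩)) :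
    numCIS (stmt4G1 l' R z) < numCIS (stmt4G3 l' R z) := by
  obtain ⟨q, hq⟩ := Fintype.exists_ne_of_one_lt_card hR2 (z ⟨0, hr⟩)
  have himg : shift hr z '' {S | S.Nonempty ∧ ((stmt4G1 l' R z).induce S).Connected} ⊂
      {S | S.Nonempty ∧ ((stmt4G3 l' R z).induce S).Connected} := by
    refine Set.ssubset_iff_of_subset ?_ |>.2 ⟨extra hr ⟨1, by omega⟩, ?_, ?_⟩
    · rintro _ ⟨S, ⟨-, hS⟩, rfl⟩
      have := shift_connected hr hS
      exact ⟨Set.nonempty_coe_sort.1 this.nonempty, this⟩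
    · exact ⟨⟨_, Or.inl rfl⟩, extra_connected hr hconn (by simp)⟩
    · rintro ⟨S, ⟨-, hS⟩, h⟩
      exact shift_ne_extra hr hq hS _ h
  have hlt := Set.ncard_lt_ncard himg (Set.toFinite _)
  rwa [Set.InjOn.ncard_image fun S hS T hT h => shift_injective hr hS.2 hT.2 h] at hlt

end Stmt4

theorem stmt_4 {r' : ℕ} {W : Fin r' → Type*} [∀ j, Fintype (W j)] (l' : ℕ)
    (hl : 2 ≤ l') (hr : 0 < r')
    (R : ∀ j, SimpleGraph (W j)) (z : ∀ j, W j)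
    (hconn : ∀ j, (R j).Connected)
    (hR2 : 1 < Fintype.card (W ⟨0, hr⟩)) :
    numCIS (stmt4G1 l' R z) < numCIS (stmt4G3 l' R z) ∧
    numCutVertices (stmt4G1 l' R z) = numCutVertices (stmt4G3 l' R z) := by
  refine ⟨Stmt4.numCIS_lt hl hr hconn hR2, ?_⟩
  unfold numCutVertices
  simp only [Stmt4.isCutVertex_iff hl hr hconn]
end

section
/- Let n > 1 and 0 ≤ c ≤ n − 2 be integers, let t be the residue of n modulo n − c, and set s = ⌊n/(n−c)⌋. Then every connected graph H of order n with exactly c cut vertices satisfies N(H) ≤ (n−c−t)·C(s,2) + t·C(s+1,2) + (s+1)^{n−c−t}·(s+2)^t − 1, where C(·,2) denotes the binomial coefficient. Equality holds if and only if H is isomorphic to G(s; …; s; s+1; …; s+1) with n−c−t copies of s followed by t copies of s+1. -/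
/-- `spiderClique q f` is the graph `G(f 0; …; f (q-1))`: a complete graph `K_q` on the
vertices `(j, 0)`, together with, for each `j`, a path `P_{f j}` on the vertices
`(j, 0), (j, 1), …, (j, f j - 1)` one of whose leaves is the clique vertex `(j, 0)`. -/
def spiderClique (q : ℕ) (f : Fin q → ℕ) : SimpleGraph ((j : Fin q) × Fin (f j)) :=
  SimpleGraph.fromRel (fun a b =>
    (a.2.val = 0 ∧ b.2.val = 0) ∨ (a.1 = b.1 ∧ b.2.val = a.2.val + 1))

/-! ### Balanced leg lengths -/

section Arithmetic

variable {ι : Type*} [Fintype ι]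

/-- The number `∑ C(f i, 2)` of paths with at least two vertices inside the single legs. -/
def legSum (f : ι → ℕ) : ℕ := ∑ i, (f i).choose 2

/-- The product `∏ (f i + 1)`: the number of ways to choose an initial segment, possibly empty, of
each leg. -/
def legProd (f : ι → ℕ) : ℕ := ∏ i, (f i + 1)

/-- Any two leg lengths differ by at most one. -/
def LegBalanced (f : ι → ℕ) : Prop := ∀ i j, f i ≤ f j + 1

/-- The value of `legSum` at `q` balanced leg lengths of total `n`. -/
def balSum (q n : ℕ) : ℕ := (q - n % q) * (n / q).choose 2 + n % q * (n / q + 1).choose 2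

/-- The value of `legProd` at `q` balanced leg lengths of total `n`. -/
def balProd (q n : ℕ) : ℕ := (n / q + 1) ^ (q - n % q) * (n / q + 2) ^ (n % q)

/-- Balanced lengths of total `n` are determined up to order: `n % q` of them are `n / q + 1` and the
others are `n / q`. -/
lemma LegBalanced.exists_eq_ite {f : ι → ℕ} (hf : LegBalanced f) {q n : ℕ} (hq : Fintype.card ι = q)
    (hq0 : 0 < q) (hn : ∑ i, f i = n) :
    (∀ i, f i = if f i = n / q + 1 then n / q + 1 else n / q) ∧
      (Finset.univ.filter (fun i => f i = n / q + 1)).card = n % q := by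
  classical
  have hne : Nonempty ι := Fintype.card_pos_iff.mp (by omega)
  obtain ⟨i₀, hi₀⟩ := Finite.exists_min f
  -- the lengths are `s` or `s + 1`, where `s` is the smallest one
  set s := f i₀ with hs
  have h1 : ∀ i, f i = s + if f i = s + 1 then 1 else 0 := by
    intro i
    have := hi₀ i
    have := hf i i₀
    split_ifs <;> omega
  set t := (Finset.univ.filter (fun i => f i = s + 1)).card with htdef
  have h2 : n = q * s + t := by
    rw [← hn, Finset.sum_congr rfl (fun i _ => h1 i), Finset.sum_add_distrib]
    simp [htdef, Finset.sum_boole, hq]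
  have h3 : t < q := by
    rw [htdef, ← hq, ← Finset.card_univ]
    apply Finset.card_lt_card
    refine Finset.filter_ssubset.mpr ⟨i₀, Finset.mem_univ _, by omega⟩
  have h4 : n / q = s := by
    rw [h2, Nat.mul_add_div hq0, Nat.div_eq_of_lt h3, add_zero]
  have h5 : n % q = t := by
    rw [h2, Nat.mul_add_mod, Nat.mod_eq_of_lt h3]
  rw [h4, h5]
  refine ⟨fun i => ?_, rfl⟩
  have := h1 i
  split_ifs at this ⊢ <;> omega

lemma LegBalanced.values {f : ι → ℕ} (hf : LegBalanced f) {q n : ℕ} (hq : Fintype.card ι = q)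
    (hq0 : 0 < q) (hn : ∑ i, f i = n) : legSum f = balSum q n ∧ legProd f = balProd q n := by
  classical
  obtain ⟨h1, h2⟩ := hf.exists_eq_ite hq hq0 hn
  have h3 : (Finset.univ.filter (fun i => ¬ f i = n / q + 1)).card = q - n % q := by
    have := Finset.card_filter_add_card_filter_not (s := (Finset.univ : Finset ι))
      (fun i => f i = n / q + 1)
    rw [Finset.card_univ, hq] at this
    omega
  constructor
  · have : ∀ i, (f i).choose 2 =
        if f i = n / q + 1 then (n / q + 1).choose 2 else (n / q).choose 2 := by
      intro i
      have := h1 i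
      split_ifs at this ⊢ <;> rw [this]
    unfold legSum balSum
    rw [Finset.sum_congr rfl (fun i _ => this i), Finset.sum_ite, Finset.sum_const,
      Finset.sum_const, h2, h3]
    simp [add_comm]
  · have : ∀ i, f i + 1 = if f i = n / q + 1 then n / q + 2 else n / q + 1 := by
      intro i
      have := h1 i
      split_ifs at this ⊢ <;> omega
    unfold legProd balProd
    rw [Finset.prod_congr rfl (fun i _ => this i), Finset.prod_ite, Finset.prod_const,
      Finset.prod_const, h2, h3, mul_comm]

/-- Moving one vertex from a leg to a leg shorter by at least two. If the lengths are `b + 2 + d` and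
`b`, then `legSum` decreases by `d + 1`, while `legProd` increases by `d + 1` times the product over
the other legs; this product is at least two if there is another nonempty leg. -/
lemma exists_exchange {f : ι → ℕ} (hf : ¬ LegBalanced f) :
    ∃ g : ι → ℕ, ∑ i, g i = ∑ i, f i ∧ ∑ i, g i ^ 2 < ∑ i, f i ^ 2 ∧ legProd f < legProd g ∧
      legSum f + legProd f ≤ legSum g + legProd g ∧
      (3 ≤ Fintype.card ι → (∀ i, 1 ≤ f i) →
        legSum f + legProd f < legSum g + legProd g) := by
  classical
  unfold LegBalanced at hf
  push Not at hf
  obtain ⟨i, j, hij⟩ := hf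
  obtain ⟨d, hd⟩ : ∃ d, f i = f j + 2 + d := ⟨f i - (f j + 2), by omega⟩
  have hne : i ≠ j := by rintro rfl; omega
  set g : ι → ℕ := Function.update (Function.update f i (f j + 1 + d)) j (f j + 1) with hg
  have gi : g i = f j + 1 + d := by simp [hg, hne]
  have gj : g j = f j + 1 := by simp [hg]
  have gk : ∀ k ∈ (Finset.univ.erase i).erase j, g k = f k := by
    intro k hk
    simp only [Finset.mem_erase, Finset.mem_univ, and_true] at hk
    simp [hg, hk.1, hk.2]
  have hs : ∀ F : ι → ℕ, ∑ k, F k = F i + (F j + ∑ k ∈ (Finset.univ.erase i).erase j, F k) := by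
    intro F
    rw [Finset.add_sum_erase _ _ (by simp [hne.symm]), Finset.add_sum_erase _ _ (by simp)]
  have hp : ∀ F : ι → ℕ, ∏ k, F k = F i * (F j * ∏ k ∈ (Finset.univ.erase i).erase j, F k) := by
    intro F
    rw [Finset.mul_prod_erase _ _ (by simp [hne.symm]), Finset.mul_prod_erase _ _ (by simp)]
  set K := ∏ k ∈ (Finset.univ.erase i).erase j, (f k + 1) with hK
  have hK1 : 1 ≤ K := Finset.one_le_prod' (fun k _ => by omega)
  have hPf : legProd f = (f j + 2 + d + 1) * ((f j + 1) * K) := by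
    unfold legProd; rw [hp, hd]
  have hPg : legProd g = (f j + 1 + d + 1) * ((f j + 1 + 1) * K) := by
    unfold legProd
    rw [hp, gi, gj, Finset.prod_congr rfl (fun k hk => by rw [gk k hk])]
  have hP : legProd g = legProd f + (d + 1) * K := by rw [hPf, hPg]; ring
  have hS : legSum f = legSum g + (d + 1) := by
    unfold legSum
    have e3 : ∑ k ∈ (Finset.univ.erase i).erase j, (g k).choose 2 =
        ∑ k ∈ (Finset.univ.erase i).erase j, (f k).choose 2 :=
      Finset.sum_congr rfl (fun k hk => by rw [gk k hk])
    rw [hs, hs (fun k => (g k).choose 2), gi, gj, hd, e3]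
    have e1 : (f j + 2 + d).choose 2 = (f j + 1 + d) + (f j + 1 + d).choose 2 := by
      rw [show f j + 2 + d = (f j + 1 + d) + 1 by ring, Nat.choose_succ_succ' (f j + 1 + d) 1,
        Nat.choose_one_right]
    have e2 : (f j + 1).choose 2 = f j + (f j).choose 2 := by
      rw [Nat.choose_succ_succ' (f j) 1, Nat.choose_one_right]
    omega
  refine ⟨g, ?_, ?_, ?_, ?_, ?_⟩
  · rw [hs, hs f, gi, gj, hd, Finset.sum_congr rfl gk]; ring
  · rw [hs, hs (fun k => f k ^ 2), gi, gj, hd,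
      Finset.sum_congr rfl (fun k hk => by rw [gk k hk])]
    nlinarith
  · rw [hP]
    have : 0 < (d + 1) * K := by positivity
    omega
  · rw [hP, hS]
    nlinarith
  · intro h3 hpos
    obtain ⟨k, hk⟩ : ((Finset.univ.erase i).erase j).Nonempty := by
      rw [← Finset.card_pos, Finset.card_erase_of_mem (by simp [hne.symm]),
        Finset.card_erase_of_mem (by simp), Finset.card_univ]
      omega
    have hK2 : 2 ≤ K := by
      rw [hK, ← Finset.mul_prod_erase _ _ hk]
      have h1 : 1 ≤ ∏ x ∈ ((Finset.univ.erase i).erase j).erase k, (f x + 1) :=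
        Finset.one_le_prod' (fun k _ => by omega)
      have := hpos k
      nlinarith
    rw [hP, hS]
    nlinarith

/-- Balanced lengths maximize both `legProd` and `legSum + legProd`. They are the only maximizers of
`legProd`, and of `legSum + legProd` if there are at least three legs, all nonempty. -/
lemma balanced_optimal {q n : ℕ} (hq : Fintype.card ι = q) (hq0 : 0 < q) (f : ι → ℕ)
    (hn : ∑ i, f i = n) :
    legProd f ≤ balProd q n ∧ (legProd f = balProd q n → LegBalanced f) ∧
      legSum f + legProd f ≤ balSum q n + balProd q n ∧
      (legSum f + legProd f = balSum q n + balProd q n → 3 ≤ q → (∀ i, 1 ≤ f i) →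
        LegBalanced f) := by
  induction h : ∑ i, f i ^ 2 using Nat.strong_induction_on generalizing f with
  | _ m ih =>
    by_cases hf : LegBalanced f
    · obtain ⟨h1, h2⟩ := hf.values hq hq0 hn
      exact ⟨h2.le, fun _ => hf, by omega, fun _ _ _ => hf⟩
    · obtain ⟨g, g1, g2, g3, g4, g5⟩ := exists_exchange hf
      obtain ⟨i1, i2, i3, i4⟩ := ih _ (h ▸ g2) g (g1.trans hn) rfl
      refine ⟨by omega, fun _ => by omega, by omega, fun h1 h2 h3 => ?_⟩
      have := g5 (by omega) h3
      omega

/-- The balanced lengths in nondecreasing order: `q - n % q` times `n / q`, then `n / q + 1`. -/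
def canonLegs (q n : ℕ) : Fin q → ℕ := fun j => if j.val < q - n % q then n / q else n / q + 1

lemma canonLegs_balanced (q n : ℕ) : LegBalanced (canonLegs q n) := by
  intro i j
  unfold canonLegs
  split_ifs <;> omega

lemma canonLegs_sum {q : ℕ} (hq : 0 < q) (n : ℕ) : ∑ j, canonLegs q n j = n := by
  have hlt := Nat.mod_lt n hq
  unfold canonLegs
  rw [Fin.sum_univ_eq_sum_range (fun k => if k < q - n % q then n / q else n / q + 1)]
  obtain ⟨a, ha⟩ : ∃ a, q = a + n % q := ⟨q - n % q, by omega⟩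
  have h1 : Finset.range q = Finset.range (a + n % q) := by rw [← ha]
  rw [h1, Finset.sum_range_add,
    Finset.sum_congr rfl (g := fun _ => n / q)
      (fun k hk => if_pos (by have := Finset.mem_range.mp hk; omega)),
    Finset.sum_congr rfl (g := fun _ => n / q + 1) (fun k _ => if_neg (by omega))]
  simp only [Finset.sum_const, Finset.card_range, smul_eq_mul]
  calc a * (n / q) + n % q * (n / q + 1) = (a + n % q) * (n / q) + n % q := by ring
    _ = q * (n / q) + n % q := by rw [← ha]
    _ = n := Nat.div_add_mod n q

end Arithmetic

/-! ### Connected vertex sets -/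

section Connected

open scoped Classical

variable {V : Type*} {H : SimpleGraph V}

/-- `S` induces a connected subgraph of `H`, in cut form: `S` is nonempty, and every nonempty proper
subset of `S` has an edge to the rest of `S`. -/
def Cn (H : SimpleGraph V) (S : Finset V) : Prop :=
  S.Nonempty ∧ ∀ T ⊆ S, T.Nonempty → T ≠ S → ∃ a ∈ T, ∃ b ∈ S, b ∉ T ∧ H.Adj a b

lemma cn_iff_induce (S : Finset V) : Cn H S ↔ (H.induce (S : Set V)).Connected := by
  constructor
  · rintro ⟨⟨r, hr⟩, h⟩
    rw [SimpleGraph.connected_iff_exists_forall_reachable]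
    refine ⟨⟨r, hr⟩, ?_⟩
    set T : Finset V := S.filter
      (fun x => ∃ hx : x ∈ (S : Set V), (H.induce (S : Set V)).Reachable ⟨r, hr⟩ ⟨x, hx⟩) with hT
    have hTS : T = S := by
      by_contra hne
      obtain ⟨a, ha, b, hb, hbT, hab⟩ := h T (Finset.filter_subset _ _)
        ⟨r, Finset.mem_filter.mpr ⟨hr, hr, SimpleGraph.Reachable.refl _⟩⟩ hne
      obtain ⟨-, haS, har⟩ := Finset.mem_filter.mp ha
      refine hbT (Finset.mem_filter.mpr ⟨hb, hb, har.trans (SimpleGraph.Adj.reachable ?_)⟩)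
      exact hab
    rintro ⟨x, hx⟩
    have : x ∈ T := by rw [hTS]; exact hx
    exact (Finset.mem_filter.mp this).2.2
  · intro h
    obtain ⟨⟨r, hr⟩⟩ := h.nonempty
    refine ⟨⟨r, hr⟩, fun T hTS ⟨x, hx⟩ hne => ?_⟩
    obtain ⟨y, hyS, hyT⟩ : ∃ y ∈ S, y ∉ T := by
      by_contra hcon
      push Not at hcon
      exact hne (Finset.Subset.antisymm hTS hcon)
    obtain ⟨w⟩ := h.preconnected ⟨x, hTS hx⟩ ⟨y, hyS⟩
    obtain ⟨d, -, hd1, hd2⟩ := w.exists_boundary_dart {z | z.1 ∈ T} hx hyT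
    exact ⟨d.fst.1, hd1, d.snd.1, d.snd.2, hd2, d.adj⟩

lemma cn_singleton (x : V) : Cn H {x} := by
  refine ⟨by simp, fun T hT hne hT' => ?_⟩
  rcases Finset.subset_singleton_iff.mp hT with h | h
  · simp [h] at hne
  · exact absurd h hT'

lemma cn_union {S T : Finset V} (hS : Cn H S) (hT : Cn H T) {x : V} (hxS : x ∈ S)
    (hxT : x ∈ T) : Cn H (S ∪ T) := by
  refine ⟨⟨x, by simp [hxS]⟩, fun R hR hne hR' => ?_⟩
  by_cases h1 : (R ∩ S).Nonempty ∧ R ∩ S ≠ S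
  · obtain ⟨a, ha, b, hb, hbR, hab⟩ := hS.2 _ Finset.inter_subset_right h1.1 h1.2
    simp only [Finset.mem_inter, not_and] at ha hbR
    exact ⟨a, ha.1, b, Finset.mem_union_left _ hb, fun h => hbR h hb, hab⟩
  by_cases h2 : (R ∩ T).Nonempty ∧ R ∩ T ≠ T
  · obtain ⟨a, ha, b, hb, hbR, hab⟩ := hT.2 _ Finset.inter_subset_right h2.1 h2.2
    simp only [Finset.mem_inter, not_and] at ha hbR
    exact ⟨a, ha.1, b, Finset.mem_union_right _ hb, fun h => hbR h hb, hab⟩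
  exfalso
  have key : ∀ U : Finset V, ¬ ((R ∩ U).Nonempty ∧ R ∩ U ≠ U) → x ∈ U →
      (x ∈ R ∧ U ⊆ R) ∨ (x ∉ R ∧ Disjoint R U) := by
    intro U hU hxU
    by_cases hd : (R ∩ U).Nonempty
    · have : R ∩ U = U := by
        by_contra h
        exact hU ⟨hd, h⟩
      have := Finset.inter_eq_right.mp this
      exact Or.inl ⟨this hxU, this⟩
    · rw [Finset.not_nonempty_iff_eq_empty] at hd
      have hd' := Finset.disjoint_iff_inter_eq_empty.mpr hd
      exact Or.inr ⟨fun h => Finset.disjoint_left.mp hd' h hxU, hd'⟩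
  rcases key S h1 hxS with ⟨a1, a2⟩ | ⟨a1, a2⟩ <;> rcases key T h2 hxT with ⟨b1, b2⟩ | ⟨b1, b2⟩
  · exact hR' (Finset.Subset.antisymm hR (Finset.union_subset a2 b2))
  · exact b1 a1
  · exact a1 b1
  · obtain ⟨r, hr⟩ := hne
    rcases Finset.mem_union.mp (hR hr) with h | h
    · exact Finset.disjoint_left.mp a2 hr h
    · exact Finset.disjoint_left.mp b2 hr h

lemma cn_pair {x y : V} (h : H.Adj x y) : Cn H {x, y} := by
  rw [cn_iff_induce, Finset.coe_pair]
  exact SimpleGraph.induce_pair_connected_of_adj h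

lemma cn_insert {S : Finset V} (hS : Cn H S) {x y : V} (hx : x ∈ S) (h : H.Adj x y) :
    Cn H (insert y S) := by
  have := cn_union hS (cn_pair h) hx (by simp)
  convert this using 1
  ext z
  simp only [Finset.mem_insert, Finset.mem_union, Finset.mem_singleton]
  constructor
  · tauto
  · rintro (h | rfl | h) <;> tauto

lemma cn_of_root {S : Finset V} {r : V} (hr : r ∈ S)
    (h : ∀ x ∈ S, ∃ T ⊆ S, Cn H T ∧ r ∈ T ∧ x ∈ T) : Cn H S := by
  refine ⟨⟨r, hr⟩, fun R hR ⟨y, hy⟩ hR' => ?_⟩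
  have key : ∀ T ⊆ S, Cn H T → ∀ a ∈ T, ∀ b ∈ T, a ∈ R → b ∉ R →
      ∃ a ∈ R, ∃ b ∈ S, b ∉ R ∧ H.Adj a b := by
    intro T hTS hT a haT b hbT ha hb
    obtain ⟨a', ha', b', hb', hb'R, hab⟩ := hT.2 (R ∩ T) Finset.inter_subset_right
      ⟨a, by simp [ha, haT]⟩ (fun h => hb (Finset.inter_eq_right.mp h hbT))
    simp only [Finset.mem_inter, not_and] at ha' hb'R
    exact ⟨a', ha'.1, b', hTS hb', fun h => hb'R h hb', hab⟩
  obtain ⟨z, hzS, hzR⟩ : ∃ z ∈ S, z ∉ R := by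
    by_contra hcon
    push Not at hcon
    exact hR' (Finset.Subset.antisymm hR hcon)
  by_cases hrR : r ∈ R
  · obtain ⟨T, hTS, hT, hrT, hzT⟩ := h z hzS
    exact key T hTS hT r hrT z hzT hrR hzR
  · obtain ⟨T, hTS, hT, hrT, hyT⟩ := h y (hR hy)
    exact key T hTS hT y hyT r hrT hy hrR

lemma Cn.exists_adj {S : Finset V} (hS : Cn H S) {x y : V} (hx : x ∈ S) (hy : y ∈ S)
    (hxy : y ≠ x) : ∃ z ∈ S, z ≠ x ∧ H.Adj x z := by
  obtain ⟨a, ha, b, hb, hbx, hab⟩ := hS.2 {x} (by simpa) (by simp)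
    (fun h => hxy (by rw [← h] at hy; simpa using hy))
  rw [Finset.mem_singleton] at ha hbx
  subst ha
  exact ⟨b, hb, hbx, hab⟩

/-- A connected set with a second vertex besides `v` has a non-cut vertex other than `v`. -/
lemma Cn.exists_erase {S : Finset V} (hS : Cn H S) {v y : V} (hv : v ∈ S) (hy : y ∈ S)
    (hvy : y ≠ v) : ∃ x ∈ S, x ≠ v ∧ Cn H (S.erase x) := by
  -- a largest proper connected subset through `v` misses exactly one vertex
  obtain ⟨T, hT, hmax⟩ := Finset.exists_max_image
    (S.powerset.filter (fun T => Cn H T ∧ v ∈ T ∧ T ≠ S)) Finset.card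
    ⟨{v}, by
      simp only [Finset.mem_filter, Finset.mem_powerset, Finset.singleton_subset_iff]
      exact ⟨hv, cn_singleton v, by simp, fun h => hvy (by rw [← h] at hy; simpa using hy)⟩⟩
  simp only [Finset.mem_filter, Finset.mem_powerset] at hT hmax
  obtain ⟨hTS, hTc, hvT, hne⟩ := hT
  obtain ⟨a, ha, b, hb, hbT, hab⟩ := hS.2 T hTS ⟨v, hvT⟩ hne
  have hbS : insert b T = S := by
    by_contra h
    have := hmax (insert b T) ⟨Finset.insert_subset hb hTS, cn_insert hTc ha hab,
      Finset.mem_insert_of_mem hvT, h⟩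
    rw [Finset.card_insert_of_notMem hbT] at this
    omega
  refine ⟨b, hb, fun h => hbT (h ▸ hvT), ?_⟩
  rw [← hbS, Finset.erase_insert hbT]
  exact hTc

end Connected

/-! ### Dominance from a root -/

section Dominance

open scoped Classical

variable {V : Type*} {H : SimpleGraph V} {A : Finset V} {v : V}

/-- `x` dominates `y` from the root `v` inside `A`: every connected subset of `A` containing `v` and
`y` contains `x`. Every vertex dominates itself. -/
def Dom (H : SimpleGraph V) (A : Finset V) (v x y : V) : Prop :=
  ∀ S ⊆ A, Cn H S → v ∈ S → y ∈ S → x ∈ S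

/-- The vertices of `A` whose deletion leaves `A` connected. Since `Cn` excludes the empty set, the
vertex of a singleton is included explicitly. -/
noncomputable def nonCut (H : SimpleGraph V) (A : Finset V) : Finset V :=
  A.filter (fun y => A = {y} ∨ Cn H (A.erase y))

/-- The connected subsets of `A`. -/
noncomputable def cnSets (H : SimpleGraph V) (A : Finset V) : Finset (Finset V) :=
  A.powerset.filter (fun S => Cn H S)

/-- The connected subsets of `A` containing `v`. -/
noncomputable def cnSetsAt (H : SimpleGraph V) (A : Finset V) (v : V) : Finset (Finset V) :=
  A.powerset.filter (fun S => Cn H S ∧ v ∈ S)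

lemma mem_nonCut {y : V} : y ∈ nonCut H A ↔ y ∈ A ∧ (A = {y} ∨ Cn H (A.erase y)) := by
  simp [nonCut]

lemma mem_cnSets {S : Finset V} : S ∈ cnSets H A ↔ S ⊆ A ∧ Cn H S := by
  simp [cnSets]

lemma mem_cnSetsAt {S : Finset V} : S ∈ cnSetsAt H A v ↔ S ⊆ A ∧ Cn H S ∧ v ∈ S := by
  simp [cnSetsAt]

lemma Dom.trans {x y z : V} (h1 : Dom H A v x y) (h2 : Dom H A v y z) : Dom H A v x z :=
  fun S hSA hS hv hz => h1 S hSA hS hv (h2 S hSA hS hv hz)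

/-- Some connected set through `v` contains exactly one of `x` and `y`: a minimal connected set through
`v` that meets `{x, y}` cannot contain both, because a vertex other than `v` can be removed from it. -/
lemma exists_first_hit (hA : Cn H A) (hv : v ∈ A) {x y : V} (hx : x ∈ A) (hxy : x ≠ y) :
    ∃ S ⊆ A, Cn H S ∧ v ∈ S ∧ ((x ∈ S ∧ y ∉ S) ∨ (y ∈ S ∧ x ∉ S)) := by
  by_cases h1 : x = v
  · exact ⟨{v}, by simpa, cn_singleton v, by simp, Or.inl (by simp [h1] at hxy ⊢; tauto)⟩
  by_cases h2 : y = v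
  · exact ⟨{v}, by simpa, cn_singleton v, by simp, Or.inr (by simp [h2] at hxy ⊢; tauto)⟩
  -- a smallest connected set through `v` that meets `{x, y}`
  obtain ⟨S, hS, hmin⟩ := Finset.exists_min_image
    ((cnSetsAt H A v).filter (fun S => x ∈ S ∨ y ∈ S)) Finset.card
    ⟨A, by simp [mem_cnSetsAt, hA, hv, hx]⟩
  simp only [Finset.mem_filter, mem_cnSetsAt] at hS hmin
  obtain ⟨⟨hSA, hSc, hvS⟩, hor⟩ := hS
  by_cases hb : x ∈ S ∧ y ∈ S
  · obtain ⟨z, hz, hzv, hzc⟩ := hSc.exists_erase hvS hb.1 h1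
    have hn : ¬ (x ∈ S.erase z ∨ y ∈ S.erase z) := by
      intro h
      have := hmin (S.erase z) ⟨⟨(Finset.erase_subset _ _).trans hSA, hzc,
        Finset.mem_erase.mpr ⟨hzv.symm, hvS⟩⟩, h⟩
      have := Finset.card_erase_lt_of_mem hz
      omega
    simp only [Finset.mem_erase, not_or, not_and] at hn
    have e1 : x = z := by
      by_contra h; exact hn.1 h hb.1
    have e2 : y = z := by
      by_contra h; exact hn.2 h hb.2
    exact absurd (e1.trans e2.symm) hxy
  · exact ⟨S, hSA, hSc, hvS, by tauto⟩

lemma Dom.antisymm (hA : Cn H A) (hv : v ∈ A) {x y : V} (hx : x ∈ A)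
    (h1 : Dom H A v x y) (h2 : Dom H A v y x) : x = y := by
  by_contra h
  obtain ⟨S, hSA, hS, hvS, h | h⟩ := exists_first_hit hA hv hx h
  · exact h.2 (h2 S hSA hS hvS h.1)
  · exact h.2 (h1 S hSA hS hvS h.1)

/-- Two dominators of `y` are comparable. A connected set through `y` that contains exactly one of
them, `b` say, extends any connected set through `v` and `b` to one through `v` and `y`, so the other
one lies in the latter. -/
lemma Dom.total (hA : Cn H A) {x x' y : V} (hx : x ∈ A) (hy : y ∈ A)
    (h1 : Dom H A v x y) (h2 : Dom H A v x' y) : Dom H A v x x' ∨ Dom H A v x' x := by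
  by_cases hxx : x = x'
  · subst hxx
    exact Or.inl fun S _ _ _ h => h
  have key : ∀ a b, Dom H A v a y → ∀ S ⊆ A, Cn H S → y ∈ S → b ∈ S → a ∉ S →
      Dom H A v a b := by
    intro a b ha S hSA hS hyS hbS haS T hTA hT hvT hbT
    have := ha (S ∪ T) (Finset.union_subset hSA hTA) (cn_union hS hT hbS hbT)
      (by simp [hvT]) (by simp [hyS])
    rcases Finset.mem_union.mp this with h | h
    · exact absurd h haS
    · exact h
  obtain ⟨S, hSA, hS, hyS, h | h⟩ := exists_first_hit hA hy hx hxx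
  · exact Or.inr (key x' x h2 S hSA hS hyS h.1 h.2)
  · exact Or.inl (key x x' h1 S hSA hS hyS h.1 h.2)

lemma nonCut_erase_cn (hv : v ∈ A) {z : V} (hz : z ∈ nonCut H A) (hzv : z ≠ v) :
    Cn H (A.erase z) := by
  rcases (mem_nonCut.mp hz).2 with h | h
  · rw [h, Finset.mem_singleton] at hv
    exact absurd hv.symm hzv
  · exact h

/-- A non-cut vertex other than the root dominates only itself. -/
lemma Dom.eq_of_nonCut (hv : v ∈ A) {z y : V} (hz : z ∈ nonCut H A) (hzv : z ≠ v)
    (hy : y ∈ A) (h : Dom H A v z y) : y = z := by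
  by_contra hne
  have := h _ (Finset.erase_subset z A) (nonCut_erase_cn hv hz hzv)
    (Finset.mem_erase.mpr ⟨hzv.symm, hv⟩) (Finset.mem_erase.mpr ⟨hne, hy⟩)
  simp at this

/-- Every vertex `x ≠ v` dominates a non-cut vertex `z ≠ v`: a vertex `z` dominated by `x` that is as
deep as possible works, since a vertex cut off from `v` by deleting `z` is dominated by `z`. -/
lemma exists_nonCut_dom (hA : Cn H A) (hv : v ∈ A) {x : V} (hx : x ∈ A) (hxv : x ≠ v) :
    ∃ z ∈ (nonCut H A).erase v, Dom H A v x z := by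
  obtain ⟨z, hz, hmin⟩ := Finset.exists_min_image
    ((A.erase v).filter (fun z => Dom H A v x z))
    (fun z => (A.filter (fun y => Dom H A v z y)).card)
    ⟨x, by simp only [Finset.mem_filter, Finset.mem_erase]; exact ⟨⟨hxv, hx⟩, fun _ _ _ _ h => h⟩⟩
  simp only [Finset.mem_filter, Finset.mem_erase] at hz hmin
  obtain ⟨⟨hzv, hzA⟩, hxz⟩ := hz
  refine ⟨z, Finset.mem_erase.mpr ⟨hzv, mem_nonCut.mpr ⟨hzA, Or.inr ?_⟩⟩, hxz⟩
  refine cn_of_root (Finset.mem_erase.mpr ⟨hzv.symm, hv⟩) fun u hu => ?_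
  by_contra hcon
  push Not at hcon
  rw [Finset.mem_erase] at hu
  have hzu : Dom H A v z u := by
    intro S hSA hS hvS huS
    by_contra hzS
    exact hcon S (Finset.subset_erase.mpr ⟨hSA, hzS⟩) hS hvS huS
  have huv : u ≠ v := by
    rintro rfl
    exact hcon {u} (by simp [hu]) (cn_singleton u) (by simp) (by simp)
  have h1 := hmin u ⟨⟨huv, hu.2⟩, hxz.trans hzu⟩
  -- `u` lies strictly below `z`, contrary to the choice of `z`
  have h2 : A.filter (fun y => Dom H A v u y) ⊂ A.filter (fun y => Dom H A v z y) := by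
    rw [Finset.ssubset_iff_of_subset (fun y hy => by
      simp only [Finset.mem_filter] at hy ⊢
      exact ⟨hy.1, hzu.trans hy.2⟩)]
    refine ⟨z, by simp only [Finset.mem_filter]; exact ⟨hzA, fun _ _ _ _ h => h⟩, fun h => ?_⟩
    exact hu.1 (Dom.antisymm hA hv hu.2 (Finset.mem_filter.mp h).2 hzu)
  have := Finset.card_lt_card h2
  omega

end Dominance

/-! ### Connected sets through a root -/

section Rooted

open scoped Classical

variable {V : Type*} {H : SimpleGraph V} {A : Finset V} {v : V} {l : V → V}

/-- `A` induces a clique with pendant paths. The vertices of `A` correspond to pairs of a leg `i` and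
a height below `f i`; consecutive vertices of one leg are adjacent, the vertices of height `0` are
pairwise adjacent, and there are no other edges inside `A`. -/
structure Spider {V ι : Type*} (H : SimpleGraph V) (A : Finset V) (f : ι → ℕ) (leg : V → ι)
    (h : V → ℕ) : Prop where
  pos : ∀ i, 1 ≤ f i
  lt : ∀ x ∈ A, h x < f (leg x)
  inj : ∀ x ∈ A, ∀ y ∈ A, leg x = leg y → h x = h y → x = y
  surj : ∀ i k, k < f i → ∃ x ∈ A, leg x = i ∧ h x = k
  adj : ∀ x ∈ A, ∀ y ∈ A, x ≠ y →
    (H.Adj x y ↔ (h x = 0 ∧ h y = 0) ∨ (leg x = leg y ∧ (h y = h x + 1 ∨ h x = h y + 1)))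

/-- Any two nonadjacent vertices of `A` are separated by a third vertex of `A`. For connected `A` this
says that the blocks of `A` are cliques. -/
def CliqueBlocks (H : SimpleGraph V) (A : Finset V) : Prop :=
  ∀ x ∈ A, ∀ y ∈ A, x ≠ y → ¬ H.Adj x y →
    ∃ w ∈ A, w ≠ x ∧ w ≠ y ∧ ∀ S ⊆ A, Cn H S → x ∈ S → y ∈ S → w ∈ S

/-- `l` assigns to each vertex of `A` other than the root `v` a non-cut vertex, again other than
`v`, that it dominates. -/
def LeafMap (H : SimpleGraph V) (A : Finset V) (v : V) (l : V → V) : Prop :=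
  ∀ x ∈ A, x ≠ v → l x ∈ (nonCut H A).erase v ∧ Dom H A v x (l x)

/-- The vertices of `A` other than the root that are sent to `z` by `l`. -/
noncomputable def fib (A : Finset V) (v : V) (l : V → V) (z : V) : Finset V :=
  (A.erase v).filter (fun x => l x = z)

lemma mem_fib {x z : V} : x ∈ fib A v l z ↔ (x ≠ v ∧ x ∈ A) ∧ l x = z := by
  simp [fib]

lemma exists_leafMap (hA : Cn H A) (hv : v ∈ A) : ∃ l, LeafMap H A v l := by
  have : ∀ x, ∃ z, x ∈ A → x ≠ v → z ∈ (nonCut H A).erase v ∧ Dom H A v x z := by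
    intro x
    by_cases h : x ∈ A ∧ x ≠ v
    · obtain ⟨z, hz⟩ := exists_nonCut_dom hA hv h.1 h.2
      exact ⟨z, fun _ _ => hz⟩
    · exact ⟨x, fun h1 h2 => absurd ⟨h1, h2⟩ h⟩
  choose l hl using this
  exact ⟨l, hl⟩

/-- The sizes of the fibres of `l` over the non-cut vertices other than the root. -/
noncomputable def fibCard (H : SimpleGraph V) (A : Finset V) (v : V) (l : V → V) :
    ((nonCut H A).erase v : Finset V) → ℕ := fun z => (fib A v l z.1).card

lemma fibCard_sum (hl : LeafMap H A v l) (hv : v ∈ A) :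
    ∑ z, fibCard H A v l z = A.card - 1 := by
  rw [← Finset.card_erase_of_mem hv,
    Finset.card_eq_sum_card_fiberwise (f := l) (t := (nonCut H A).erase v)
      (fun x hx => (hl x (Finset.mem_of_mem_erase hx) (Finset.ne_of_mem_erase hx)).1)]
  exact Finset.sum_coe_sort ((nonCut H A).erase v) (fun z => (fib A v l z).card)

lemma fib_total (hA : Cn H A) (hl : LeafMap H A v l) {z a b : V} (ha : a ∈ fib A v l z)
    (hb : b ∈ fib A v l z) : Dom H A v a b ∨ Dom H A v b a := by
  rw [mem_fib] at ha hb
  have h1 := (hl a ha.1.2 ha.1.1).2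
  have h2 := (hl b hb.1.2 hb.1.1).2
  have h3 := (hl a ha.1.2 ha.1.1).1
  rw [ha.2] at h1 h3
  rw [hb.2] at h2
  exact Dom.total hA ha.1.2 (mem_nonCut.mp (Finset.mem_of_mem_erase h3)).1 h1 h2

/-- A fibre is a chain under dominance, so two of its subsets that contain every dominator in the
fibre of each of their elements are equal as soon as they have the same size. -/
lemma eq_of_card_fib (hA : Cn H A) (hl : LeafMap H A v l) {z : V} {P Q : Finset V}
    (hP : P ⊆ fib A v l z) (hQ : Q ⊆ fib A v l z)
    (hPd : ∀ a ∈ fib A v l z, ∀ b ∈ P, Dom H A v a b → a ∈ P)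
    (hQd : ∀ a ∈ fib A v l z, ∀ b ∈ Q, Dom H A v a b → a ∈ Q) (hc : P.card = Q.card) :
    P = Q := by
  by_cases h : P ⊆ Q
  · exact Finset.eq_of_subset_of_card_le h hc.ge
  by_cases h' : Q ⊆ P
  · exact (Finset.eq_of_subset_of_card_le h' hc.le).symm
  exfalso
  obtain ⟨a, haP, haQ⟩ := Finset.not_subset.mp h
  obtain ⟨b, hbQ, hbP⟩ := Finset.not_subset.mp h'
  rcases fib_total hA hl (hP haP) (hQ hbQ) with hd | hd
  · exact haQ (hQd a (hP haP) b hbQ hd)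
  · exact hbP (hPd b (hQ hbQ) a haP hd)

/-- A connected set through the root is determined by the sizes of its intersections with the
fibres. -/
lemma cnSetsAt_injOn (hA : Cn H A) (hl : LeafMap H A v l) :
    Set.InjOn (fun (S : Finset V) (z : ((nonCut H A).erase v : Finset V)) =>
      (S ∩ fib A v l z.1).card) (cnSetsAt H A v) := by
  intro S hS S' hS' hSS
  rw [Finset.mem_coe, mem_cnSetsAt] at hS hS'
  have hd : ∀ T, T ⊆ A ∧ Cn H T ∧ v ∈ T → ∀ z, ∀ a ∈ fib A v l z, ∀ b ∈ T ∩ fib A v l z,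
      Dom H A v a b → a ∈ T ∩ fib A v l z := by
    intro T hT z a ha b hb hab
    exact Finset.mem_inter.mpr
      ⟨hab T hT.1 hT.2.1 hT.2.2 (Finset.mem_inter.mp hb).1, ha⟩
  have heq : ∀ z : ((nonCut H A).erase v : Finset V),
      S ∩ fib A v l z.1 = S' ∩ fib A v l z.1 := fun z =>
    eq_of_card_fib hA hl Finset.inter_subset_right Finset.inter_subset_right
      (hd S hS _) (hd S' hS' _) (congrFun hSS z)
  have hm : ∀ T, T ⊆ A ∧ Cn H T ∧ v ∈ T → ∀ x, x ∈ T ↔ x = v ∨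
      ∃ z : ((nonCut H A).erase v : Finset V), x ∈ T ∩ fib A v l z.1 := by
    intro T hT x
    constructor
    · intro hx
      by_cases hxv : x = v
      · exact Or.inl hxv
      · exact Or.inr ⟨⟨l x, (hl x (hT.1 hx) hxv).1⟩,
          Finset.mem_inter.mpr ⟨hx, mem_fib.mpr ⟨⟨hxv, hT.1 hx⟩, rfl⟩⟩⟩
    · rintro (rfl | ⟨z, hz⟩)
      · exact hT.2.2
      · exact (Finset.mem_inter.mp hz).1
  ext x
  rw [hm S hS, hm S' hS']
  simp only [heq]

/-- The functions bounded pointwise by `f`. -/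
noncomputable def lowerBox {ι : Type*} [Fintype ι] (f : ι → ℕ) : Finset (ι → ℕ) :=
  Fintype.piFinset (fun i => Finset.range (f i + 1))

lemma mem_lowerBox {ι : Type*} [Fintype ι] {f g : ι → ℕ} :
    g ∈ lowerBox f ↔ ∀ i, g i ≤ f i := by
  simp [lowerBox]

lemma card_lowerBox {ι : Type*} [Fintype ι] (f : ι → ℕ) : (lowerBox f).card = legProd f := by
  simp [lowerBox, legProd]

lemma cnSetsAt_mapsTo :
    Set.MapsTo (fun (S : Finset V) (z : ((nonCut H A).erase v : Finset V)) =>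
      (S ∩ fib A v l z.1).card) (cnSetsAt H A v)
      (lowerBox (fibCard H A v l)) := by
  intro S _
  rw [Finset.mem_coe, mem_lowerBox]
  intro z
  exact Finset.card_le_card Finset.inter_subset_right

lemma cnSetsAt_card_le (hA : Cn H A) (hl : LeafMap H A v l) :
    (cnSetsAt H A v).card ≤ legProd (fibCard H A v l) := by
  rw [← card_lowerBox]
  exact Finset.card_le_card_of_injOn _ cnSetsAt_mapsTo (cnSetsAt_injOn hA hl)

/-- If the rooted bound is attained, then every choice of sizes is realized by a connected set through
the root. -/
lemma cnSetsAt_surj (hA : Cn H A) (hl : LeafMap H A v l)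
    (heq : (cnSetsAt H A v).card = legProd (fibCard H A v l))
    (g : ((nonCut H A).erase v : Finset V) → ℕ) (hg : ∀ z, g z ≤ fibCard H A v l z) :
    ∃ S ⊆ A, Cn H S ∧ v ∈ S ∧ ∀ z, (S ∩ fib A v l z.1).card = g z := by
  rw [← card_lowerBox] at heq
  have := Finset.surjOn_of_injOn_of_card_le _ cnSetsAt_mapsTo (cnSetsAt_injOn hA hl) heq.ge
  obtain ⟨S, hS, hSg⟩ := this (a := g) (by rwa [Finset.mem_coe, mem_lowerBox])
  rw [Finset.mem_coe, mem_cnSetsAt] at hS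
  exact ⟨S, hS.1, hS.2.1, hS.2.2, fun z => congrFun hSg z⟩

/-- The dominators of `x` in the fibre of `x`, including `x` itself: the initial segment of that chain
ending at `x`. -/
noncomputable def above (H : SimpleGraph V) (A : Finset V) (v : V) (l : V → V) (x : V) :
    Finset V := (fib A v l (l x)).filter (fun u => Dom H A v u x)

lemma mem_above {x u : V} : u ∈ above H A v l x ↔
    ((u ≠ v ∧ u ∈ A) ∧ l u = l x) ∧ Dom H A v u x := by
  simp [above, mem_fib]

/-- If the rooted bound is attained, each initial segment of a fibre is connected when joined to the
root: it is realized by the sizes that vanish on all other fibres. -/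
lemma cn_insert_above (hA : Cn H A) (hl : LeafMap H A v l)
    (heq : (cnSetsAt H A v).card = legProd (fibCard H A v l)) {x : V} (hx : x ∈ A)
    (hxv : x ≠ v) : Cn H (insert v (above H A v l x)) := by
  obtain ⟨S, hSA, hS, hvS, hc⟩ := cnSetsAt_surj hA hl heq
    (fun z => if z.1 = l x then (above H A v l x).card else 0) (by
      intro z
      split_ifs with h
      · unfold fibCard
        rw [h]
        exact Finset.card_le_card (Finset.filter_subset _ _)
      · exact Nat.zero_le _)
  have h1 : S ∩ fib A v l (l x) = above H A v l x := by
    refine eq_of_card_fib (z := l x) hA hl Finset.inter_subset_right (Finset.filter_subset _ _) ?_ ?_ ?_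
    · intro a ha b hb hab
      exact Finset.mem_inter.mpr ⟨hab S hSA hS hvS (Finset.mem_inter.mp hb).1, ha⟩
    · intro a ha b hb hab
      exact Finset.mem_filter.mpr ⟨ha, hab.trans (mem_above.mp hb).2⟩
    · simpa using hc ⟨l x, (hl x hx hxv).1⟩
  have h2 : S = insert v (above H A v l x) := by
    rw [← h1]
    ext u
    simp only [Finset.mem_insert, Finset.mem_inter]
    constructor
    · intro hu
      by_cases huv : u = v
      · exact Or.inl huv
      · refine Or.inr ⟨hu, ?_⟩
        have hf : u ∈ fib A v l (l u) := mem_fib.mpr ⟨⟨huv, hSA hu⟩, rfl⟩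
        by_cases hlu : l u = l x
        · rwa [← hlu]
        · have := hc ⟨l u, (hl u (hSA hu) huv).1⟩
          simp only [hlu, if_false, Finset.card_eq_zero] at this
          have hmem : u ∈ S ∩ fib A v l (l u) := Finset.mem_inter.mpr ⟨hu, hf⟩
          rw [this] at hmem
          simp at hmem
    · rintro (rfl | h)
      · exact hvS
      · exact h.1
  rwa [← h2]

/-- If the rooted bound is attained at a non-cut root `v`, then `A` is a spider. Its legs are `{v}`
and the fibres of `l`, where the height of a vertex counts its dominators in the fibre. Since `v` is
not a cut vertex and blocks are cliques, the neighbours of `v` are pairwise adjacent. -/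
theorem spider_of_card_eq (hA : Cn H A) (hB : CliqueBlocks H A) (hv : v ∈ nonCut H A)
    (hl : LeafMap H A v l) (heq : (cnSetsAt H A v).card = legProd (fibCard H A v l)) :
    ∃ (leg : V → Option ((nonCut H A).erase v : Finset V)) (h : V → ℕ),
      Spider H A (fun o => o.elim 1 (fibCard H A v l)) leg h ∧ leg v = none ∧ h v = 0 := by
  have hvA : v ∈ A := (mem_nonCut.mp hv).1
  have hself : ∀ x ∈ A, x ≠ v → x ∈ above H A v l x := fun x hx hxv =>
    mem_above.mpr ⟨⟨⟨hxv, hx⟩, rfl⟩, fun _ _ _ _ h => h⟩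
  have hsub : ∀ x, insert v (above H A v l x) ⊆ A := fun x =>
    Finset.insert_subset hvA (fun u hu => (mem_above.mp hu).1.1.2)
  have hP := fun x (hx : x ∈ A) hxv => cn_insert_above hA hl heq (x := x) hx hxv
  set h0 : V → ℕ := fun x => (above H A v l x).card - 1 with hh0
  have hcard : ∀ x ∈ A, x ≠ v → (above H A v l x).card = h0 x + 1 := by
    intro x hx hxv
    have : 0 < (above H A v l x).card := Finset.card_pos.mpr ⟨x, hself x hx hxv⟩
    simp only [hh0]
    omega
  -- a neighbour of a connected set through the root
  have fact : ∀ x ∈ A, x ≠ v → ∀ y ∈ insert v (above H A v l x), ∀ x' ∈ A, H.Adj y x' →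
      ∀ u, Dom H A v u x' → u = x' ∨ u = v ∨ u ∈ above H A v l x := by
    intro x hx hxv y hy x' hx' hadj u hu
    have := hu _ (Finset.insert_subset hx' (hsub x)) (cn_insert (hP x hx hxv) hy hadj)
      (by simp) (by simp)
    simpa using this
  have factv : ∀ x' ∈ A, H.Adj v x' → ∀ u, Dom H A v u x' → u = v ∨ u = x' := by
    intro x' hx' hadj u hu
    have := hu {v, x'} (by intro w; simp; rintro (rfl | rfl) <;> assumption) (cn_pair hadj)
      (by simp) (by simp)
    simpa using this
  have hmono : ∀ x ∈ A, x ≠ v → ∀ y ∈ A, y ≠ v → l x = l y → x ≠ y → Dom H A v x y →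
      above H A v l x ⊆ (above H A v l y).erase y := by
    intro x hx hxv y hy hyv hxy hne hd u hu
    rw [mem_above] at hu
    refine Finset.mem_erase.mpr ⟨?_, mem_above.mpr ⟨⟨hu.1.1, hu.1.2.trans hxy⟩, hu.2.trans hd⟩⟩
    rintro rfl
    exact hne (Dom.antisymm hA hvA hx hd hu.2)
  have hlt : ∀ x ∈ A, x ≠ v → ∀ y ∈ A, y ≠ v → l x = l y → x ≠ y → Dom H A v x y →
      h0 x < h0 y := by
    intro x hx hxv y hy hyv hxy hne hd
    have := Finset.card_le_card (hmono x hx hxv y hy hyv hxy hne hd)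
    rw [Finset.card_erase_of_mem (hself y hy hyv), hcard x hx hxv, hcard y hy hyv] at this
    omega
  have htot : ∀ x ∈ A, x ≠ v → ∀ y ∈ A, y ≠ v → l x = l y → Dom H A v x y ∨ Dom H A v y x :=
    fun x hx hxv y hy hyv hxy =>
      fib_total (z := l x) hA hl (mem_fib.mpr ⟨⟨hxv, hx⟩, rfl⟩) (mem_fib.mpr ⟨⟨hyv, hy⟩, hxy.symm⟩)
  have hinj : ∀ x ∈ A, x ≠ v → ∀ y ∈ A, y ≠ v → l x = l y → h0 x = h0 y → x = y := by
    intro x hx hxv y hy hyv hxy hh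
    by_contra hne
    rcases htot x hx hxv y hy hyv hxy with hd | hd
    · have := hlt x hx hxv y hy hyv hxy hne hd
      omega
    · have := hlt y hy hyv x hx hxv hxy.symm (Ne.symm hne) hd
      omega
  have hadjv : ∀ x ∈ A, x ≠ v → (H.Adj v x ↔ h0 x = 0) := by
    intro x hx hxv
    constructor
    · intro hadj
      have : above H A v l x ⊆ {x} := by
        intro u hu
        rw [mem_above] at hu
        rcases factv x hx hadj u hu.2 with h | h
        · exact absurd h hu.1.1.1
        · simp [h]
      have := Finset.card_le_card this
      rw [hcard x hx hxv, Finset.card_singleton] at this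
      omega
    · intro hx0
      have h1 : above H A v l x = {x} := by
        refine (Finset.eq_of_subset_of_card_le ?_ ?_).symm
        · simpa using hself x hx hxv
        · rw [hcard x hx hxv, hx0]; simp
      have h2 := hP x hx hxv
      rw [h1] at h2
      obtain ⟨z, hz, hzv, hadj⟩ := h2.exists_adj (x := v) (y := x) (by simp) (by simp) hxv
      simp only [Finset.mem_insert, Finset.mem_singleton] at hz
      rcases hz with rfl | rfl
      · exact absurd rfl hzv
      · exact hadj
  -- adjacency between consecutive elements of one chain
  have hsucc : ∀ x ∈ A, x ≠ v → ∀ y ∈ A, y ≠ v → l x = l y → h0 y = h0 x + 1 → H.Adj x y := by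
    intro x hx hxv y hy hyv hxy hh
    have hne : x ≠ y := by rintro rfl; omega
    have hd : Dom H A v x y := by
      rcases htot x hx hxv y hy hyv hxy with hd | hd
      · exact hd
      · have := hlt y hy hyv x hx hxv hxy.symm (Ne.symm hne) hd
        omega
    obtain ⟨z, hz, hzy, hadj⟩ := (hP y hy hyv).exists_adj (x := y) (y := v)
      (by simp [hself y hy hyv]) (by simp) (Ne.symm hyv)
    rcases Finset.mem_insert.mp hz with rfl | hz
    · rcases factv y hy hadj.symm x hd with h | h
      · exact absurd h hxv
      · exact absurd h hne
    · rw [mem_above] at hz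
      by_cases hzx : z = x
      · rw [← hzx]; exact hadj.symm
      exfalso
      have h1 := hlt z hz.1.1.2 hz.1.1.1 y hy hyv hz.1.2 hzy hz.2
      rcases htot z hz.1.1.2 hz.1.1.1 x hx hxv (hz.1.2.trans hxy.symm) with h2 | h2
      · rcases fact z hz.1.1.2 hz.1.1.1 z (by simp [hself z hz.1.1.2 hz.1.1.1]) y hy hadj.symm x hd
          with h | h | h
        · exact hne h
        · exact hxv h
        · exact hzx (Dom.antisymm hA hvA hz.1.1.2 h2 (mem_above.mp h).2)
      · have := hlt x hx hxv z hz.1.1.2 hz.1.1.1 (hxy.trans hz.1.2.symm) (Ne.symm hzx) h2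
        omega
  have hchain : ∀ x ∈ A, x ≠ v → ∀ y ∈ A, y ≠ v → l x = l y → x ≠ y → Dom H A v x y →
      H.Adj x y → h0 y = h0 x + 1 := by
    intro x hx hxv y hy hyv hxy hne hd hadj
    have h1 : (above H A v l y).erase y ⊆ above H A v l x := by
      intro u hu
      rw [Finset.mem_erase] at hu
      rcases fact x hx hxv x (by simp [hself x hx hxv]) y hy hadj u (mem_above.mp hu.2).2
        with h | h | h
      · exact absurd h hu.1
      · exact absurd h (mem_above.mp hu.2).1.1.1
      · exact h
    have h2 := Finset.card_le_card h1
    rw [Finset.card_erase_of_mem (hself y hy hyv), hcard x hx hxv, hcard y hy hyv] at h2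
    have := hlt x hx hxv y hy hyv hxy hne hd
    omega
  have hcross : ∀ x ∈ A, x ≠ v → ∀ y ∈ A, y ≠ v → l x ≠ l y → H.Adj x y → h0 y = 0 := by
    intro x hx hxv y hy hyv hxy hadj
    have : above H A v l y ⊆ {y} := by
      intro u hu
      rw [mem_above] at hu
      rcases fact x hx hxv x (by simp [hself x hx hxv]) y hy hadj u hu.2 with h | h | h
      · simp [h]
      · exact absurd h hu.1.1.1
      · exact absurd ((mem_above.mp h).1.2.symm.trans hu.1.2) hxy
    have := Finset.card_le_card this
    rw [hcard y hy hyv, Finset.card_singleton] at this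
    omega
  have hclique : ∀ x ∈ A, x ≠ v → ∀ y ∈ A, y ≠ v → x ≠ y → h0 x = 0 → h0 y = 0 →
      H.Adj x y := by
    intro x hx hxv y hy hyv hne hx0 hy0
    by_contra hadj
    obtain ⟨w, hw, hwx, hwy, hsep⟩ := hB x hx y hy hne hadj
    have h1 := hsep {v, x} (by intro w; simp; rintro (rfl | rfl) <;> assumption)
    have h2 : w ∈ insert y ({v, x} : Finset V) := hsep _
      (by intro w; simp; rintro (rfl | rfl | rfl) <;> assumption)
      (cn_insert (cn_pair ((hadjv x hx hxv).mpr hx0)) (x := v) (by simp)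
        ((hadjv y hy hyv).mpr hy0)) (by simp) (by simp)
    have hwv : w = v := by
      simp only [Finset.mem_insert, Finset.mem_singleton] at h2
      tauto
    rcases (mem_nonCut.mp hv).2 with h | h
    · rw [h] at hx
      exact hxv (by simpa using hx)
    · have := hsep _ (Finset.erase_subset v A) h (by simp [hx, hxv]) (by simp [hy, hyv])
      simp [hwv] at this
  refine ⟨fun x => if hx : x ∈ A ∧ x ≠ v then some ⟨l x, (hl x hx.1 hx.2).1⟩ else none,
    fun x => if x = v then 0 else h0 x, ⟨?_, ?_, ?_, ?_, ?_⟩, by simp, by simp⟩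
  · rintro (_ | z)
    · simp
    · have hz := z.2
      rw [Finset.mem_erase] at hz
      have hzA := (mem_nonCut.mp hz.2).1
      have := Dom.eq_of_nonCut hvA hz.2 hz.1
        (mem_nonCut.mp (Finset.mem_of_mem_erase (hl z.1 hzA hz.1).1)).1 (hl z.1 hzA hz.1).2
      exact Finset.card_pos.mpr ⟨z.1, mem_fib.mpr ⟨⟨hz.1, hzA⟩, this⟩⟩
  · intro x hx
    by_cases hxv : x = v
    · simp [hxv]
    · simp only [hx, hxv, ne_eq, not_false_eq_true, and_self, dif_pos, if_false, Option.elim_some]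
      have := Finset.card_le_card (Finset.filter_subset (fun u => Dom H A v u x) (fib A v l (l x)))
      have h2 := hcard x hx hxv
      unfold above at h2
      rw [h2] at this
      exact this
  · intro x hx y hy
    by_cases hxv : x = v <;> by_cases hyv : y = v <;> simp [hxv, hyv, hx, hy, hvA]
    exact hinj x hx hxv y hy hyv
  · rintro (_ | z) k hk
    · refine ⟨v, hvA, by simp, ?_⟩
      simp only [Option.elim_none] at hk
      simp; omega
    · have hmaps : Set.MapsTo h0 (fib A v l z.1) (Finset.range (fib A v l z.1).card) := by
        intro x hx
        rw [Finset.mem_coe, mem_fib] at hx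
        have := Finset.card_le_card
          (Finset.filter_subset (fun u => Dom H A v u x) (fib A v l (l x)))
        have h2 := hcard x hx.1.2 hx.1.1
        unfold above at h2
        rw [h2, hx.2] at this
        simpa using this
      have hio : Set.InjOn h0 (fib A v l z.1) := by
        intro x hx y hy hxy
        rw [Finset.mem_coe, mem_fib] at hx hy
        exact hinj x hx.1.2 hx.1.1 y hy.1.2 hy.1.1 (hx.2.trans hy.2.symm) hxy
      obtain ⟨x, hx, hxk⟩ := Finset.surjOn_of_injOn_of_card_le h0 hmaps hio (by simp)
        (a := k) (by simpa [fibCard] using hk)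
      rw [Finset.mem_coe, mem_fib] at hx
      exact ⟨x, hx.1.2, by simp [hx.1.1, hx.1.2, hx.2], by simp [hx.1.1, hxk]⟩
  · intro x hx y hy hne
    by_cases hxv : x = v
    · subst hxv
      simp [hne.symm, hy, hadjv y hy hne.symm]
    by_cases hyv : y = v
    · subst hyv
      simp [hne, hx, H.adj_comm x y, hadjv x hx hne]
    simp only [hx, hy, hxv, hyv, ne_eq, not_false_eq_true, and_self, dif_pos, if_false,
      Option.some.injEq, Subtype.mk.injEq]
    constructor
    · intro hadj
      by_cases hll : l x = l y
      · right
        refine ⟨hll, ?_⟩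
        rcases htot x hx hxv y hy hyv hll with hd | hd
        · exact Or.inl (hchain x hx hxv y hy hyv hll hne hd hadj)
        · exact Or.inr (hchain y hy hyv x hx hxv hll.symm hne.symm hd hadj.symm)
      · exact Or.inl ⟨hcross y hy hyv x hx hxv (Ne.symm hll) hadj.symm,
          hcross x hx hxv y hy hyv hll hadj⟩
    · rintro (⟨h1, h2⟩ | ⟨hll, h | h⟩)
      · exact hclique x hx hxv y hy hyv hne h1 h2
      · exact hsucc x hx hxv y hy hyv hll h
      · exact (hsucc y hy hyv x hx hxv hll.symm h).symm

end Rooted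

/-! ### Induction on the number of vertices -/

section Induction

open scoped Classical

universe u

variable {V : Type u} {H : SimpleGraph V} {A : Finset V}

/-- The separating vertex of two vertices in `A.erase y` is not `y`, because `A.erase y` is a connected
set containing both. -/
lemma CliqueBlocks.erase (hB : CliqueBlocks H A) {y : V} (hy : Cn H (A.erase y)) :
    CliqueBlocks H (A.erase y) := by
  intro a ha b hb hne hadj
  obtain ⟨w, hw, hwa, hwb, hsep⟩ := hB a (Finset.mem_of_mem_erase ha) b
    (Finset.mem_of_mem_erase hb) hne hadj
  exact ⟨w, hsep _ (Finset.erase_subset y A) hy ha hb, hwa, hwb,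
    fun S hS => hsep S (hS.trans (Finset.erase_subset y A))⟩

/-- Deleting a non-cut vertex `y` does not create new cut vertices. If `u` became one, `y` would have
neighbours `a` and `b` in different components of what is left; both `{a, y, b}` and `A.erase y` are
connected, so nothing could separate `a` from `b`. -/
lemma nonCut_erase_of_nonCut (hB : CliqueBlocks H A) {y u : V} (hyA : y ∈ A)
    (hy : Cn H (A.erase y)) (hu : u ∈ nonCut H A) (huy : u ≠ y) :
    u ∈ nonCut H (A.erase y) := by
  have huA := (mem_nonCut.mp hu).1
  refine mem_nonCut.mpr ⟨Finset.mem_erase.mpr ⟨huy, huA⟩, ?_⟩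
  by_cases h1 : A.erase y = {u}
  · exact Or.inl h1
  right
  have hu' : Cn H (A.erase u) := nonCut_erase_cn hyA hu huy
  set B := (A.erase y).erase u with hBdef
  have hBy : A.erase u = insert y B := by
    rw [hBdef, Finset.erase_right_comm, Finset.insert_erase]
    exact Finset.mem_erase.mpr ⟨huy.symm, hyA⟩
  have hyB : y ∉ B := by simp [hBdef]
  have hBA : B ⊆ A.erase y := Finset.erase_subset _ _
  refine ⟨?_, fun T hT hTne hTB => ?_⟩
  · rw [Finset.nonempty_iff_ne_empty]
    intro h
    rcases Finset.erase_eq_empty_iff _ _ |>.mp h with h | h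
    · exact hy.1.ne_empty h
    · exact h1 h
  by_contra hcon
  push Not at hcon
  -- a vertex set without boundary inside `B` must be attached to `y`
  have key : ∀ R ⊆ B, R.Nonempty → (∀ a ∈ R, ∀ b ∈ B, b ∉ R → ¬ H.Adj a b) →
      ∃ a ∈ R, H.Adj a y := by
    intro R hR hRne hno
    have hyR : y ∉ R := fun h => hyB (hR h)
    obtain ⟨a, ha, b, hb, hbR, hab⟩ := hu'.2 R
      (hBy ▸ hR.trans (Finset.subset_insert _ _)) hRne
      (fun h => hyR (by rw [h, hBy]; simp))
    rw [hBy] at hb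
    rcases Finset.mem_insert.mp hb with rfl | hb
    · exact ⟨a, ha, hab⟩
    · exact absurd hab (hno a ha b hb hbR)
  obtain ⟨a, ha, hay⟩ := key T hT hTne hcon
  obtain ⟨b, hb, hby⟩ := key (B \ T) Finset.sdiff_subset
    (by
      rw [Finset.sdiff_nonempty]
      exact fun h => hTB (Finset.Subset.antisymm hT h))
    (by
      intro b hb c hc hcn hbc
      rw [Finset.mem_sdiff] at hb
      have hcT : c ∈ T := by
        by_contra h
        exact hcn (Finset.mem_sdiff.mpr ⟨hc, h⟩)
      exact hcon c hcT b hb.1 hb.2 hbc.symm)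
  rw [Finset.mem_sdiff] at hb
  have haA := hBA (hT ha)
  have hbA := hBA hb.1
  obtain ⟨w, hw, hwa, hwb, hsep⟩ := hB a (Finset.mem_of_mem_erase haA) b
    (Finset.mem_of_mem_erase hbA) (fun h => hb.2 (h ▸ ha)) (hcon a ha b hb.1 hb.2)
  have h2 := hsep (insert b {a, y})
    (by
      intro z
      simp only [Finset.mem_insert, Finset.mem_singleton]
      rintro (rfl | rfl | rfl)
      · exact Finset.mem_of_mem_erase hbA
      · exact Finset.mem_of_mem_erase haA
      · exact hyA)
    (cn_insert (cn_pair hay) (x := y) (by simp) hby.symm) (by simp) (by simp)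
  have h3 := hsep _ (Finset.erase_subset y A) hy haA hbA
  simp only [Finset.mem_insert, Finset.mem_singleton, Finset.mem_erase] at h2 h3
  tauto

/-- If the deletion of `y` turns `w` into a non-cut vertex, then `w` is the only neighbour of `y`:
with another neighbour `z`, the vertex `y` could be put back into the connected set `A - y - w`. -/
lemma eq_of_new_nonCut {y w : V} (hyA : y ∈ A) (hw : w ∈ nonCut H (A.erase y))
    (hwA : w ∉ nonCut H A) {z : V} (hz : z ∈ A) (hyz : H.Adj y z) : z = w := by
  by_contra hzw
  obtain ⟨hwE, hw2⟩ := mem_nonCut.mp hw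
  rw [Finset.mem_erase] at hwE
  have hzy : z ∈ A.erase y := Finset.mem_erase.mpr ⟨hyz.ne', hz⟩
  rcases hw2 with h | h
  · rw [h] at hzy
    exact hzw (by simpa using hzy)
  · refine hwA (mem_nonCut.mpr ⟨hwE.2, Or.inr ?_⟩)
    have := cn_insert h (Finset.mem_erase.mpr ⟨hzw, hzy⟩) hyz.symm
    rwa [Finset.erase_right_comm, Finset.insert_erase
      (Finset.mem_erase.mpr ⟨hwE.1.symm, hyA⟩)] at this

lemma card_cnSets_eq (y : V) :
    (cnSets H A).card = (cnSets H (A.erase y)).card + (cnSetsAt H A y).card := by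
  rw [← Finset.card_filter_add_card_filter_not (s := cnSets H A) (fun S => y ∉ S)]
  congr 2
  · ext S
    simp only [Finset.mem_filter, mem_cnSets, Finset.subset_erase]
    tauto
  · ext S
    simp only [Finset.mem_filter, mem_cnSets, mem_cnSetsAt, not_not]
    tauto

/-- If `y` is a leaf with neighbour `w`, the connected sets through `y` are `{y}` and the sets obtained
by adding `y` to a connected set through `w` that avoids `y`. -/
lemma card_cnSetsAt_pendant {y w : V} (hyA : y ∈ A) (hw : w ∈ A) (hyw : H.Adj y w)
    (hpend : ∀ z ∈ A, H.Adj y z → z = w) :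
    (cnSetsAt H A y).card = (cnSetsAt H (A.erase y) w).card + 1 := by
  have h : cnSetsAt H A y = insert {y} ((cnSetsAt H (A.erase y) w).image (insert y)) := by
    ext S
    simp only [Finset.mem_insert, Finset.mem_image, mem_cnSetsAt, Finset.subset_erase]
    constructor
    · rintro ⟨hSA, hS, hyS⟩
      by_cases hS1 : S = {y}
      · exact Or.inl hS1
      right
      obtain ⟨x, hx, hxy⟩ : ∃ x ∈ S, x ≠ y := by
        by_contra hcon
        push Not at hcon
        exact hS1 (Finset.eq_singleton_iff_unique_mem.mpr ⟨hyS, hcon⟩)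
      obtain ⟨z, hz, hzy, hadj⟩ := hS.exists_adj hyS hx hxy
      have hzw := hpend z (hSA hz) hadj
      subst hzw
      refine ⟨S.erase y, ⟨⟨(Finset.erase_subset _ _).trans hSA, by simp⟩, ?_,
        Finset.mem_erase.mpr ⟨hzy, hz⟩⟩, Finset.insert_erase hyS⟩
      refine ⟨⟨z, Finset.mem_erase.mpr ⟨hzy, hz⟩⟩, fun T hT hTne hTS => ?_⟩
      have hTS' : T ⊆ S := hT.trans (Finset.erase_subset _ _)
      have hyT : y ∉ T := fun h => by simpa using hT h
      by_cases hzT : z ∈ T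
      · obtain ⟨a, ha, b, hb, hbT, hab⟩ := hS.2 (insert y T)
          (Finset.insert_subset hyS hTS') (by simp)
          (fun h => hTS (by rw [← h, Finset.erase_insert hyT]))
        simp only [Finset.mem_insert, not_or] at ha hbT
        rcases ha with rfl | ha
        · exact absurd (hpend b (hSA hb) hab ▸ hzT) hbT.2
        · exact ⟨a, ha, b, Finset.mem_erase.mpr ⟨hbT.1, hb⟩, hbT.2, hab⟩
      · obtain ⟨a, ha, b, hb, hbT, hab⟩ := hS.2 T hTS' hTne (fun h => hyT (h ▸ hyS))
        refine ⟨a, ha, b, Finset.mem_erase.mpr ⟨?_, hb⟩, hbT, hab⟩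
        rintro rfl
        exact hzT (hpend a (hSA (hTS' ha)) hab.symm ▸ ha)
    · rintro (rfl | ⟨S', ⟨⟨hS'A, hy⟩, hS', hw'⟩, rfl⟩)
      · exact ⟨by simpa, cn_singleton y, by simp⟩
      · exact ⟨Finset.insert_subset hyA hS'A, cn_insert hS' hw' hyw.symm, by simp⟩
  rw [h, Finset.card_insert_of_notMem, Finset.card_image_of_injOn]
  · intro S hS S' hS' hSS
    rw [Finset.mem_coe, mem_cnSetsAt, Finset.subset_erase] at hS hS'
    rw [← Finset.erase_insert hS.1.2, ← Finset.erase_insert hS'.1.2]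
    exact congrArg (fun T => T.erase y) hSS
  · intro hmem
    obtain ⟨S, hS, hSy⟩ := Finset.mem_image.mp hmem
    rw [mem_cnSetsAt] at hS
    have : w ∈ ({y} : Finset V) := hSy ▸ Finset.mem_insert_of_mem hS.2.2
    exact hyw.ne' (by simpa using this)

lemma exists_mem_nonCut (hA : Cn H A) : ∃ y, y ∈ nonCut H A := by
  obtain ⟨v, hv⟩ := hA.1
  by_cases h : A = {v}
  · exact ⟨v, mem_nonCut.mpr ⟨hv, Or.inl h⟩⟩
  · obtain ⟨x, hx, hxv⟩ : ∃ x ∈ A, x ≠ v := by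
      by_contra hcon
      push Not at hcon
      exact h (Finset.eq_singleton_iff_unique_mem.mpr ⟨hv, hcon⟩)
    obtain ⟨y, hy, -, hc⟩ := hA.exists_erase hv hx hxv
    exact ⟨y, mem_nonCut.mpr ⟨hy, Or.inr hc⟩⟩

/-- Attaching a leaf `y` at the tip `w` of a leg lengthens this leg by one. -/
lemma Spider.extend {ι : Type*} {f : ι → ℕ} {leg : V → ι} {h : V → ℕ} {y w : V}
    (hs : Spider H (A.erase y) f leg h) (hyA : y ∈ A) (hw : w ∈ A.erase y)
    (hyw : H.Adj y w) (hpend : ∀ z ∈ A, H.Adj y z → z = w) (htip : h w + 1 = f (leg w)) :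
    Spider H A (Function.update f (leg w) (f (leg w) + 1)) (Function.update leg y (leg w))
      (Function.update h y (h w + 1)) := by
  have hadj : ∀ x ∈ A, x ≠ y → (H.Adj x y ↔ (h x = 0 ∧ h w + 1 = 0) ∨
      (leg x = leg w ∧ (h w + 1 = h x + 1 ∨ h x = h w + 1 + 1))) := by
    intro x hx hxy
    have hx' := Finset.mem_erase.mpr ⟨hxy, hx⟩
    constructor
    · intro h
      have := hpend x hx h.symm
      subst this
      right
      simp
    · rintro (⟨-, h0⟩ | ⟨h1, h2 | h2⟩)
      · omega
      · rw [hs.inj x hx' w hw h1 (by omega)]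
        exact hyw.symm
      · have := hs.lt x hx'
        rw [h1] at this
        omega
  refine ⟨?_, ?_, ?_, ?_, ?_⟩
  · intro i
    by_cases hi : i = leg w
    · subst hi
      simp
    · simpa [hi] using hs.pos i
  · intro x hx
    by_cases hxy : x = y
    · subst hxy
      simp [htip]
    · have := hs.lt x (Finset.mem_erase.mpr ⟨hxy, hx⟩)
      by_cases hxw : leg x = leg w
      · simp only [Function.update_of_ne hxy, hxw, Function.update_self]
        rw [hxw] at this
        omega
      · simpa [hxy, hxw] using this
  · intro x hx z hz hl hh
    by_cases hxy : x = y <;> by_cases hzy : z = y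
    · rw [hxy, hzy]
    · subst hxy
      have := hs.lt z (Finset.mem_erase.mpr ⟨hzy, hz⟩)
      simp only [Function.update_self, Function.update_of_ne hzy] at hl hh
      rw [← hl] at this
      omega
    · subst hzy
      have := hs.lt x (Finset.mem_erase.mpr ⟨hxy, hx⟩)
      simp only [Function.update_self, Function.update_of_ne hxy] at hl hh
      rw [hl] at this
      omega
    · simp only [Function.update_of_ne hxy, Function.update_of_ne hzy] at hl hh
      exact hs.inj x (Finset.mem_erase.mpr ⟨hxy, hx⟩) z (Finset.mem_erase.mpr ⟨hzy, hz⟩) hl hh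
  · intro i k hk
    have hold : k < f i → ∃ x ∈ A, Function.update leg y (leg w) x = i ∧
        Function.update h y (h w + 1) x = k := by
      intro hk'
      obtain ⟨x, hx, hxi, hxk⟩ := hs.surj i k hk'
      rw [Finset.mem_erase] at hx
      exact ⟨x, hx.2, by simpa [hx.1], by simpa [hx.1]⟩
    by_cases hi : i = leg w
    · subst hi
      simp only [Function.update_self] at hk
      by_cases hk' : k < f (leg w)
      · exact hold hk'
      · exact ⟨y, hyA, by simp, by simp; omega⟩
    · rw [Function.update_of_ne hi] at hk
      exact hold hk
  · intro x hx z hz hne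
    by_cases hxy : x = y
    · subst hxy
      simp only [Function.update_self, Function.update_of_ne hne.symm]
      rw [H.adj_comm, hadj z hz hne.symm]
      tauto
    by_cases hzy : z = y
    · subst hzy
      simp only [Function.update_self, Function.update_of_ne hxy]
      exact hadj x hx hxy
    simp only [Function.update_of_ne hxy, Function.update_of_ne hzy]
    exact hs.adj x (Finset.mem_erase.mpr ⟨hxy, hx⟩) z (Finset.mem_erase.mpr ⟨hzy, hz⟩) hne

/-- `A` is a spider with `q` legs in which `y` is the tip of its leg, and lengthening this leg by `p`
vertices gives leg lengths whose value is that of balanced lengths. -/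
def TightSpider (H : SimpleGraph V) (A : Finset V) (y : V) (p q : ℕ) : Prop :=
  ∃ (ι : Type u) (_ : Fintype ι) (f : ι → ℕ) (leg : V → ι) (h : V → ℕ),
    Fintype.card ι = q ∧ Spider H A f leg h ∧ h y + 1 = f (leg y) ∧
    ∑ i, Function.update f (leg y) (f (leg y) + p) i = A.card + p ∧
    legSum (Function.update f (leg y) (f (leg y) + p)) +
      legProd (Function.update f (leg y) (f (leg y) + p)) =
      balSum q (A.card + p) + balProd q (A.card + p)

/-- The bound for the graph obtained from `A` by attaching a path with `p` new vertices at the non-cut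
vertex `y`, together with the shape of `A` in the case of equality. The attached path is not part of
the graph: besides the connected subsets of `A`, it contributes `C(p + 1, 2)` subpaths and, for each
connected subset of `A` through `y`, its `p` prolongations into the path. -/
theorem main_bound (m : ℕ) : ∀ A : Finset V, A.card = m → Cn H A → CliqueBlocks H A →
    ∀ y ∈ nonCut H A, ∀ p q : ℕ, (nonCut H A).card = q →
    (cnSets H A).card + (p + 1).choose 2 + p * (cnSetsAt H A y).card + 1 ≤
      balSum q (m + p) + balProd q (m + p) ∧
    ((cnSets H A).card + (p + 1).choose 2 + p * (cnSetsAt H A y).card + 1 =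
      balSum q (m + p) + balProd q (m + p) → TightSpider H A y p q) := by
  induction m with
  | zero =>
    intro A hA hc
    exact absurd hc.1 (by simp [Finset.card_eq_zero.mp hA])
  | succ m ih =>
    intro A hAm hA hB y hy p q hq
    have hyA := (mem_nonCut.mp hy).1
    rcases (mem_nonCut.mp hy).2 with hAy | hA'
    · subst hAy
      have h1 : nonCut H {y} = {y} := by
        ext z
        simp [mem_nonCut]
        rintro rfl; exact Or.inl rfl
      have h2 : cnSetsAt H {y} y = {{y}} := by
        ext S
        simp only [mem_cnSetsAt, Finset.mem_singleton, Finset.subset_singleton_iff]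
        constructor
        · rintro ⟨rfl | rfl, -, h⟩
          · simp at h
          · rfl
        · rintro rfl
          exact ⟨Or.inr rfl, cn_singleton y, by simp⟩
      have h3 : cnSets H {y} = {{y}} := by
        ext S
        simp only [mem_cnSets, Finset.mem_singleton, Finset.subset_singleton_iff]
        constructor
        · rintro ⟨rfl | rfl, h⟩
          · exact absurd h.1 (by simp)
          · rfl
        · rintro rfl
          exact ⟨Or.inr rfl, cn_singleton y⟩
      rw [h1, Finset.card_singleton] at hq
      rw [Finset.card_singleton] at hAm
      subst hq
      obtain rfl : m = 0 := by omega
      have hb : balSum 1 (0 + 1 + p) + balProd 1 (0 + 1 + p) = (p + 1).choose 2 + (p + 2) := by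
        simp only [balSum, balProd, Nat.mod_one, Nat.div_one]
        rw [show 0 + 1 + p = p + 1 by ring]
        ring_nf
      rw [hb, h2, h3]
      simp only [Finset.card_singleton]
      refine ⟨by omega, fun _ => ?_⟩
      refine ⟨PUnit, inferInstance, fun _ => 1, fun _ => PUnit.unit, fun _ => 0, by simp, ?_, rfl,
        by simp, ?_⟩
      · refine ⟨fun _ => le_rfl, fun _ _ => by simp, ?_, ?_, ?_⟩
        · intro a ha b hb _ _
          rw [Finset.mem_singleton] at ha hb
          rw [ha, hb]
        · intro i k hk
          exact ⟨y, by simp, rfl, by omega⟩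
        · intro a ha b hb hne
          rw [Finset.mem_singleton] at ha hb
          exact absurd (ha.trans hb.symm) hne
      · rw [Finset.card_singleton, show 1 + p = 0 + 1 + p by ring, hb]
        simp [legSum, legProd]
        ring_nf
    have hA'm : (A.erase y).card = m := by
      rw [Finset.card_erase_of_mem hyA]
      omega
    have hB' := hB.erase hA'
    have hN := card_cnSets_eq (H := H) (A := A) y
    -- either `y` is a leaf whose deletion uncovers `w`, or the non-cut vertices just lose `y`
    by_cases hnew : ∃ w ∈ nonCut H (A.erase y), w ∉ nonCut H A
    · obtain ⟨w, hw, hwA⟩ := hnew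
      have hwE := (mem_nonCut.mp hw).1
      have hpend : ∀ z ∈ A, H.Adj y z → z = w := fun z hz hyz =>
        eq_of_new_nonCut hyA hw hwA hz hyz
      have hyw : H.Adj y w := by
        obtain ⟨z, hz, -, hyz⟩ := hA.exists_adj hyA (Finset.mem_of_mem_erase hwE)
          (Finset.ne_of_mem_erase hwE)
        rwa [← hpend z hz hyz]
      have hL : nonCut H (A.erase y) = insert w ((nonCut H A).erase y) := by
        ext u
        rw [Finset.mem_insert, Finset.mem_erase]
        constructor
        · intro hu
          by_cases huA : u ∈ nonCut H A
          · exact Or.inr ⟨Finset.ne_of_mem_erase (mem_nonCut.mp hu).1, huA⟩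
          · exact Or.inl (eq_of_new_nonCut hyA hu huA (Finset.mem_of_mem_erase hwE) hyw).symm
        · rintro (rfl | ⟨huy, hu⟩)
          · exact hw
          · exact nonCut_erase_of_nonCut hB hyA hA' hu huy
      have hq' : (nonCut H (A.erase y)).card = q := by
        rw [hL, Finset.card_insert_of_notMem (fun h => hwA (Finset.mem_of_mem_erase h)),
          Finset.card_erase_of_mem hy, hq]
        have : 0 < (nonCut H A).card := Finset.card_pos.mpr ⟨y, hy⟩
        omega
      have hNy := card_cnSetsAt_pendant hyA (Finset.mem_of_mem_erase hwE) hyw hpend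
      obtain ⟨i1, i2⟩ := ih (A.erase y) hA'm hA' hB' w hw (p + 1) q hq'
      have hval : (cnSets H A).card + (p + 1).choose 2 + p * (cnSetsAt H A y).card + 1 =
          (cnSets H (A.erase y)).card + (p + 1 + 1).choose 2 +
            (p + 1) * (cnSetsAt H (A.erase y) w).card + 1 := by
        rw [hN, hNy, Nat.choose_succ_succ' (p + 1) 1, Nat.choose_one_right]
        ring
      rw [hval, show m + 1 + p = m + (p + 1) by ring]
      refine ⟨i1, fun heq => ?_⟩
      obtain ⟨ι, hι, f, leg, h, hcard, hs, htip, hsum, hb⟩ := i2 heq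
      refine ⟨ι, hι, _, _, _, hcard, hs.extend hyA hwE hyw hpend htip, ?_, ?_, ?_⟩
      · simp [htip]
      · rw [hA'm] at hsum
        rw [hAm]
        simp only [Function.update_self, Function.update_idem]
        rw [show f (leg w) + 1 + p = f (leg w) + (p + 1) by ring, hsum]
        ring
      · rw [hA'm] at hb
        rw [hAm]
        simp only [Function.update_self, Function.update_idem]
        rw [show f (leg w) + 1 + p = f (leg w) + (p + 1) by ring, hb,
          show m + 1 + p = m + (p + 1) by ring]
    · push Not at hnew
      have hL : nonCut H (A.erase y) = (nonCut H A).erase y := by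
        ext u
        rw [Finset.mem_erase]
        exact ⟨fun hu => ⟨Finset.ne_of_mem_erase (mem_nonCut.mp hu).1, hnew u hu⟩,
          fun hu => nonCut_erase_of_nonCut hB hyA hA' hu.2 hu.1⟩
      obtain ⟨y', hy'⟩ := exists_mem_nonCut hA'
      obtain ⟨k, rfl⟩ : ∃ k, q = k + 1 := by
        have : 0 < (nonCut H A).card := Finset.card_pos.mpr ⟨y, hy⟩
        exact ⟨q - 1, by omega⟩
      have hk : (nonCut H (A.erase y)).card = k := by
        rw [hL, Finset.card_erase_of_mem hy, hq, Nat.add_sub_cancel]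
      have hk0 : 0 < k := by
        rw [← hk]
        exact Finset.card_pos.mpr ⟨y', hy'⟩
      obtain ⟨i1, -⟩ := ih (A.erase y) hA'm hA' hB' y' hy' 0 k hk
      simp only [zero_add, zero_mul, add_zero] at i1
      rw [Nat.choose_eq_zero_of_lt (by norm_num : 1 < 2), add_zero] at i1
      obtain ⟨l, hl⟩ := exists_leafMap hA hyA
      have hR := cnSetsAt_card_le hA hl
      have hι : Fintype.card ((nonCut H A).erase y : Finset V) = k := by
        rw [Fintype.card_coe, ← hL, hk]
      have hfs : ∑ z, fibCard H A y l z = m := by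
        rw [fibCard_sum hl hyA, hAm, Nat.add_sub_cancel]
      obtain ⟨o1, o2, -, -⟩ := balanced_optimal hι hk0 _ hfs
      obtain ⟨c1, c2⟩ := (canonLegs_balanced k m).values (Fintype.card_fin k) hk0
        (canonLegs_sum hk0 m)
      -- the optimal legs for `A.erase y` together with a leg of length `p + 1`
      obtain ⟨-, -, g1, -⟩ := balanced_optimal (n := m + 1 + p) (Fintype.card_fin (k + 1))
        (Nat.succ_pos k) (Fin.cons (p + 1) (canonLegs k m) : Fin (k + 1) → ℕ)
        (by rw [Fin.sum_univ_succ]; simp [canonLegs_sum hk0 m]; ring)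
      have g2 : legSum (Fin.cons (p + 1) (canonLegs k m) : Fin (k + 1) → ℕ) =
          (p + 1).choose 2 + balSum k m := by
        rw [← c1]; unfold legSum; rw [Fin.sum_univ_succ]; simp
      have g3 : legProd (Fin.cons (p + 1) (canonLegs k m) : Fin (k + 1) → ℕ) =
          (p + 2) * balProd k m := by
        rw [← c2]; unfold legProd; rw [Fin.prod_univ_succ]; simp
      rw [g2, g3] at g1
      have hmul : (p + 1) * (cnSetsAt H A y).card ≤ (p + 1) * balProd k m :=
        Nat.mul_le_mul_left _ (hR.trans o1)
      have e1 : (p + 1) * (cnSetsAt H A y).card =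
          p * (cnSetsAt H A y).card + (cnSetsAt H A y).card := by ring
      have e2 : (p + 2) * balProd k m = (p + 1) * balProd k m + balProd k m := by ring
      rw [hN]
      refine ⟨by omega, fun heq => ?_⟩
      have hmul' : (p + 1) * (cnSetsAt H A y).card = (p + 1) * balProd k m := by omega
      have hNy := Nat.eq_of_mul_eq_mul_left (Nat.succ_pos p) hmul'
      have hP : legProd (fibCard H A y l) = balProd k m := by omega
      obtain ⟨v1, v2⟩ := (o2 hP).values hι hk0 hfs
      obtain ⟨leg, h, hs, hleg, hh⟩ := spider_of_card_eq hA hB hy hl (hNy.trans hP.symm)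
      have hup : ∀ d : DecidableEq (Option ((nonCut H A).erase y : Finset V)),
          @Function.update _ _ d
            (fun o : Option ((nonCut H A).erase y : Finset V) => o.elim 1 (fibCard H A y l))
            none (1 + p) = fun o => o.elim (1 + p) (fibCard H A y l) := by
        intro d
        funext o
        cases o <;> simp
      refine ⟨_, inferInstance, _, leg, h, ?_, hs, ?_, ?_, ?_⟩
      · rw [Fintype.card_option, hι]
      · rw [hleg, hh]; rfl
      · rw [hleg, Option.elim_none, hup, Fintype.sum_option]
        simp only [Option.elim_none, Option.elim_some]
        rw [hfs, hAm]
        ring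
      · rw [hleg, Option.elim_none, hup, hAm]
        have s1 : legSum (fun o : Option ((nonCut H A).erase y : Finset V) =>
            o.elim (1 + p) (fibCard H A y l)) = (p + 1).choose 2 + balSum k m := by
          rw [← v1]; unfold legSum; rw [Fintype.sum_option]; simp [add_comm]
        have s2 : legProd (fun o : Option ((nonCut H A).erase y : Finset V) =>
            o.elim (1 + p) (fibCard H A y l)) = (p + 2) * balProd k m := by
          rw [← v2]; unfold legProd; rw [Fintype.prod_option]
          change (1 + p + 1) * ∏ i, (fibCard H A y l i + 1) = _
          ring
        rw [s1, s2]
        omega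

end Induction

/-! ### Edge-maximal graphs -/

section Maximal

open scoped Classical

universe u

variable {V : Type u} {H K : SimpleGraph V} {A : Finset V}

lemma Cn.mono (h : H ≤ K) {S : Finset V} (hS : Cn H S) : Cn K S := by
  refine ⟨hS.1, fun T hT hne hTS => ?_⟩
  obtain ⟨a, ha, b, hb, hbT, hab⟩ := hS.2 T hT hne hTS
  exact ⟨a, ha, b, hb, hbT, h hab⟩

lemma nonCut_mono (h : H ≤ K) : nonCut H A ⊆ nonCut K A := by
  intro y hy
  rw [mem_nonCut] at hy ⊢
  exact ⟨hy.1, hy.2.imp id (Cn.mono h)⟩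

/-- Adding an edge `xy` only creates new connected sets containing both endpoints. -/
lemma cn_of_cn_sup_edge {x y : V} {S : Finset V} (hS : Cn (H ⊔ SimpleGraph.edge x y) S)
    (hxy : ¬ (x ∈ S ∧ y ∈ S)) : Cn H S := by
  refine ⟨hS.1, fun T hT hne hTS => ?_⟩
  obtain ⟨a, ha, b, hb, hbT, hab⟩ := hS.2 T hT hne hTS
  refine ⟨a, ha, b, hb, hbT, ?_⟩
  rw [SimpleGraph.sup_adj, SimpleGraph.edge_adj] at hab
  rcases hab with hab | ⟨⟨rfl, rfl⟩ | ⟨rfl, rfl⟩, -⟩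
  · exact hab
  · exact absurd ⟨hT ha, hb⟩ hxy
  · exact absurd ⟨hb, hT ha⟩ hxy

/-- If an `H`-connected subset of `S` already contains both ends of the new edge, then `S` was
connected before the edge was added. -/
lemma cn_of_cn_sup_edge_of_subset {x y : V} {S P : Finset V}
    (hS : Cn (H ⊔ SimpleGraph.edge x y) S) (hP : Cn H P) (hPS : P ⊆ S) (hx : x ∈ P)
    (hy : y ∈ P) : Cn H S := by
  refine ⟨hS.1, fun T hT hne hTS => ?_⟩
  by_cases hsplit : (x ∈ T ↔ y ∈ T)
  · obtain ⟨a, ha, b, hb, hbT, hab⟩ := hS.2 T hT hne hTS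
    refine ⟨a, ha, b, hb, hbT, ?_⟩
    rw [SimpleGraph.sup_adj, SimpleGraph.edge_adj] at hab
    rcases hab with hab | ⟨⟨rfl, rfl⟩ | ⟨rfl, rfl⟩, -⟩
    · exact hab
    · exact absurd (hsplit.mp ha) hbT
    · exact absurd (hsplit.mpr ha) hbT
  · have h1 : (P ∩ T).Nonempty := by
      by_cases hxT : x ∈ T
      · exact ⟨x, Finset.mem_inter.mpr ⟨hx, hxT⟩⟩
      · refine ⟨y, Finset.mem_inter.mpr ⟨hy, ?_⟩⟩
        tauto
    have h2 : P ∩ T ≠ P := by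
      intro h
      have := Finset.inter_eq_left.mp h
      exact hsplit ⟨fun _ => this hy, fun _ => this hx⟩
    obtain ⟨a, ha, b, hb, hbT, hab⟩ := hP.2 (P ∩ T) Finset.inter_subset_left h1 h2
    exact ⟨a, (Finset.mem_inter.mp ha).2, b, hPS hb,
      fun h => hbT (Finset.mem_inter.mpr ⟨hb, h⟩), hab⟩

lemma card_cnSets_mono (h : H ≤ K) : (cnSets H A).card ≤ (cnSets K A).card :=
  Finset.card_le_card fun S hS => by
    rw [mem_cnSets] at hS ⊢
    exact ⟨hS.1, hS.2.mono h⟩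

variable [Fintype V]

/-- Every graph extends to one with the same non-cut vertices in which nonadjacent
vertices are always separated by a third vertex. -/
lemma exists_cliqueBlocks (H : SimpleGraph V) : ∃ K : SimpleGraph V, H ≤ K ∧
    nonCut K Finset.univ = nonCut H Finset.univ ∧ CliqueBlocks K Finset.univ := by
  -- adding an edge to a maximal `K` turns some cut vertex `w` into a non-cut vertex
  obtain ⟨K, hHK, hmax⟩ := Set.Finite.exists_le_maximal
    (s := {K : SimpleGraph V | H ≤ K ∧ nonCut K Finset.univ = nonCut H Finset.univ})
    (Set.toFinite _) (a := H) ⟨le_rfl, rfl⟩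
  refine ⟨K, hHK, hmax.prop.2, ?_⟩
  intro x _ y _ hxy hadj
  have hnot : ¬ nonCut (K ⊔ SimpleGraph.edge x y) Finset.univ = nonCut K Finset.univ := by
    intro h
    have hle := hmax.le_of_ge (y := K ⊔ SimpleGraph.edge x y)
      ⟨hHK.trans le_sup_left, h.trans hmax.prop.2⟩ le_sup_left
    apply hadj
    apply hle
    rw [SimpleGraph.sup_adj, SimpleGraph.edge_adj]
    exact Or.inr ⟨Or.inl ⟨rfl, rfl⟩, hxy⟩
  obtain ⟨w, hw, hwK⟩ : ∃ w ∈ nonCut (K ⊔ SimpleGraph.edge x y) Finset.univ,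
      w ∉ nonCut K Finset.univ := by
    by_contra! hcon
    exact hnot (Finset.Subset.antisymm hcon (nonCut_mono le_sup_left))
  rw [mem_nonCut] at hw hwK
  push Not at hwK
  obtain ⟨hw1, hw2⟩ := hwK (Finset.mem_univ _)
  have hw3 := hw.2.resolve_left hw1
  have hmem : x ∈ Finset.univ.erase w ∧ y ∈ Finset.univ.erase w := by
    by_contra h
    exact hw2 (cn_of_cn_sup_edge hw3 h)
  refine ⟨w, Finset.mem_univ _, (Finset.ne_of_mem_erase hmem.1).symm,
    (Finset.ne_of_mem_erase hmem.2).symm, fun S _ hS hxS hyS => ?_⟩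
  by_contra hwS
  exact hw2 (cn_of_cn_sup_edge_of_subset hw3 hS
    (fun z hz => Finset.mem_erase.mpr ⟨fun h => hwS (h ▸ hz), Finset.mem_univ _⟩) hxS hyS)

/-- A new edge is a new connected set with two vertices, so equal counts force equal graphs. -/
lemma eq_of_card_cnSets_eq (h : H ≤ K)
    (hc : (cnSets H Finset.univ).card = (cnSets K Finset.univ).card) : H = K := by
  have hsub : cnSets H Finset.univ ⊆ cnSets K Finset.univ := fun S hS => by
    rw [mem_cnSets] at hS ⊢
    exact ⟨hS.1, hS.2.mono h⟩
  have heq := Finset.eq_of_subset_of_card_le hsub hc.ge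
  refine le_antisymm h fun x y hxy => ?_
  have h1 : ({x, y} : Finset V) ∈ cnSets H Finset.univ := by
    rw [heq, mem_cnSets]
    exact ⟨Finset.subset_univ _, cn_pair hxy⟩
  obtain ⟨a, ha, b, hb, hba, hab⟩ := (mem_cnSets.mp h1).2.2 {x} (by simp) (by simp) (by
    intro h
    have : y ∈ ({x} : Finset V) := by rw [h]; simp
    exact hxy.ne (Finset.mem_singleton.mp this).symm)
  rw [Finset.mem_singleton] at ha hba
  subst ha
  rcases Finset.mem_insert.mp hb with rfl | hb
  · exact absurd rfl hba
  · rwa [Finset.mem_singleton.mp hb] at hab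

/-- Upper bound for a connected graph with `q` non-cut vertices, and the structure of the graphs
attaining it. -/
theorem card_cnSets_bound (hH : Cn H Finset.univ) {n q : ℕ} (hn : Fintype.card V = n)
    (hq : (nonCut H Finset.univ).card = q) :
    (cnSets H Finset.univ).card + 1 ≤ balSum q n + balProd q n ∧
    ((cnSets H Finset.univ).card + 1 = balSum q n + balProd q n →
      ∃ (ι : Type u) (_ : Fintype ι) (f : ι → ℕ) (leg : V → ι) (h : V → ℕ),
        Fintype.card ι = q ∧ Spider H Finset.univ f leg h ∧ ∑ i, f i = n ∧
        legSum f + legProd f = balSum q n + balProd q n) := by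
  obtain ⟨K, hHK, hnc, hB⟩ := exists_cliqueBlocks H
  have hK := hH.mono hHK
  obtain ⟨y, hy⟩ := exists_mem_nonCut hK
  have hmono := card_cnSets_mono (A := Finset.univ) hHK
  obtain ⟨b1, b2⟩ := main_bound n Finset.univ (by rw [Finset.card_univ, hn]) hK hB y hy 0 q
    (by rw [hnc, hq])
  simp only [zero_add, zero_mul, add_zero, Nat.choose_eq_zero_of_lt (by norm_num : 1 < 2)]
    at b1 b2
  refine ⟨by omega, fun heq => ?_⟩
  obtain rfl : H = K := eq_of_card_cnSets_eq hHK (by omega)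
  obtain ⟨ι, hι, f, leg, h, hcard, hs, -, hsum, hv⟩ := b2 heq
  simp only [add_zero, Function.update_eq_self, Finset.card_univ, hn] at hsum hv
  exact ⟨ι, hι, f, leg, h, hcard, hs, hsum, hv⟩

end Maximal

/-! ### Cut vertices and connected induced subgraphs -/

section Bridge

open scoped Classical

variable {V : Type*} [Fintype V] {H : SimpleGraph V}

lemma numCIS_eq_card_cnSets (H : SimpleGraph V) :
    numCIS H = (cnSets H Finset.univ).card := by
  rw [numCIS, ← Nat.card_eq_finsetCard]
  refine (Nat.card_congr (Equiv.subtypeEquiv Fintype.finsetEquivSet fun S => ?_)).symm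
  rw [mem_cnSets, cn_iff_induce, Set.mem_ofPred_eq, Fintype.coe_finsetEquivSet]
  constructor
  · rintro ⟨-, h⟩
    obtain ⟨x, hx⟩ := h.nonempty
    exact ⟨⟨x, hx⟩, h⟩
  · exact fun h => ⟨Finset.subset_univ _, h.2⟩

lemma cn_univ (hH : H.Connected) : Cn H Finset.univ := by
  rw [cn_iff_induce, Finset.coe_univ]
  exact (SimpleGraph.induceUnivIso H).connected_iff.mpr hH

lemma isCutVertex_iff_s7 (hH : H.Connected) (hV : 1 < Fintype.card V) (v : V) :
    IsCutVertex H v ↔ v ∉ nonCut H Finset.univ := by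
  have h1 : Nat.card H.ConnectedComponent = 1 := by
    rw [Nat.card_eq_one_iff_unique]
    exact ⟨hH.preconnected.subsingleton_connectedComponent, ⟨H.connectedComponentMk v⟩⟩
  obtain ⟨u, hu⟩ := Fintype.exists_ne_of_one_lt_card hV v
  have hne : Nonempty {u | u ≠ v} := ⟨⟨u, hu⟩⟩
  have hset : ((Finset.univ.erase v : Finset V) : Set V) = {u | u ≠ v} := by
    ext; simp
  rw [IsCutVertex, h1, mem_nonCut, cn_iff_induce, hset]
  have h2 : (Finset.univ : Finset V) ≠ {v} := fun h => by
    have : u ∈ ({v} : Finset V) := h ▸ Finset.mem_univ u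
    exact hu (Finset.mem_singleton.mp this)
  simp only [Finset.mem_univ, h2, false_or, true_and]
  rw [SimpleGraph.connected_iff, and_iff_left hne, ← not_le, not_iff_not,
    Finite.card_le_one_iff_subsingleton]
  constructor
  · intro h a b
    exact SimpleGraph.ConnectedComponent.exact (h.elim _ _)
  · intro h
    exact h.subsingleton_connectedComponent

lemma card_nonCut (hH : H.Connected) (hV : 1 < Fintype.card V) :
    (nonCut H Finset.univ).card = Fintype.card V - numCutVertices H := by
  have : numCutVertices H = (nonCut H Finset.univ)ᶜ.card := by
    refine Nat.subtype_card _ fun v => ?_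
    rw [Finset.mem_compl, Set.mem_ofPred_eq, isCutVertex_iff_s7 hH hV]
  rw [this, Finset.card_compl]
  have := Finset.card_le_univ (nonCut H Finset.univ)
  omega

lemma numCIS_congr {V W : Type*} {H : SimpleGraph V} {K : SimpleGraph W} (e : H ≃g K) :
    numCIS H = numCIS K := by
  refine Nat.card_congr (Equiv.subtypeEquiv (Equiv.Set.congr e.toEquiv) fun S => ?_)
  refine and_congr ?_ (e.induce ?_).connected_iff
  · exact (Set.image_nonempty (f := e)).symm
  · exact e.injective.injOn.bijOn_image

end Bridge

/-! ### Spiders and spider cliques -/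

section Extremal

open scoped Classical

variable {V ι κ : Type*} {H : SimpleGraph V}

/-- Two balanced families of lengths with the same size and total agree up to a bijection of the
indices. -/
lemma exists_equiv_of_balanced [Fintype ι] [Fintype κ] {f : ι → ℕ} {g : κ → ℕ} {q n : ℕ}
    (hq0 : 0 < q) (hι : Fintype.card ι = q) (hκ : Fintype.card κ = q) (hf : LegBalanced f)
    (hg : LegBalanced g) (hfn : ∑ i, f i = n) (hgn : ∑ i, g i = n) :
    ∃ e : ι ≃ κ, ∀ i, g (e i) = f i := by
  obtain ⟨f1, f2⟩ := hf.exists_eq_ite hι hq0 hfn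
  obtain ⟨g1, g2⟩ := hg.exists_eq_ite hκ hq0 hgn
  have h1 : Fintype.card {i // f i = n / q + 1} = Fintype.card {i // g i = n / q + 1} := by
    rw [Fintype.card_subtype, Fintype.card_subtype, f2, g2]
  have h2 : Fintype.card {i // ¬ f i = n / q + 1} = Fintype.card {i // ¬ g i = n / q + 1} := by
    rw [Fintype.card_subtype_compl, Fintype.card_subtype_compl, h1, hι, hκ]
  let e1 := Fintype.equivOfCardEq h1
  let e2 := Fintype.equivOfCardEq h2
  refine ⟨(Equiv.sumCompl _).symm.trans ((Equiv.sumCongr e1 e2).trans (Equiv.sumCompl _)),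
    fun i => ?_⟩
  by_cases hi : f i = n / q + 1
  · have := (e1 ⟨i, hi⟩).2
    simp [this, hi]
  · have h3 := (e2 ⟨i, hi⟩).2
    have h4 := f1 i
    have h5 := g1 (e2 ⟨i, hi⟩)
    rw [if_neg hi] at h4
    rw [if_neg h3] at h5
    simp [h4, h5]

lemma spiderClique_adj {q : ℕ} {g : Fin q → ℕ} (a b : (j : Fin q) × Fin (g j)) :
    (spiderClique q g).Adj a b ↔ a ≠ b ∧ ((a.2.val = 0 ∧ b.2.val = 0) ∨
      (a.1 = b.1 ∧ (b.2.val = a.2.val + 1 ∨ a.2.val = b.2.val + 1))) := by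
  rw [spiderClique, SimpleGraph.fromRel_adj]
  refine and_congr_right fun _ => ?_
  rw [eq_comm (a := b.1)]
  tauto

lemma Spider.reindex {A : Finset V} {f : ι → ℕ} {leg : V → ι} {h : V → ℕ}
    (hs : Spider H A f leg h) (e : ι ≃ κ) :
    Spider H A (fun i => f (e.symm i)) (fun x => e (leg x)) h := by
  refine ⟨fun i => hs.pos _, fun x hx => ?_, fun x hx y hy hxy => ?_, fun i k hk => ?_,
    fun x hx y hy hne => ?_⟩
  · rw [e.symm_apply_apply]
    exact hs.lt x hx
  · exact hs.inj x hx y hy (e.injective hxy)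
  · obtain ⟨x, hx, h1, h2⟩ := hs.surj _ k hk
    exact ⟨x, hx, by rw [h1, e.apply_symm_apply], h2⟩
  · rw [e.injective.eq_iff]
    exact hs.adj x hx y hy hne

variable [Fintype V]

/-- A spider is isomorphic to the spider clique with the same leg lengths. -/
lemma Spider.iso {f : ι → ℕ} {leg : V → ι} {h : V → ℕ} (hs : Spider H Finset.univ f leg h)
    {q : ℕ} {g : Fin q → ℕ} (e : ι ≃ Fin q) (he : ∀ i, g (e i) = f i) :
    Nonempty (H ≃g spiderClique q g) := by
  let φ : V → (j : Fin q) × Fin (g j) := fun x =>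
    ⟨e (leg x), ⟨h x, by rw [he]; exact hs.lt x (Finset.mem_univ x)⟩⟩
  have hinj : Function.Injective φ := by
    intro x y hxy
    have h1 : leg x = leg y := e.injective (congrArg Sigma.fst hxy)
    have h2 : h x = h y := congrArg (fun a : (j : Fin q) × Fin (g j) => a.2.val) hxy
    exact hs.inj x (Finset.mem_univ x) y (Finset.mem_univ y) h1 h2
  have hsurj : Function.Surjective φ := by
    rintro ⟨j, k⟩
    obtain ⟨i, rfl⟩ := e.surjective j
    obtain ⟨x, -, rfl, hx⟩ := hs.surj i k.val (lt_of_lt_of_eq k.2 (he i))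
    refine ⟨x, ?_⟩
    simp only [φ]
    congr 1
    exact Fin.ext hx
  refine ⟨⟨Equiv.ofBijective φ ⟨hinj, hsurj⟩, ?_⟩⟩
  intro x y
  change (spiderClique q g).Adj (φ x) (φ y) ↔ H.Adj x y
  rw [spiderClique_adj, hinj.ne_iff]
  simp only [φ, e.injective.eq_iff]
  constructor
  · rintro ⟨hne, hadj⟩
    exact (hs.adj x (Finset.mem_univ x) y (Finset.mem_univ y) hne).mpr hadj
  · intro hadj
    exact ⟨hadj.ne, (hs.adj x (Finset.mem_univ x) y (Finset.mem_univ y) hadj.ne).mp hadj⟩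

/-- With only two legs a spider is a path, so the vertices can be redistributed between the
two legs arbitrarily. -/
lemma Spider.rebalance {f g : Fin 2 → ℕ} {leg : V → Fin 2} {h : V → ℕ}
    (hs : Spider H Finset.univ f leg h) (hg : ∀ i, 1 ≤ g i) (hfg : g 0 + g 1 = f 0 + f 1) :
    ∃ (leg' : V → Fin 2) (h' : V → ℕ), Spider H Finset.univ g leg' h' := by
  have h2 : ∀ i : Fin 2, i = 0 ∨ i = 1 := by decide
  -- `pos` numbers the vertices along the path
  obtain ⟨pos, hlt, hinj, hsurj, hadj⟩ : ∃ pos : V → ℕ, (∀ x, pos x < f 0 + f 1) ∧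
      (∀ x y, pos x = pos y → x = y) ∧ (∀ k < f 0 + f 1, ∃ x, pos x = k) ∧
      ∀ x y, x ≠ y → (H.Adj x y ↔ pos y = pos x + 1 ∨ pos x = pos y + 1) := by
    have hlt := fun x => hs.lt x (Finset.mem_univ x)
    refine ⟨fun x => if leg x = 0 then f 0 - 1 - h x else f 0 + h x, ?_, ?_, ?_, ?_⟩
    · intro x
      have hx1 := hlt x
      have := hs.pos 0
      have := hs.pos 1
      rcases h2 (leg x) with hx | hx <;> rw [hx] at hx1 <;> simp [hx] <;> omega
    · intro x y hxy
      have hx1 := hlt x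
      have hy1 := hlt y
      refine hs.inj x (Finset.mem_univ x) y (Finset.mem_univ y) ?_ ?_ <;>
      rcases h2 (leg x) with hx | hx <;> rcases h2 (leg y) with hy | hy <;>
        rw [hx] at hx1 <;> rw [hy] at hy1 <;> simp [hx, hy] at hxy ⊢ <;> omega
    · intro k hk
      by_cases hk0 : k < f 0
      · obtain ⟨x, -, hx1, hx2⟩ := hs.surj 0 (f 0 - 1 - k) (by omega)
        refine ⟨x, ?_⟩
        simp [hx1, hx2]
        omega
      · obtain ⟨x, -, hx1, hx2⟩ := hs.surj 1 (k - f 0) (by omega)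
        refine ⟨x, ?_⟩
        simp [hx1, hx2]
        omega
    · intro x y hne
      rw [hs.adj x (Finset.mem_univ x) y (Finset.mem_univ y) hne]
      have hx1 := hlt x
      have hy1 := hlt y
      have hi := hs.inj x (Finset.mem_univ x) y (Finset.mem_univ y)
      rcases h2 (leg x) with hx | hx <;> rcases h2 (leg y) with hy | hy <;>
        rw [hx] at hx1 <;> rw [hy] at hy1 <;> simp [hx, hy] at hi ⊢ <;>
        first
        | (have : h x ≠ h y := fun h => hne (hi h)
           omega)
        | omega
  have hg0 := hg 0
  have hg1 := hg 1
  refine ⟨fun x => if pos x < g 0 then 0 else 1,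
    fun x => if pos x < g 0 then g 0 - 1 - pos x else pos x - g 0, hg, ?_, ?_, ?_, ?_⟩
  · intro x _
    have := hlt x
    by_cases hx : pos x < g 0 <;> simp [hx] <;> omega
  · intro x _ y _ h1 h2
    apply hinj
    by_cases hx : pos x < g 0 <;> by_cases hy : pos y < g 0 <;> simp [hx, hy] at h1 h2 <;> omega
  · intro i k hk
    rcases h2 i with rfl | rfl
    · obtain ⟨x, hx⟩ := hsurj (g 0 - 1 - k) (by omega)
      have : pos x < g 0 := by omega
      exact ⟨x, Finset.mem_univ x, by simp [this], by simp [this]; omega⟩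
    · obtain ⟨x, hx⟩ := hsurj (g 0 + k) (by omega)
      have : ¬ pos x < g 0 := by omega
      exact ⟨x, Finset.mem_univ x, by simp [this], by simp [this]; omega⟩
  · intro x _ y _ hne
    rw [hadj x y hne]
    have hi : pos x ≠ pos y := fun h => hne (hinj x y h)
    by_cases hx : pos x < g 0 <;> by_cases hy : pos y < g 0 <;> simp [hx, hy] <;> omega

end Extremal

/-! ### Counting connected sets in a spider clique -/

section LowerBound

open scoped Classical

lemma cn_of_mem_iff {V : Type*} {H : SimpleGraph V} {S T : Finset V} (hS : Cn H S) {x y : V}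
    (hx : x ∈ S) (h : H.Adj x y) (hT : ∀ z, z ∈ T ↔ z = y ∨ z ∈ S) : Cn H T := by
  have : T = insert y S := by
    ext z
    rw [hT, Finset.mem_insert]
  rw [this]
  exact cn_insert hS hx h

variable {q : ℕ} {g : Fin q → ℕ}

/-- The union of the initial segments of lengths `k j` of the legs of a spider clique. -/
noncomputable def prefixSet (g k : Fin q → ℕ) : Finset ((j : Fin q) × Fin (g j)) :=
  Finset.univ.filter (fun x => x.2.val < k x.1)

/-- The vertices at heights in `(a, b]` on leg `j` of a spider clique. -/
noncomputable def legInterval (g : Fin q → ℕ) (j : Fin q) (a b : ℕ) :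
    Finset ((j : Fin q) × Fin (g j)) :=
  Finset.univ.filter (fun x => x.1 = j ∧ a < x.2.val ∧ x.2.val ≤ b)

lemma mem_prefixSet {k : Fin q → ℕ} {x : (j : Fin q) × Fin (g j)} :
    x ∈ prefixSet g k ↔ x.2.val < k x.1 := by simp [prefixSet]

lemma mem_legInterval {j : Fin q} {a b : ℕ} {x : (j : Fin q) × Fin (g j)} :
    x ∈ legInterval g j a b ↔ x.1 = j ∧ a < x.2.val ∧ x.2.val ≤ b := by simp [legInterval]

lemma cn_legInterval (j : Fin q) (a d : ℕ) (hb : a + 1 + d < g j) :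
    Cn (spiderClique q g) (legInterval g j a (a + 1 + d)) := by
  induction d with
  | zero =>
    convert cn_singleton (⟨j, ⟨a + 1, by omega⟩⟩ : (j : Fin q) × Fin (g j))
    ext ⟨j', i⟩
    rw [mem_legInterval, Finset.mem_singleton]
    constructor
    · rintro ⟨rfl, h1, h2⟩
      congr 1
      exact Fin.ext (by simp only at h1 h2 ⊢; omega)
    · rintro h
      cases h
      simp
  | succ d ih =>
    have h1 : (⟨j, ⟨a + 1 + d, by omega⟩⟩ : (j : Fin q) × Fin (g j)) ∈
        legInterval g j a (a + 1 + d) := by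
      rw [mem_legInterval]
      exact ⟨rfl, by simp only; omega, le_rfl⟩
    have h2 : (spiderClique q g).Adj ⟨j, ⟨a + 1 + d, by omega⟩⟩ ⟨j, ⟨a + 1 + (d + 1), hb⟩⟩ := by
      rw [spiderClique_adj]
      refine ⟨fun h => ?_, Or.inr ⟨rfl, Or.inl rfl⟩⟩
      have := congrArg (fun a : (j : Fin q) × Fin (g j) => a.2.val) h
      simp only at this
      omega
    refine cn_of_mem_iff (ih (by omega)) h1 h2 ?_
    rintro ⟨j', i⟩
    rw [mem_legInterval, mem_legInterval]
    constructor
    · rintro ⟨rfl, h1, h2⟩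
      by_cases hi : i.val = a + 1 + (d + 1)
      · left
        congr 1
        exact Fin.ext hi
      · exact Or.inr ⟨rfl, h1, by simp only at h2 ⊢; omega⟩
    · rintro (h | ⟨rfl, h1, h2⟩)
      · cases h
        exact ⟨rfl, by simp only; omega, le_rfl⟩
      · exact ⟨rfl, h1, by simp only at h2 ⊢; omega⟩

/-- Initial segments of one leg of a spider clique are connected. -/
lemma cn_prefix_leg (j : Fin q) (d : ℕ) (hd : d < g j) :
    Cn (spiderClique q g) (Finset.univ.filter (fun x => x.1 = j ∧ x.2.val ≤ d)) := by
  induction d with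
  | zero =>
    convert cn_singleton (⟨j, ⟨0, hd⟩⟩ : (j : Fin q) × Fin (g j))
    ext ⟨j', i⟩
    rw [Finset.mem_filter, Finset.mem_singleton]
    constructor
    · rintro ⟨-, rfl, h2⟩
      congr 1
      exact Fin.ext (by simp only at h2 ⊢; omega)
    · rintro h
      cases h
      simp
  | succ d ih =>
    have h1 : (⟨j, ⟨d, by omega⟩⟩ : (j : Fin q) × Fin (g j)) ∈
        (Finset.univ.filter (fun x => x.1 = j ∧ x.2.val ≤ d) :
          Finset ((j : Fin q) × Fin (g j))) := by simp
    have h2 : (spiderClique q g).Adj ⟨j, ⟨d, by omega⟩⟩ ⟨j, ⟨d + 1, hd⟩⟩ := by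
      rw [spiderClique_adj]
      refine ⟨fun h => ?_, Or.inr ⟨rfl, Or.inl rfl⟩⟩
      have := congrArg (fun a : (j : Fin q) × Fin (g j) => a.2.val) h
      simp only at this
      omega
    refine cn_of_mem_iff (ih (by omega)) h1 h2 ?_
    rintro ⟨j', i⟩
    rw [Finset.mem_filter, Finset.mem_filter]
    constructor
    · rintro ⟨-, rfl, h3⟩
      replace h3 : i.val ≤ d + 1 := h3
      by_cases hi : i.val = d + 1
      · left
        congr 1
        exact Fin.ext hi
      · exact Or.inr ⟨Finset.mem_univ _, rfl, show i.val ≤ d by omega⟩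
    · rintro (h | ⟨-, rfl, h3⟩)
      · cases h
        exact ⟨Finset.mem_univ _, rfl, le_rfl⟩
      · exact ⟨Finset.mem_univ _, rfl, Nat.le_succ_of_le h3⟩

lemma cn_prefixSet (k : Fin q → ℕ) (hne : (prefixSet g k).Nonempty) :
    Cn (spiderClique q g) (prefixSet g k) := by
  obtain ⟨⟨j, i⟩, hr⟩ := hne
  rw [mem_prefixSet] at hr
  simp only at hr
  have hj0 : 0 < g j := by have := i.2; omega
  refine cn_of_root (r := ⟨j, ⟨0, hj0⟩⟩) (mem_prefixSet.mpr (by simp only; omega)) ?_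
  rintro ⟨j', i'⟩ hx
  rw [mem_prefixSet] at hx
  simp only at hx
  have hj0' : 0 < g j' := by have := i'.2; omega
  have hleg := cn_prefix_leg (g := g) j' i'.val i'.2
  have hx' : (⟨j', i'⟩ : (j : Fin q) × Fin (g j)) ∈
      (Finset.univ.filter (fun x => x.1 = j' ∧ x.2.val ≤ i'.val) :
        Finset ((j : Fin q) × Fin (g j))) := by simp
  have h0' : (⟨j', ⟨0, hj0'⟩⟩ : (j : Fin q) × Fin (g j)) ∈
      (Finset.univ.filter (fun x => x.1 = j' ∧ x.2.val ≤ i'.val) :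
        Finset ((j : Fin q) × Fin (g j))) := by simp
  have hsub : (Finset.univ.filter (fun x => x.1 = j' ∧ x.2.val ≤ i'.val) :
        Finset ((j : Fin q) × Fin (g j))) ⊆ prefixSet g k := by
    rintro ⟨j'', i''⟩ h
    rw [Finset.mem_filter] at h
    obtain ⟨-, rfl, h⟩ := h
    exact mem_prefixSet.mpr (lt_of_le_of_lt h hx)
  by_cases hjj : j = j'
  · subst hjj
    exact ⟨_, hsub, hleg, h0', hx'⟩
  · refine ⟨insert ⟨j, ⟨0, hj0⟩⟩ (Finset.univ.filter (fun x => x.1 = j' ∧ x.2.val ≤ i'.val)), ?_,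
      cn_of_mem_iff hleg h0' ?_ (fun z => Finset.mem_insert), Finset.mem_insert_self _ _,
      Finset.mem_insert_of_mem hx'⟩
    · refine Finset.insert_subset (mem_prefixSet.mpr (by simp only; omega)) hsub
    · rw [spiderClique_adj]
      exact ⟨fun h => hjj (congrArg Sigma.fst h).symm, Or.inl ⟨rfl, rfl⟩⟩

/-- Prefix families and intervals avoiding the clique already account for all the connected sets
in the formula for the spider clique. -/
lemma le_card_cnSets_spiderClique (g : Fin q → ℕ) :
    legSum g + legProd g ≤ (cnSets (spiderClique q g) Finset.univ).card + 1 := by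
  let Φ : ((j : Fin q) → Fin (g j + 1)) ⊕ ((j : Fin q) × (b : Fin (g j)) × Fin b.val) →
      Finset ((j : Fin q) × Fin (g j)) :=
    Sum.elim (fun k => prefixSet g (fun j => (k j).val))
      (fun x => legInterval g x.1 x.2.2.val x.2.1.val)
  have hcard : Fintype.card (((j : Fin q) → Fin (g j + 1)) ⊕
      ((j : Fin q) × (b : Fin (g j)) × Fin b.val)) = legSum g + legProd g := by
    rw [Fintype.card_sum, Fintype.card_pi, Fintype.card_sigma, add_comm]
    simp only [Fintype.card_sigma, Fintype.card_fin]
    congr 1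
    refine Finset.sum_congr rfl fun j _ => ?_
    rw [Fin.sum_univ_eq_sum_range (fun b => b), Finset.sum_range_id, Nat.choose_two_right]
  have hΦl : ∀ k, Φ (Sum.inl k) = prefixSet g (fun j => (k j).val) := fun _ => rfl
  have hΦr : ∀ j b a, Φ (Sum.inr ⟨j, b, a⟩) = legInterval g j a.val b.val := fun _ _ _ => rfl
  have hmem : ∀ j (b : Fin (g j)) (a : Fin b.val),
      (⟨j, b⟩ : (j : Fin q) × Fin (g j)) ∈ legInterval g j a.val b.val :=
    fun j b a => mem_legInterval.mpr ⟨rfl, a.2, le_rfl⟩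
  have hlr : ∀ k x, Φ (Sum.inl k) ≠ Φ (Sum.inr x) := by
    rintro k ⟨j, b, a⟩ h
    have h1 := hmem j b a
    have hpos : 0 < g j := by have := b.2; omega
    rw [hΦl, hΦr] at h
    rw [← h, mem_prefixSet] at h1
    have h2 : (⟨j, ⟨0, hpos⟩⟩ : (j : Fin q) × Fin (g j)) ∈ prefixSet g (fun j => (k j).val) :=
      mem_prefixSet.mpr (by simp only at h1 ⊢; omega)
    rw [h, mem_legInterval] at h2
    simp at h2
  have hinj : Function.Injective Φ := by
    rintro (k | x) (k' | x') h
    · congr 1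
      have key : ∀ (k k' : (j : Fin q) → Fin (g j + 1)), Φ (Sum.inl k) = Φ (Sum.inl k') →
          ∀ j, ¬ (k j).val < (k' j).val := by
        intro k k' h j hlt
        have hk := (k' j).2
        rw [hΦl, hΦl] at h
        have h1 : (⟨j, ⟨(k j).val, by omega⟩⟩ : (j : Fin q) × Fin (g j)) ∈
            prefixSet g (fun j => (k' j).val) := mem_prefixSet.mpr hlt
        rw [← h, mem_prefixSet] at h1
        exact lt_irrefl _ h1
      funext j
      have := key k k' h j
      have := key k' k h.symm j
      exact Fin.ext (by omega)
    · exact absurd h (hlr _ _)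
    · exact absurd h.symm (hlr _ _)
    · obtain ⟨j, b, a⟩ := x
      obtain ⟨j', b', a'⟩ := x'
      rw [hΦr, hΦr] at h
      have h1 := hmem j b a
      have h2 := hmem j' b' a'
      rw [h, mem_legInterval] at h1
      rw [← h, mem_legInterval] at h2
      obtain ⟨rfl, h11, h12⟩ := h1
      obtain ⟨-, h21, h22⟩ := h2
      simp only at h11 h12 h21 h22
      obtain rfl : b = b' := Fin.ext (by omega)
      have key : ∀ (a a' : Fin b.val), legInterval g j a.val b.val =
          legInterval g j a'.val b.val → ¬ a.val < a'.val := by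
        intro a a' h hlt
        have hb := b.2
        have ha := a.2
        have h1 : (⟨j, ⟨a.val + 1, by omega⟩⟩ : (j : Fin q) × Fin (g j)) ∈
            legInterval g j a.val b.val :=
          mem_legInterval.mpr ⟨rfl, by simp only; omega, by simp only; omega⟩
        rw [h, mem_legInterval] at h1
        simp only at h1
        omega
      have := key a a' h
      have := key a' a h.symm
      obtain rfl : a = a' := Fin.ext (by omega)
      rfl
  have hsub : Finset.univ.image Φ ⊆ insert ∅ (cnSets (spiderClique q g) Finset.univ) := by
    intro S hS
    obtain ⟨z, -, rfl⟩ := Finset.mem_image.mp hS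
    rw [Finset.mem_insert, mem_cnSets]
    rcases z with k | ⟨j, b, a⟩
    · rcases Finset.eq_empty_or_nonempty (prefixSet g (fun j => (k j).val)) with h | h
      · exact Or.inl h
      · exact Or.inr ⟨Finset.subset_univ _, cn_prefixSet _ h⟩
    · refine Or.inr ⟨Finset.subset_univ _, ?_⟩
      have ha := a.2
      have hb := b.2
      have := cn_legInterval (g := g) j a.val (b.val - a.val - 1) (by omega)
      rwa [show a.val + 1 + (b.val - a.val - 1) = b.val by omega] at this
  rw [← hcard, ← Finset.card_univ, ← Finset.card_image_of_injective _ hinj]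
  exact (Finset.card_le_card hsub).trans (Finset.card_insert_le _ _)

end LowerBound

theorem stmt_7 (n c : ℕ) (hn : 1 < n) (hc : c ≤ n - 2)
    (t s : ℕ) (ht : t = n % (n - c)) (hs : s = n / (n - c))
    {V : Type*} [Fintype V] (H : SimpleGraph V) (hconn : H.Connected)
    (hcard : Fintype.card V = n) (hcut : numCutVertices H = c) :
    numCIS H ≤ (n - c - t) * Nat.choose s 2 + t * Nat.choose (s + 1) 2 +
        (s + 1) ^ (n - c - t) * (s + 2) ^ t - 1 ∧
    (numCIS H = (n - c - t) * Nat.choose s 2 + t * Nat.choose (s + 1) 2 +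
          (s + 1) ^ (n - c - t) * (s + 2) ^ t - 1 ↔
      Nonempty (H ≃g spiderClique (n - c)
        (fun j => if j.val < n - c - t then s else s + 1))) := by
  classical
  have hq : (nonCut H Finset.univ).card = n - c := by
    rw [card_nonCut hconn (by omega), hcard, hcut]
  obtain ⟨q, hqdef⟩ : ∃ q, q = n - c := ⟨_, rfl⟩
  have hq2 : 2 ≤ q := by omega
  have hqn : q ≤ n := by omega
  rw [← hqdef] at hq
  subst ht hs
  rw [← hqdef]
  change numCIS H ≤ balSum q n + balProd q n - 1 ∧ (numCIS H = balSum q n + balProd q n - 1 ↔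
    Nonempty (H ≃g spiderClique q (canonLegs q n)))
  have hq0 : 0 < q := by omega
  have hcs := canonLegs_sum hq0 n
  have hcb := canonLegs_balanced q n
  obtain ⟨v1, v2⟩ := hcb.values (Fintype.card_fin q) hq0 hcs
  obtain ⟨b1, b2⟩ := card_cnSets_bound (cn_univ hconn) hcard hq
  rw [← numCIS_eq_card_cnSets] at b1 b2
  refine ⟨by omega, fun heq => ?_, fun ⟨e⟩ => ?_⟩
  · obtain ⟨ι, _, f, leg, h, hι, hsp, hsum, hval⟩ := b2 (by omega)
    by_cases hq3 : 3 ≤ q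
    · have hfb := (balanced_optimal hι hq0 f hsum).2.2.2 hval hq3 hsp.pos
      obtain ⟨e, he⟩ := exists_equiv_of_balanced hq0 hι (Fintype.card_fin q) hfb hcb hsum hcs
      exact hsp.iso e he
    -- with two legs the value does not force balance, but all spiders of order `n` are paths
    · obtain rfl : q = 2 := by omega
      let e : ι ≃ Fin 2 := Fintype.equivOfCardEq (hι.trans (Fintype.card_fin 2).symm)
      have hpos : ∀ i, 1 ≤ canonLegs 2 n i := fun i => by
        have : 1 ≤ n / 2 := Nat.div_pos hqn hq0
        unfold canonLegs
        split_ifs <;> omega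
      have hsum' : ∑ i, f (e.symm i) = n := (e.symm.sum_comp f).trans hsum
      rw [Fin.sum_univ_two] at hsum' hcs
      obtain ⟨leg', h', hsp'⟩ := (hsp.reindex e).rebalance hpos (hcs.trans hsum'.symm)
      exact hsp'.iso (Equiv.refl _) (fun _ => rfl)
  · have h1 := le_card_cnSets_spiderClique (canonLegs q n)
    rw [← numCIS_eq_card_cnSets, ← numCIS_congr e] at h1
    omega
end
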